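/- arXiv:1308.3090 — 6 statements merged into one kernel-verified Lean document; each statement's English description precedes it below -/
import Mathlib

section
/- Let X₁, X₂, … be i.i.d. real random variables with mean 0 and variance 1, and let S̄_n := max_{1≤k≤n} (X₁+…+X_k). Then there exists γ > 0 such that for each j = 0, 1, 2, sup_{|t| ≤ γ√n} | (d/dt)^j ( E[e^{i t S̄_n/√n}] − ĝ(t) ) | → 0 as n → ∞, where ĝ(t) := E[e^{i t |Z|}] is the characteristic function of the one-sided standard normal distribution. -/
open MeasureTheory ProbabilityTheory Filter
open scoped ENNReal
set_option linter.unusedSectionVars false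
set_option linter.unusedVariables false

namespace MaxWalk

open Topology

/-- The running maximum `max (0, X m, X m + X (m+1), …)` over `n` steps, started at `m`. -/
def R {Ω : Type*} (X : ℕ → Ω → ℝ) : ℕ → ℕ → Ω → ℝ
  | 0, _ => fun _ => 0
  | n + 1, m => fun ω => max (X m ω + R X n (m + 1) ω) 0

section Basic

variable {Ω : Type*} {X : ℕ → Ω → ℝ}

lemma R_nonneg (n m : ℕ) (ω : Ω) : 0 ≤ R X n m ω := by
  cases n with
  | zero => simp [R]
  | succ n => simp [R]

lemma R_mono (n m : ℕ) (ω : Ω) : R X n m ω ≤ R X (n + 1) m ω := by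
  induction n generalizing m with
  | zero => simp [R]
  | succ n ih =>
    have := ih (m + 1)
    rw [R, R]
    exact max_le_max (by linarith) le_rfl

lemma R_lower (n m k : ℕ) (ω : Ω) (hk : k ≤ n) :
    ∑ i ∈ Finset.range k, X (m + i) ω ≤ R X n m ω := by
  induction n generalizing m k with
  | zero => simp_all [R]
  | succ n ih =>
    cases k with
    | zero => simpa using R_nonneg _ _ _
    | succ k =>
      have := ih (m + 1) k (by omega)
      rw [Finset.sum_range_succ', R]
      refine le_max_of_le_left ?_
      have e : ∑ i ∈ Finset.range k, X (m + (i + 1)) ω = ∑ i ∈ Finset.range k, X (m + 1 + i) ω :=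
        Finset.sum_congr rfl fun i _ => by rw [show m + (i + 1) = m + 1 + i by ring]
      rw [e]; simp; linarith

lemma R_attain (n m : ℕ) (ω : Ω) :
    ∃ k ≤ n, R X n m ω = ∑ i ∈ Finset.range k, X (m + i) ω := by
  induction n generalizing m with
  | zero => exact ⟨0, le_rfl, by simp [R]⟩
  | succ n ih =>
    obtain ⟨k, hk, e⟩ := ih (m + 1)
    rw [R]; beta_reduce
    rcases max_choice (X m ω + R X n (m + 1) ω) 0 with h | h
    · refine ⟨k + 1, by omega, ?_⟩
      have e' : ∑ i ∈ Finset.range k, X (m + (i + 1)) ω = ∑ i ∈ Finset.range k, X (m + 1 + i) ω :=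
        Finset.sum_congr rfl fun i _ => by rw [show m + (i + 1) = m + 1 + i by ring]
      rw [h, e, Finset.sum_range_succ', e']; simp; ring
    · exact ⟨0, by omega, by rw [h]; simp⟩

lemma sup_eq (n : ℕ) (hn : 1 ≤ n + 1) (ω : Ω) :
    (Finset.Icc 1 (n + 1)).sup' (Finset.nonempty_Icc.mpr hn)
        (fun k => ∑ i ∈ Finset.range k, X i ω) = X 0 ω + R X n 1 ω := by
  have e (k : ℕ) : ∑ i ∈ Finset.range (k + 1), X i ω =
      X 0 ω + ∑ i ∈ Finset.range k, X (1 + i) ω := by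
    rw [Finset.sum_range_succ', add_comm]
    congr 1
    exact Finset.sum_congr rfl fun i _ => by rw [add_comm]
  apply le_antisymm
  · refine Finset.sup'_le _ _ fun k hk => ?_
    rw [Finset.mem_Icc] at hk
    obtain ⟨j, rfl⟩ : ∃ j, k = j + 1 := ⟨k - 1, by omega⟩
    rw [e]
    have := R_lower (X := X) n 1 j ω (by omega)
    linarith
  · obtain ⟨k, hk, h⟩ := R_attain (X := X) n 1 ω
    rw [h, ← e]
    exact Finset.le_sup' (fun k => ∑ i ∈ Finset.range k, X i ω)
      (by rw [Finset.mem_Icc]; omega)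

variable [mΩ : MeasurableSpace Ω]

lemma R_meas' (n m : ℕ) :
    Measurable[⨆ i ∈ Set.Ici m, MeasurableSpace.comap (X i) inferInstance] (R X n m) := by
  induction n generalizing m with
  | zero => exact measurable_const
  | succ n ih =>
    have h1 : Measurable[⨆ i ∈ Set.Ici m, MeasurableSpace.comap (X i) inferInstance] (X m) := by
      refine Measurable.mono (comap_measurable (X m)) ?_ le_rfl
      exact le_iSup₂ (f := fun i (_ : i ∈ Set.Ici m) =>
        MeasurableSpace.comap (X i) inferInstance) m (by simp)
    have h2 : Measurable[⨆ i ∈ Set.Ici m, MeasurableSpace.comap (X i) inferInstance]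
        (R X n (m + 1)) := by
      refine Measurable.mono (ih (m + 1)) ?_ le_rfl
      exact biSup_mono fun i hi => by simp at hi ⊢; omega
    exact (h1.add h2).max measurable_const

lemma R_meas (hX : ∀ i, Measurable (X i)) (n m : ℕ) : Measurable (R X n m) :=
  (R_meas' n m).mono (iSup₂_le fun i _ => (hX i).comap_le) le_rfl

variable {P : Measure Ω} [IsProbabilityMeasure P]

lemma R_indep (hX : ∀ i, Measurable (X i)) (h : iIndepFun X P) (n m : ℕ) :
    IndepFun (X m) (R X n (m + 1)) P := by
  have := indep_iSup_of_disjoint (fun i => (hX i).comap_le) h.iIndep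
    (S := {m}) (T := Set.Ici (m + 1)) (by simp)
  rw [IndepFun_iff_Indep]
  refine indep_of_indep_of_le_left (indep_of_indep_of_le_right this ?_) ?_
  · exact (R_meas' n (m + 1)).comap_le
  · simp

lemma R_law (hX : ∀ i, Measurable (X i)) (h : iIndepFun X P)
    (hident : ∀ i, Measure.map (X i) P = Measure.map (X 0) P) (n m : ℕ) :
    P.map (R X n m) = P.map (R X n 0) := by
  have key : ∀ n m, P.map (R X (n + 1) m) =
      (((P.map (X m)).prod (P.map (R X n (m + 1)))).map (fun p : ℝ × ℝ => max (p.1 + p.2) 0)) := by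
    intro n m
    rw [← (indepFun_iff_map_prod_eq_prod_map_map (hX m).aemeasurable
      (R_meas hX n (m + 1)).aemeasurable).1 (R_indep hX h n m), Measure.map_map (by fun_prop)
      ((hX m).prodMk (R_meas hX n (m + 1)))]
    rfl
  induction n generalizing m with
  | zero => rfl
  | succ n ih => rw [key, key, ih (m + 1), ih (0 + 1), hident m]

lemma R_memLp (hX : ∀ i, Measurable (X i))
    (hL : ∀ i, MemLp (X i) 2 P) (n m : ℕ) : MemLp (R X n m) 2 P := by
  induction n generalizing m with
  | zero => exact memLp_const 0
  | succ n ih => exact ((hL m).add (ih (m + 1))).sup (memLp_const 0)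

end Basic

/-- The data of the Lindley recursion. -/
structure Lind {Ω : Type*} [MeasurableSpace Ω] (P : Measure Ω) (X : Ω → ℝ) (M : ℕ → Ω → ℝ) :
    Prop where
  mX : Measurable X
  mM : ∀ n, Measurable (M n)
  zero : M 0 = fun _ => 0
  nonneg : ∀ n ω, 0 ≤ M n ω
  mono : ∀ n ω, M n ω ≤ M (n + 1) ω
  indep : ∀ n, IndepFun X (M n) P
  law : ∀ n, P.map (M (n + 1)) = P.map (fun ω => max (X ω + M n ω) 0)
  LX : MemLp X 2 P
  LM : ∀ n, MemLp (M n) 2 P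
  mean : ∫ ω, X ω ∂P = 0
  var : ∫ ω, (X ω) ^ 2 ∂P = 1

lemma lind_R {Ω : Type*} [MeasurableSpace Ω] {P : Measure Ω} [IsProbabilityMeasure P]
    {X : ℕ → Ω → ℝ} (hX : ∀ i, Measurable (X i)) (h : iIndepFun X P)
    (hident : ∀ i, Measure.map (X i) P = Measure.map (X 0) P)
    (hL2 : MemLp (X 0) 2 P)
    (hmean : ∫ ω, X 0 ω ∂P = 0)
    (hvar : ∫ ω, (X 0 ω) ^ 2 ∂P = 1) : Lind P (X 0) (fun n => R X n 1) where
  mX := hX 0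
  mM n := R_meas hX n 1
  zero := rfl
  nonneg n := R_nonneg n 1
  mono n := R_mono n 1
  indep n := R_indep hX h n 0
  law n := by
    rw [R_law hX h hident]; rfl
  LX := hL2
  LM n := by
    refine R_memLp hX (fun i => ?_) n 1
    have : IdentDistrib (X i) (X 0) P P := ⟨(hX i).aemeasurable, (hX 0).aemeasurable, hident i⟩
    exact this.memLp_iff.2 hL2
  mean := hmean
  var := hvar

section Moments

variable {Ω : Type*} [MeasurableSpace Ω] {P : Measure Ω} [IsProbabilityMeasure P]
  {X : Ω → ℝ} {M : ℕ → Ω → ℝ}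

/-- first moment of the negative part -/
noncomputable def r (P : Measure Ω) (X : Ω → ℝ) (M : ℕ → Ω → ℝ) (n : ℕ) : ℝ :=
  ∫ ω, max (-(X ω + M n ω)) 0 ∂P

/-- second moment of the negative part -/
noncomputable def e (P : Measure Ω) (X : Ω → ℝ) (M : ℕ → Ω → ℝ) (n : ℕ) : ℝ :=
  ∫ ω, (max (-(X ω + M n ω)) 0) ^ 2 ∂P

lemma Lind.LW (H : Lind P X M) (n : ℕ) : MemLp (fun ω => X ω + M n ω) 2 P := H.LX.add (H.LM n)

lemma Lind.Lneg (H : Lind P X M) (n : ℕ) : MemLp (fun ω => max (-(X ω + M n ω)) 0) 2 P :=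
  (H.LW n).neg.sup (memLp_const 0)

lemma Lind.Lpos (H : Lind P X M) (n : ℕ) : MemLp (fun ω => max (X ω + M n ω) 0) 2 P :=
  (H.LW n).sup (memLp_const 0)

lemma Lind.mW (H : Lind P X M) (n : ℕ) : Measurable (fun ω => X ω + M n ω) := H.mX.add (H.mM n)

lemma int1 {f : Ω → ℝ} (h : MemLp f 2 P) : Integrable f P := h.integrable (by norm_num)

lemma r_nonneg (n : ℕ) : 0 ≤ r P X M n := integral_nonneg fun ω => le_max_right _ _

lemma e_nonneg (n : ℕ) : 0 ≤ e P X M n := integral_nonneg fun ω => by positivity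

lemma Lind.r_anti (H : Lind P X M) : Antitone (r P X M) := by
  refine antitone_nat_of_succ_le fun n => ?_
  refine integral_mono (int1 (H.Lneg _)) (int1 (H.Lneg _)) fun ω => ?_
  have := H.mono n ω
  exact max_le_max (by linarith) le_rfl

lemma Lind.law_int (H : Lind P X M) (n : ℕ) {f : ℝ → ℝ} (hf : Measurable f) :
    ∫ ω, f (M (n + 1) ω) ∂P = ∫ ω, f (max (X ω + M n ω) 0) ∂P := by
  rw [← integral_map (H.mM (n + 1)).aemeasurable hf.aestronglyMeasurable, H.law n,
    integral_map ((H.mW n).max measurable_const).aemeasurable hf.aestronglyMeasurable]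

lemma Lind.mean_succ (H : Lind P X M) (n : ℕ) :
    ∫ ω, M (n + 1) ω ∂P = ∫ ω, M n ω ∂P + r P X M n := by
  have h1 := H.law_int n (f := fun x => x) measurable_id
  have h2 : ∫ ω, M n ω ∂P = ∫ ω, (X ω + M n ω) ∂P := by
    rw [integral_add (int1 H.LX) (int1 (H.LM n)), H.mean, zero_add]
  rw [h1, r, h2, ← integral_add (int1 (H.LW n)) (int1 (H.Lneg n))]
  refine integral_congr_ae (.of_forall fun ω => ?_)
  simp only
  rcases le_total (X ω + M n ω) 0 with h | h
  · rw [max_eq_right h, max_eq_left (by linarith)]; ring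
  · rw [max_eq_left h, max_eq_right (by linarith)]; ring

lemma Lind.sq_W (H : Lind P X M) (n : ℕ) :
    ∫ ω, (X ω + M n ω) ^ 2 ∂P = 1 + ∫ ω, (M n ω) ^ 2 ∂P := by
  have h : ∫ ω, X ω * M n ω ∂P = 0 := by
    have := (H.indep n).integral_mul_eq_mul_integral H.mX.aestronglyMeasurable
      (H.mM n).aestronglyMeasurable
    simp only [Pi.mul_apply] at this
    rw [this, H.mean, zero_mul]
  have e1 : ∀ ω, (X ω + M n ω) ^ 2 = (X ω ^ 2 + M n ω ^ 2) + 2 * (X ω * M n ω) := fun ω => by ring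
  simp_rw [e1]
  have hi : Integrable (fun ω => X ω * M n ω) P := H.LX.integrable_mul (H.LM n)
  have hs : Integrable (fun ω => X ω ^ 2 + M n ω ^ 2) P :=
    H.LX.integrable_sq.add (H.LM n).integrable_sq
  rw [integral_add hs (hi.const_mul 2),
    integral_add H.LX.integrable_sq (H.LM n).integrable_sq, integral_const_mul, h, H.var]
  ring

lemma Lind.sq_succ (H : Lind P X M) (n : ℕ) :
    ∫ ω, (M (n + 1) ω) ^ 2 ∂P + e P X M n = ∫ ω, (M n ω) ^ 2 ∂P + 1 := by
  have h1 := H.law_int n (f := fun x => x ^ 2) (by fun_prop)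
  rw [h1, e, add_comm _ 1, ← H.sq_W, ← integral_add (H.Lpos n).integrable_sq
    (H.Lneg n).integrable_sq]
  refine integral_congr_ae (.of_forall fun ω => ?_)
  simp only
  rcases le_total (X ω + M n ω) 0 with h | h
  · rw [max_eq_right h, max_eq_left (by linarith)]; ring
  · rw [max_eq_left h, max_eq_right (by linarith)]; ring

lemma Lind.sum_r (H : Lind P X M) (n : ℕ) :
    ∑ k ∈ Finset.range n, r P X M k = ∫ ω, M n ω ∂P := by
  induction n with
  | zero => simp [H.zero]
  | succ n ih => rw [Finset.sum_range_succ, ih, H.mean_succ]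

lemma Lind.sum_e (H : Lind P X M) (n : ℕ) :
    ∫ ω, (M n ω) ^ 2 ∂P + ∑ k ∈ Finset.range n, e P X M k = n := by
  induction n with
  | zero => simp [H.zero]
  | succ n ih =>
    have := H.sq_succ n
    rw [Finset.sum_range_succ]
    push_cast
    linarith

lemma Lind.sq_le (H : Lind P X M) (n : ℕ) : ∫ ω, (M n ω) ^ 2 ∂P ≤ n := by
  have := H.sum_e n
  have h : 0 ≤ ∑ k ∈ Finset.range n, e P X M k := Finset.sum_nonneg fun k _ => e_nonneg k
  linarith

lemma mean_sq_le {f : Ω → ℝ} (h : MemLp f 2 P) : (∫ ω, f ω ∂P) ^ 2 ≤ ∫ ω, f ω ^ 2 ∂P := by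
  have h1 := variance_nonneg f P
  rw [variance_eq_sub h] at h1
  simp at h1
  linarith

lemma Lind.mean_le (H : Lind P X M) (n : ℕ) : ∫ ω, M n ω ∂P ≤ Real.sqrt n :=
  Real.le_sqrt_of_sq_le ((mean_sq_le (H.LM n)).trans (H.sq_le n))

lemma Lind.r_le (H : Lind P X M) (n : ℕ) : r P X M n ≤ 1 / Real.sqrt (n + 1) := by
  have h1 : ((n + 1 : ℕ) : ℝ) * r P X M n ≤ ∑ k ∈ Finset.range (n + 1), r P X M k := by
    have := Finset.card_nsmul_le_sum (Finset.range (n + 1)) (r P X M) (r P X M n)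
      (fun k hk => H.r_anti (by simp at hk; omega))
    simpa using this
  rw [H.sum_r] at h1
  have h2 := h1.trans (H.mean_le (n + 1))
  push_cast at h2
  have h3 : (0 : ℝ) < Real.sqrt (n + 1) := by positivity
  rw [le_div_iff₀ h3]
  have h4 : Real.sqrt (n + 1) * Real.sqrt (n + 1) = n + 1 := Real.mul_self_sqrt (by positivity)
  by_contra! hc
  nlinarith

lemma Lind.e_le_one (H : Lind P X M) (n : ℕ) : e P X M n ≤ 1 := by
  rw [← H.var]
  refine integral_mono (H.Lneg n).integrable_sq H.LX.integrable_sq fun ω => ?_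
  have := H.nonneg n ω
  simp only
  rcases le_total (X ω + M n ω) 0 with h | h
  · rw [max_eq_left (by linarith)]; nlinarith
  · rw [max_eq_right (by linarith)]; nlinarith

lemma Lind.e_le (H : Lind P X M) (n : ℕ) {A : ℝ} (hA : 0 ≤ A) :
    e P X M n ≤ A * r P X M n + ∫ ω, |X ω| * max (|X ω| - A) 0 ∂P := by
  have hi : Integrable (fun ω => |X ω| * max (|X ω| - A) 0) P :=
    MemLp.integrable_mul H.LX.abs ((H.LX.abs.sub (memLp_const A)).sup (memLp_const 0))
  rw [e, r, ← integral_const_mul, ← integral_add ((int1 (H.Lneg n)).const_mul A) hi]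
  refine integral_mono (H.Lneg n).integrable_sq (((int1 (H.Lneg n)).const_mul A).add hi) fun ω => ?_
  have h0 := H.nonneg n ω
  simp only
  have h1 : max (-(X ω + M n ω)) 0 ≤ |X ω| :=
    max_le (by linarith [neg_le_abs (X ω)]) (abs_nonneg _)
  have h2 : 0 ≤ max (-(X ω + M n ω)) 0 := le_max_right _ _
  have h3 : max (-(X ω + M n ω)) 0 - A ≤ max (|X ω| - A) 0 := le_max_of_le_left (by linarith)
  have h4 : 0 ≤ max (|X ω| - A) 0 := le_max_right _ _
  nlinarith [mul_le_mul h1 le_rfl h4 (abs_nonneg (X ω))]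

lemma Lind.tail (H : Lind P X M) :
    Tendsto (fun A : ℕ => ∫ ω, |X ω| * max (|X ω| - A) 0 ∂P) atTop (𝓝 0) := by
  have : Tendsto (fun A : ℕ => ∫ ω, |X ω| * max (|X ω| - A) 0 ∂P) atTop
      (𝓝 (∫ ω, (0 : ℝ) ∂P)) := by
    refine tendsto_integral_of_dominated_convergence (fun ω => X ω ^ 2) (fun n => ?_)
      H.LX.integrable_sq (fun n => ?_) ?_
    · have := H.mX
      exact Measurable.aestronglyMeasurable (by fun_prop)
    · refine .of_forall fun ω => ?_
      rw [Real.norm_of_nonneg (by positivity), ← sq_abs, sq]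
      refine mul_le_mul_of_nonneg_left (max_le ?_ (abs_nonneg _)) (abs_nonneg _)
      have : (0 : ℝ) ≤ n := by positivity
      linarith
    · refine .of_forall fun ω => ?_
      refine tendsto_const_nhds.congr' ?_
      filter_upwards [eventually_ge_atTop ⌈|X ω|⌉₊] with n hn
      rw [max_eq_right (by linarith [Nat.ceil_le.1 hn]), mul_zero]
  simpa using this

lemma Lind.e_avg (H : Lind P X M) :
    Tendsto (fun n : ℕ => (∑ k ∈ Finset.range n, e P X M k) / n) atTop (𝓝 0) := by
  rw [Metric.tendsto_atTop]
  intro ε hε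
  obtain ⟨A, hA⟩ := (H.tail.eventually (gt_mem_nhds (show (0:ℝ) < ε / 2 by positivity))).exists
  have h1 : Tendsto (fun n : ℕ => (A : ℝ) / Real.sqrt n) atTop (𝓝 0) :=
    tendsto_const_nhds.div_atTop (Real.tendsto_sqrt_atTop.comp tendsto_natCast_atTop_atTop)
  obtain ⟨N, hN⟩ := eventually_atTop.1 (h1.eventually (gt_mem_nhds (show (0:ℝ) < ε / 2 by positivity)))
  refine ⟨N + 1, fun n hn => ?_⟩
  have hn0 : (0 : ℝ) < n := by exact_mod_cast (by omega : 0 < n)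
  have h2 : ∑ k ∈ Finset.range n, e P X M k ≤ A * Real.sqrt n +
      n * ∫ ω, |X ω| * max (|X ω| - A) 0 ∂P := by
    calc _ ≤ ∑ k ∈ Finset.range n, (A * r P X M k + ∫ ω, |X ω| * max (|X ω| - A) 0 ∂P) :=
          Finset.sum_le_sum fun k _ => H.e_le k (by positivity)
      _ = A * ∫ ω, M n ω ∂P + n * ∫ ω, |X ω| * max (|X ω| - A) 0 ∂P := by
          rw [Finset.sum_add_distrib, ← Finset.mul_sum, H.sum_r]; simp
      _ ≤ _ := by
          have := H.mean_le n
          gcongr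
  rw [Real.dist_eq, sub_zero, abs_of_nonneg (by
    have : 0 ≤ ∑ k ∈ Finset.range n, e P X M k := Finset.sum_nonneg fun k _ => e_nonneg k
    positivity)]
  have h3 := hN n (by omega)
  rw [div_lt_iff₀ (by positivity)] at h3
  rw [div_lt_iff₀ hn0]
  have h4 : Real.sqrt n * Real.sqrt n = n := Real.mul_self_sqrt hn0.le
  have h5 : 0 < Real.sqrt n := by positivity
  nlinarith

end Moments

section Char

variable {Ω : Type*} [MeasurableSpace Ω] {P : Measure Ω} [IsProbabilityMeasure P]
  {X : Ω → ℝ} {M : ℕ → Ω → ℝ}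

open Complex in
lemma charFun_rv {Y : Ω → ℝ} (hY : Measurable Y) (t : ℝ) :
    charFun (P.map Y) t = ∫ ω, exp (t * Y ω * I) ∂P := by
  rw [charFun_apply_real, integral_map hY.aemeasurable
    (Continuous.aestronglyMeasurable (by fun_prop))]

open Complex in
lemma int_exp {Y : Ω → ℝ} (hY : Measurable Y) (t : ℝ) :
    Integrable (fun ω => exp (t * Y ω * I)) P := by
  refine Integrable.of_bound (C := 1) (Measurable.aestronglyMeasurable (by fun_prop))
    (.of_forall fun ω => ?_)
  rw [← ofReal_mul, norm_exp_ofReal_mul_I]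

open Complex in
lemma Lind.diff (H : Lind P X M) (n : ℕ) (θ : ℝ) :
    charFun (P.map (M (n + 1))) θ - charFun (P.map (fun ω => X ω + M n ω)) θ =
      ∫ ω, (exp (θ * (max (X ω + M n ω) 0 : ℝ) * I) - exp (θ * (X ω + M n ω : ℝ) * I)) ∂P := by
  rw [H.law n, charFun_rv (H.mW n), charFun_rv ((H.mW n).max measurable_const),
    integral_sub (int_exp ((H.mW n).max measurable_const) θ) (int_exp (H.mW n) θ)]

lemma Lind.mul (H : Lind P X M) (n : ℕ) (θ : ℝ) :
    charFun (P.map (fun ω => X ω + M n ω)) θ =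
      charFun (P.map X) θ * charFun (P.map (M n)) θ := by
  rw [(H.indep n).charFun_map_fun_add_eq_mul H.mX.aemeasurable (H.mM n).aemeasurable]
  rfl

open Complex in
lemma Lind.step1 (H : Lind P X M) (n : ℕ) (θ : ℝ) :
    ‖charFun (P.map (M (n + 1))) θ - charFun (P.map (fun ω => X ω + M n ω)) θ‖
      ≤ |θ| * r P X M n := by
  rw [H.diff, r, ← integral_const_mul]
  refine norm_integral_le_of_norm_le ((int1 (H.Lneg n)).const_mul _) (.of_forall fun ω => ?_)
  rcases le_total (X ω + M n ω) 0 with h | h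
  · rw [max_eq_right h, max_eq_left (by linarith)]
    have := Real.norm_exp_I_mul_ofReal_sub_one_le (x := θ * (X ω + M n ω))
    rw [norm_sub_rev]
    simp only [ofReal_zero, mul_zero, zero_mul, exp_zero]
    rw [← ofReal_mul, mul_comm _ I]
    refine this.trans ?_
    rw [Real.norm_eq_abs, abs_mul, abs_of_nonpos h]
  · rw [max_eq_left h]
    simp only [sub_self, norm_zero]
    positivity

open Complex in
lemma Lind.step2 (H : Lind P X M) (n : ℕ) (θ : ℝ) :
    |(charFun (P.map (M (n + 1))) θ - charFun (P.map (fun ω => X ω + M n ω)) θ).re|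
      ≤ θ ^ 2 / 2 * e P X M n := by
  have hi : Integrable (fun ω => exp (θ * (max (X ω + M n ω) 0 : ℝ) * I)
      - exp (θ * (X ω + M n ω : ℝ) * I)) P :=
    (int_exp ((H.mW n).max measurable_const) θ).sub (int_exp (H.mW n) θ)
  rw [H.diff, e, ← integral_const_mul]
  have := integral_re hi
  simp only [RCLike.re_to_complex] at this
  rw [← this, ← Real.norm_eq_abs]
  refine norm_integral_le_of_norm_le (((H.Lneg n).integrable_sq).const_mul _)
    (.of_forall fun ω => ?_)
  rw [sub_re, ← ofReal_mul, ← ofReal_mul, exp_ofReal_mul_I_re, exp_ofReal_mul_I_re,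
    Real.norm_eq_abs]
  rcases le_total (X ω + M n ω) 0 with h | h
  · rw [max_eq_right h, max_eq_left (by linarith), mul_zero, Real.cos_zero, abs_of_nonneg
      (by linarith [Real.cos_le_one (θ * (X ω + M n ω))])]
    have := Real.one_sub_sq_div_two_le_cos (x := θ * (X ω + M n ω))
    nlinarith
  · rw [max_eq_left h]
    simp only [sub_self, abs_zero]
    positivity

lemma probM (H : Lind P X M) (n : ℕ) : IsProbabilityMeasure (P.map (M n)) :=
  Measure.isProbabilityMeasure_map (H.mM n).aemeasurable

lemma norm_charFun_le (Y : Ω → ℝ) (hY : Measurable Y) (θ : ℝ) : ‖charFun (P.map Y) θ‖ ≤ 1 := by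
  have := Measure.isProbabilityMeasure_map (μ := P) hY.aemeasurable
  exact norm_charFun_le_one θ

/-- geometric iteration -/
lemma geo {a : ℕ → ℝ} {q b : ℝ} (hq0 : 0 ≤ q) (hq1 : q < 1) (hb : 0 ≤ b) (m : ℕ) (h0 : a m ≤ 1)
    (h : ∀ k ≥ m, a (k + 1) ≤ q * a k + b) (j : ℕ) : a (m + j) ≤ q ^ j + b / (1 - q) := by
  induction j with
  | zero =>
    have : 0 ≤ b / (1 - q) := div_nonneg hb (by linarith)
    simp; linarith
  | succ j ih =>
    have h1 := h (m + j) (by omega)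
    have h2 : b / (1 - q) = q * (b / (1 - q)) + b := by
      have : 1 - q ≠ 0 := by linarith
      field_simp; ring
    rw [← add_assoc, h2, pow_succ]
    nlinarith [mul_le_mul_of_nonneg_left ih hq0]

lemma Lind.gamma (H : Lind P X M) : ∃ γ > (0 : ℝ), γ ≤ 1 ∧ ∀ θ : ℝ, |θ| ≤ γ →
    ‖charFun (P.map X) θ‖ ≤ 1 - θ ^ 2 / 4 := by
  have h := taylor_charFun_two (P := P) H.mX.aemeasurable H.mean (by simpa using H.var)
  have h1 := h.bound (show (0 : ℝ) < 1 / 4 by norm_num)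
  obtain ⟨δ, hδ, hh⟩ := Metric.eventually_nhds_iff.1 h1
  refine ⟨min (δ / 2) 1, by positivity, min_le_right _ _, fun θ hθ => ?_⟩
  have h2 := hh (y := θ) (by
    rw [Real.dist_eq, sub_zero]
    linarith [hθ.trans (min_le_left _ _)])
  have h3 : |θ| ≤ 1 := hθ.trans (min_le_right _ _)
  have h4 : θ ^ 2 ≤ 1 := by rw [← sq_abs]; nlinarith [abs_nonneg θ]
  have h5 : ‖(1 - (θ : ℂ) ^ 2 / 2)‖ = 1 - θ ^ 2 / 2 := by
    rw [show (1 - (θ : ℂ) ^ 2 / 2) = ((1 - θ ^ 2 / 2 : ℝ) : ℂ) by push_cast; ring,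
      Complex.norm_real, Real.norm_of_nonneg (by linarith)]
  rw [Real.norm_of_nonneg (by positivity)] at h2
  have h6 := norm_add_le (charFun (P.map X) θ - (1 - (θ : ℂ) ^ 2 / 2)) (1 - (θ : ℂ) ^ 2 / 2)
  rw [sub_add_cancel, h5] at h6
  linarith

lemma Lind.decay (H : Lind P X M) {γ : ℝ} (hγ1 : γ ≤ 1)
    (hγ : ∀ θ : ℝ, |θ| ≤ γ → ‖charFun (P.map X) θ‖ ≤ 1 - θ ^ 2 / 4) (n : ℕ) (hn : 1 ≤ n)
    (t : ℝ) (ht1 : 1 ≤ |t|) (ht : |t| ≤ γ * Real.sqrt n) :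
    ‖charFun (P.map (M n)) (t / Real.sqrt n)‖ ≤ 16 / |t| := by
  have hn0 : (0 : ℝ) < n := by exact_mod_cast hn
  have hs : 0 < Real.sqrt n := by positivity
  have hss : Real.sqrt n * Real.sqrt n = n := Real.mul_self_sqrt hn0.le
  set θ := t / Real.sqrt n with hθ
  have ht0 : 0 < |t| := by linarith
  have hθa : |θ| = |t| / Real.sqrt n := by rw [hθ, abs_div, abs_of_pos hs]
  have hθ0 : 0 < |θ| := by rw [hθa]; positivity
  have hθγ : |θ| ≤ γ := by rw [hθa, div_le_iff₀ hs]; exact ht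
  have hθ2 : θ ^ 2 = |θ| * |θ| := by rw [← sq_abs, sq]
  have hθ2' : θ ^ 2 * n = t ^ 2 := by
    rw [hθ, div_pow, Real.sq_sqrt hn0.le]; field_simp
  have hle1 : θ ^ 2 ≤ 1 := by rw [hθ2]; nlinarith
  have hpos : 0 < θ ^ 2 := by rw [hθ2]; positivity
  set h := n / 2 with hh
  have hg := geo (a := fun k => ‖charFun (P.map (M k)) θ‖) (q := 1 - θ ^ 2 / 4)
    (b := |θ| * r P X M h) (by linarith) (by linarith) (mul_nonneg hθ0.le (r_nonneg h)) h
    (norm_charFun_le _ (H.mM h) θ) (fun k hk => by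
      have h1 := H.step1 k θ
      have h2 := norm_add_le (charFun (P.map (M (k + 1))) θ -
        charFun (P.map (fun ω => X ω + M k ω)) θ) (charFun (P.map (fun ω => X ω + M k ω)) θ)
      rw [sub_add_cancel] at h2
      have h3 := H.mul k θ
      have h4 : ‖charFun (P.map (fun ω => X ω + M k ω)) θ‖ ≤
          (1 - θ ^ 2 / 4) * ‖charFun (P.map (M k)) θ‖ := by
        rw [h3, norm_mul]
        exact mul_le_mul_of_nonneg_right (hγ θ hθγ) (norm_nonneg _)
      have h5 : |θ| * r P X M k ≤ |θ| * r P X M h :=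
        mul_le_mul_of_nonneg_left (H.r_anti hk) hθ0.le
      linarith) (n - h)
  simp only [show h + (n - h) = n by omega] at hg
  refine hg.trans ?_
  -- first term
  have hnh : (n : ℝ) / 2 ≤ (n - h : ℕ) := by
    have : n ≤ 2 * (n - h) := by omega
    have : (n : ℝ) ≤ 2 * (n - h : ℕ) := by exact_mod_cast this
    linarith
  have b1 : (1 - θ ^ 2 / 4) ^ (n - h) ≤ 8 / |t| := by
    calc (1 - θ ^ 2 / 4) ^ (n - h) ≤ (Real.exp (-(θ ^ 2 / 4))) ^ (n - h) := by
          refine pow_le_pow_left₀ (by linarith) ?_ _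
          linarith [Real.add_one_le_exp (-(θ ^ 2 / 4))]
      _ = Real.exp (-((n - h : ℕ) * (θ ^ 2 / 4))) := by rw [← Real.exp_nat_mul]; congr 1; ring
      _ ≤ Real.exp (-(t ^ 2 / 8)) := by
          rw [Real.exp_le_exp]; nlinarith
      _ ≤ 8 / |t| := by
          rw [Real.exp_neg, inv_le_comm₀ (Real.exp_pos _) (by positivity), inv_div]
          have := Real.add_one_le_exp (t ^ 2 / 8)
          rw [← sq_abs] at this
          rw [← sq_abs]
          nlinarith
  have b2 : |θ| * r P X M h / (1 - (1 - θ ^ 2 / 4)) ≤ 8 / |t| := by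
    have hr := H.r_le h
    have hh1 : (n : ℝ) / 4 ≤ h + 1 := by
      have : n ≤ 4 * (h + 1) := by omega
      have : (n : ℝ) ≤ 4 * (h + 1) := by exact_mod_cast this
      linarith
    have hsq : Real.sqrt n / 2 ≤ Real.sqrt (h + 1) := by
      refine Real.le_sqrt_of_sq_le ?_
      rw [div_pow, Real.sq_sqrt hn0.le]; linarith
    have hr2 : r P X M h ≤ 2 / Real.sqrt n := by
      refine hr.trans ?_
      rw [div_le_div_iff₀ (by positivity) hs]; linarith
    have : |θ| * r P X M h / (1 - (1 - θ ^ 2 / 4)) = 4 * r P X M h / |θ| := by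
      rw [sub_sub_cancel, hθ2]; field_simp
    rw [this, hθa]
    rw [div_div_eq_mul_div, div_le_div_iff_of_pos_right ht0]
    calc 4 * r P X M h * Real.sqrt n ≤ 4 * (2 / Real.sqrt n) * Real.sqrt n := by gcongr
      _ = 8 := by field_simp; norm_num
  calc _ ≤ 8 / |t| + 8 / |t| := add_le_add b1 b2
    _ = 16 / |t| := by ring

end Char

section Conv

variable {Ω : Type*} [MeasurableSpace Ω] {P : Measure Ω} [IsProbabilityMeasure P]
  {X : Ω → ℝ} {M : ℕ → Ω → ℝ}

lemma Lind.cos_bound (H : Lind P X M) (θ : ℝ) (hθ : θ ^ 2 ≤ 1) (n : ℕ) :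
    |(charFun (P.map (M n)) θ).re - (1 - θ ^ 2 / 2) ^ n| ≤
      n * ‖charFun (P.map X) θ - (1 - (θ : ℂ) ^ 2 / 2)‖
        + θ ^ 2 / 2 * ∑ k ∈ Finset.range n, e P X M k := by
  induction n with
  | zero =>
    rw [H.zero, charFun_rv measurable_const]
    simp
  | succ n ih =>
    have h1 := H.step2 n θ
    set δ := charFun (P.map X) θ - (1 - (θ : ℂ) ^ 2 / 2) with hδ
    set L := charFun (P.map (M n)) θ with hL
    have h2 : charFun (P.map (fun ω => X ω + M n ω)) θ = ((1 - θ ^ 2 / 2 : ℝ) : ℂ) * L + δ * L := by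
      rw [H.mul, hδ]; push_cast; ring
    have h3 : |(δ * L).re| ≤ ‖δ‖ := by
      refine (Complex.abs_re_le_norm _).trans ?_
      rw [norm_mul]
      exact mul_le_of_le_one_right (norm_nonneg _) (norm_charFun_le _ (H.mM n) θ)
    rw [h2, Complex.sub_re, Complex.add_re, Complex.re_ofReal_mul] at h1
    rw [Finset.sum_range_succ, pow_succ]
    have h4 : |(1 - θ ^ 2 / 2) * (L.re - (1 - θ ^ 2 / 2) ^ n)| ≤ |L.re - (1 - θ ^ 2 / 2) ^ n| := by
      rw [abs_mul]
      refine mul_le_of_le_one_left (abs_nonneg _) ?_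
      rw [abs_le]; constructor <;> nlinarith [sq_nonneg θ]
    have h5 : (charFun (P.map (M (n + 1))) θ).re - (1 - θ ^ 2 / 2) ^ n * (1 - θ ^ 2 / 2) =
      ((charFun (P.map (M (n + 1))) θ).re - ((1 - θ ^ 2 / 2) * L.re + (δ * L).re)) + (δ * L).re +
        (1 - θ ^ 2 / 2) * (L.re - (1 - θ ^ 2 / 2) ^ n) := by ring
    rw [h5]
    refine (abs_add_three _ _ _).trans ?_
    push_cast
    linarith

lemma Lind.cos_conv (H : Lind P X M) (t : ℝ) :
    Tendsto (fun n : ℕ => (charFun (P.map (M n)) (t / Real.sqrt n)).re) atTop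
      (𝓝 (Real.exp (-(t ^ 2 / 2)))) := by
  have hθ : Tendsto (fun n : ℕ => t / Real.sqrt n) atTop (𝓝 0) :=
    tendsto_const_nhds.div_atTop (Real.tendsto_sqrt_atTop.comp tendsto_natCast_atTop_atTop)
  have hpow : Tendsto (fun n : ℕ => (1 - (t / Real.sqrt n) ^ 2 / 2) ^ n) atTop
      (𝓝 (Real.exp (-(t ^ 2 / 2)))) := by
    refine (Real.tendsto_one_add_div_pow_exp (-(t ^ 2 / 2))).congr fun n => ?_
    congr 1
    rw [div_pow, Real.sq_sqrt (by positivity)]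
    ring
  have hδ : Tendsto (fun n : ℕ => n * ‖charFun (P.map X) (t / Real.sqrt n) -
      (1 - ((t / Real.sqrt n : ℝ) : ℂ) ^ 2 / 2)‖) atTop (𝓝 0) := by
    have h := taylor_charFun_two (P := P) H.mX.aemeasurable H.mean (by simpa using H.var)
    have h1 := h.comp_tendsto hθ
    rw [Metric.tendsto_atTop]
    intro ε hε
    have h2 := h1.bound (show (0 : ℝ) < ε / (t ^ 2 + 1) by positivity)
    obtain ⟨N, hN⟩ := eventually_atTop.1 h2
    refine ⟨N + 1, fun n hn => ?_⟩
    have hn0 : (0 : ℝ) < n := by exact_mod_cast (by omega : 0 < n)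
    have h3 := hN n (by omega)
    simp only [Function.comp_apply] at h3
    rw [Real.norm_of_nonneg (by positivity), div_pow, Real.sq_sqrt hn0.le] at h3
    rw [Real.dist_eq, sub_zero, abs_of_nonneg (by positivity)]
    calc _ ≤ n * (ε / (t ^ 2 + 1) * (t ^ 2 / n)) := by gcongr
      _ = ε * (t ^ 2 / (t ^ 2 + 1)) := by field_simp
      _ < ε := by
        have : t ^ 2 / (t ^ 2 + 1) < 1 := by rw [div_lt_one (by positivity)]; linarith
        nlinarith
  have he : Tendsto (fun n : ℕ => (t / Real.sqrt n) ^ 2 / 2 * ∑ k ∈ Finset.range n, e P X M k)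
      atTop (𝓝 0) := by
    have := H.e_avg.const_mul (t ^ 2 / 2)
    rw [mul_zero] at this
    refine this.congr fun n => ?_
    rw [div_pow, Real.sq_sqrt (by positivity)]
    ring
  have hsum := hδ.add he
  rw [add_zero] at hsum
  have hd : Tendsto (fun n : ℕ => (charFun (P.map (M n)) (t / Real.sqrt n)).re -
      (1 - (t / Real.sqrt n) ^ 2 / 2) ^ n) atTop (𝓝 0) := by
    refine squeeze_zero_norm' ?_ hsum
    have h2 : Tendsto (fun n : ℕ => (t / Real.sqrt n) ^ 2) atTop (𝓝 0) := by
      simpa using hθ.pow 2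
    filter_upwards [h2.eventually (gt_mem_nhds zero_lt_one)] with n hn
    exact H.cos_bound _ hn.le n
  simpa using hd.add hpow

/-- the symmetrised law -/
noncomputable def sy (P : Measure Ω) (Y : Ω → ℝ) : Measure ℝ :=
  (2⁻¹ : ℝ≥0∞) • P.map Y + (2⁻¹ : ℝ≥0∞) • P.map (fun ω => - Y ω)

lemma sy_prob {Y : Ω → ℝ} (hY : Measurable Y) : IsProbabilityMeasure (sy P Y) := by
  have := Measure.isProbabilityMeasure_map (μ := P) hY.aemeasurable
  have := Measure.isProbabilityMeasure_map (μ := P) (f := fun ω => - Y ω) hY.neg.aemeasurable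
  constructor
  simp only [sy, Measure.add_apply, Measure.smul_apply, smul_eq_mul]
  have h1 : (P.map Y) Set.univ = 1 := measure_univ
  have h2 : (P.map (fun ω => - Y ω)) Set.univ = 1 := measure_univ
  rw [h1, h2, mul_one, ENNReal.inv_two_add_inv_two]

lemma sy_int {E : Type*} [NormedAddCommGroup E] [NormedSpace ℝ E] [CompleteSpace E] {Y : Ω → ℝ}
    (hY : Measurable Y)
    {g : ℝ → E} (hg : Continuous g) [SecondCountableTopology E] {C : ℝ} (hC : ∀ x, ‖g x‖ ≤ C) :
    ∫ x, g x ∂(sy P Y) = (2⁻¹ : ℝ) • (∫ ω, g (Y ω) ∂P + ∫ ω, g (-Y ω) ∂P) := by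
  have := Measure.isProbabilityMeasure_map (μ := P) hY.aemeasurable
  have := Measure.isProbabilityMeasure_map (μ := P) (f := fun ω => - Y ω) hY.neg.aemeasurable
  have hi : ∀ (μ : Measure ℝ) [IsFiniteMeasure μ], Integrable g μ := fun μ _ =>
    Integrable.of_bound hg.aestronglyMeasurable C (.of_forall hC)
  rw [sy, integral_add_measure ((hi (P.map Y)).smul_measure (by simp))
    ((hi (P.map (fun ω => - Y ω))).smul_measure (by simp)), integral_smul_measure,
    integral_smul_measure,
    integral_map hY.aemeasurable hg.aestronglyMeasurable,
    integral_map (φ := fun ω => - Y ω) hY.neg.aemeasurable hg.aestronglyMeasurable, smul_add]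
  simp

open Complex in
lemma sy_charFun {Y : Ω → ℝ} (hY : Measurable Y) (t : ℝ) :
    charFun (sy P Y) t = ((charFun (P.map Y) t).re : ℂ) := by
  rw [charFun_apply_real, sy_int hY (by fun_prop) (C := 1) (fun x => by
    rw [← ofReal_mul, norm_exp_ofReal_mul_I]), ← charFun_rv hY]
  have h : ∫ ω, exp (t * ((- Y ω : ℝ) : ℂ) * I) ∂P = (starRingEnd ℂ) (charFun (P.map Y) t) := by
    rw [← charFun_neg, charFun_rv hY]
    refine integral_congr_ae (.of_forall fun ω => ?_)
    simp
  rw [h, add_conj]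
  apply Complex.ext <;> simp

/-- the symmetrised law as a probability measure -/
noncomputable def syP (P : Measure Ω) [IsProbabilityMeasure P] (Y : Ω → ℝ) (hY : Measurable Y) :
    ProbabilityMeasure ℝ := ⟨sy P Y, sy_prob hY⟩

/-- the standard Gaussian as a probability measure -/
noncomputable def gaP : ProbabilityMeasure ℝ := ⟨gaussianReal 0 1, inferInstance⟩

lemma syP_coe {Y : Ω → ℝ} (hY : Measurable Y) : ((syP P Y hY : ProbabilityMeasure ℝ) : Measure ℝ)
    = sy P Y := rfl

lemma gaP_coe : ((gaP : ProbabilityMeasure ℝ) : Measure ℝ) = gaussianReal 0 1 := rfl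

lemma Lind.sy_conv (H : Lind P X M) : Tendsto (fun n : ℕ =>
    syP P (fun ω => M n ω / Real.sqrt n) ((H.mM n).div_const _)) atTop (𝓝 gaP) := by
  rw [ProbabilityMeasure.tendsto_iff_tendsto_charFun]
  intro t
  simp only [syP_coe, gaP_coe]
  have h1 : charFun (gaussianReal 0 1) t = (Real.exp (-(t ^ 2 / 2)) : ℂ) := by
    rw [charFun_gaussianReal]; simp
  rw [h1]
  refine ((Complex.continuous_ofReal.tendsto _).comp (H.cos_conv t)).congr fun n => ?_
  simp only [Function.comp_apply]
  rw [sy_charFun ((H.mM n).div_const _)]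
  congr 2
  rw [charFun_rv (H.mM n), charFun_rv ((H.mM n).div_const _)]
  refine integral_congr_ae (.of_forall fun ω => ?_)
  simp only
  congr 1
  push_cast; ring

/-- pointwise convergence of the characteristic functions -/
lemma Lind.char_conv (H : Lind P X M) (t : ℝ) :
    Tendsto (fun n : ℕ => charFun (P.map (M n)) (t / Real.sqrt n)) atTop
      (𝓝 (charFun ((gaussianReal 0 1).map (fun y => |y|)) t)) := by
  have h := H.sy_conv
  rw [ProbabilityMeasure.tendsto_iff_forall_integral_rclike_tendsto ℂ] at h
  have hb : ∀ x : ℝ, ‖Complex.exp (t * (|x| : ℝ) * Complex.I)‖ ≤ 1 := fun x => by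
    rw [← Complex.ofReal_mul, Complex.norm_exp_ofReal_mul_I]
  have hc : Continuous (fun x : ℝ => Complex.exp (t * (|x| : ℝ) * Complex.I)) := by fun_prop
  have h1 := h (BoundedContinuousFunction.ofNormedAddCommGroup _ hc 1 hb)
  simp only [syP_coe, gaP_coe, BoundedContinuousFunction.coe_ofNormedAddCommGroup] at h1
  rw [charFun_rv (by fun_prop)]
  refine h1.congr fun n => ?_
  rw [sy_int ((H.mM n).div_const _) hc hb, charFun_rv (H.mM n)]
  simp only [abs_neg]
  rw [← two_smul ℝ, smul_smul]
  norm_num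
  refine integral_congr_ae (.of_forall fun ω => ?_)
  simp only
  rw [abs_of_nonneg (div_nonneg (H.nonneg n ω) (Real.sqrt_nonneg _))]
  congr 1
  push_cast
  ring

lemma Lind.min_conv (H : Lind P X M) (a : ℝ) :
    Tendsto (fun n : ℕ => ∫ ω, min ((M n ω / Real.sqrt n) ^ 2) (a ^ 2) ∂P) atTop
      (𝓝 (∫ x, min (x ^ 2) (a ^ 2) ∂(gaussianReal 0 1))) := by
  have h := H.sy_conv
  rw [ProbabilityMeasure.tendsto_iff_forall_integral_tendsto] at h
  have hb : ∀ x : ℝ, ‖min (x ^ 2) (a ^ 2)‖ ≤ a ^ 2 := fun x => by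
    rw [Real.norm_of_nonneg (by positivity)]
    exact min_le_right _ _
  have hc : Continuous (fun x : ℝ => min (x ^ 2) (a ^ 2)) := by fun_prop
  have h1 := h (BoundedContinuousFunction.ofNormedAddCommGroup _ hc _ hb)
  simp only [syP_coe, gaP_coe, BoundedContinuousFunction.coe_ofNormedAddCommGroup] at h1
  refine h1.congr fun n => ?_
  rw [sy_int ((H.mM n).div_const _) hc hb]
  simp only [neg_sq]
  rw [← two_smul ℝ, smul_smul]
  norm_num

end Conv

section Modulus

open Complex

lemma exp_diff (s t x : ℝ) : ‖exp (s * x * I) - exp (t * x * I)‖ ≤ |s - t| * |x| := by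
  have h : exp (s * x * I) - exp (t * x * I) =
      exp ((t * x : ℝ) * I) * (exp (I * ((s - t) * x : ℝ)) - 1) := by
    rw [mul_sub, ← exp_add, mul_one]
    congr 2 <;> push_cast <;> ring
  rw [h, norm_mul, norm_exp_ofReal_mul_I, one_mul, ← abs_mul]
  exact Real.norm_exp_I_mul_ofReal_sub_one_le

lemma exp_diff2 (s t x : ℝ) : ‖exp (s * x * I) - exp (t * x * I)‖ ≤ 2 := by
  refine (norm_sub_le _ _).trans ?_
  rw [← ofReal_mul, ← ofReal_mul, norm_exp_ofReal_mul_I, norm_exp_ofReal_mul_I]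
  norm_num

variable {μ : Measure ℝ} [IsProbabilityMeasure μ]

lemma mem1 (h : MemLp id 2 μ) : MemLp id 1 μ := h.mono_exponent (by norm_num)

lemma char_lip (h : MemLp id 2 μ) (s t : ℝ) :
    ‖charFun μ s - charFun μ t‖ ≤ |s - t| * ∫ x, |x| ∂μ := by
  have hi : Integrable (fun x : ℝ => |x|) μ := (int1 h).abs
  have he : ∀ s : ℝ, Integrable (fun x : ℝ => exp (s * x * I)) μ := fun s =>
    int_exp (Y := fun x => x) measurable_id s
  rw [charFun_apply_real, charFun_apply_real, ← integral_sub (he s) (he t), ← integral_const_mul]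
  exact norm_integral_le_of_norm_le (hi.const_mul _) (.of_forall fun x => exp_diff s t x)

lemma int_pow_exp {j : ℕ} (hi : Integrable (fun x : ℝ => x ^ j) μ) (s : ℝ) :
    Integrable (fun x : ℝ => (x : ℂ) ^ j * exp (s * x * I)) μ := by
  refine Integrable.mono hi (Continuous.aestronglyMeasurable (by fun_prop)) (.of_forall fun x => ?_)
  rw [norm_mul, ← ofReal_mul, norm_exp_ofReal_mul_I, mul_one, norm_pow, norm_pow, norm_real]

lemma deriv1_lip (h : MemLp id 2 μ) (s t : ℝ) :
    ‖iteratedDeriv 1 (charFun μ) s - iteratedDeriv 1 (charFun μ) t‖ ≤ |s - t| * ∫ x, x ^ 2 ∂μ := by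
  have h1 : MemLp id (1 : ℕ) μ := by exact_mod_cast mem1 h
  have hi : Integrable (fun x : ℝ => x ^ 1) μ := by
    simp only [pow_one]; exact int1 h
  rw [iteratedDeriv_charFun h1, iteratedDeriv_charFun h1, ← mul_sub, norm_mul, norm_pow, norm_I,
    one_pow, one_mul, ← integral_sub (int_pow_exp hi s) (int_pow_exp hi t), ← integral_const_mul]
  refine norm_integral_le_of_norm_le (h.integrable_sq.const_mul _) (.of_forall fun x => ?_)
  rw [← mul_sub, norm_mul, pow_one, norm_real, Real.norm_eq_abs]
  have := mul_le_mul_of_nonneg_left (exp_diff s t x) (abs_nonneg x)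
  refine this.trans (le_of_eq ?_)
  rw [← sq_abs x]; ring

lemma deriv2_mod (h : MemLp id 2 μ) (a s t : ℝ) :
    ‖iteratedDeriv 2 (charFun μ) s - iteratedDeriv 2 (charFun μ) t‖ ≤
      2 * ∫ x, max (x ^ 2 - a ^ 2) 0 ∂μ + a ^ 2 * |s - t| * ∫ x, |x| ∂μ := by
  have h1 : MemLp id (2 : ℕ) μ := by exact_mod_cast h
  have hi : Integrable (fun x : ℝ => x ^ 2) μ := h.integrable_sq
  have hi2 : Integrable (fun x : ℝ => max (x ^ 2 - a ^ 2) 0) μ :=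
    (hi.sub (integrable_const _)).sup (integrable_const 0)
  have hi3 : Integrable (fun x : ℝ => |x|) μ := (int1 h).abs
  rw [iteratedDeriv_charFun h1, iteratedDeriv_charFun h1, ← mul_sub, norm_mul, norm_pow, norm_I,
    one_pow, one_mul, ← integral_sub (int_pow_exp hi s) (int_pow_exp hi t), ← integral_const_mul,
    ← integral_const_mul, ← integral_add (hi2.const_mul _) (hi3.const_mul _)]
  refine norm_integral_le_of_norm_le ((hi2.const_mul _).add (hi3.const_mul _))
    (.of_forall fun x => ?_)
  rw [← mul_sub, norm_mul, norm_pow, norm_real, Real.norm_eq_abs, sq_abs]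
  have b1 := exp_diff s t x
  have b2 := exp_diff2 s t x
  have b3 := norm_nonneg (exp (s * x * I) - exp (t * x * I))
  rcases le_total (x ^ 2) (a ^ 2) with hx | hx
  · rw [max_eq_right (by linarith)]
    nlinarith [mul_le_mul hx b1 b3 (sq_nonneg a)]
  · rw [max_eq_left (by linarith)]
    nlinarith [mul_le_mul_of_nonneg_left b1 (sq_nonneg a),
      mul_le_mul_of_nonneg_left b2 (sub_nonneg.2 hx)]

lemma deriv_has (h : MemLp id 2 μ) {j : ℕ} (hj : j < 2) (t : ℝ) :
    HasDerivAt (iteratedDeriv j (charFun μ)) (iteratedDeriv (j + 1) (charFun μ) t) t := by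
  have h1 : MemLp id (2 : ℕ) μ := by exact_mod_cast h
  have hc : ContDiff ℝ (2 : ℕ) (charFun μ) := contDiff_charFun h1
  rw [iteratedDeriv_succ]
  exact (hc.differentiable_iteratedDeriv j (by exact_mod_cast hj) t).hasDerivAt

end Modulus

/-- Interpolation: smallness of `F n` and equicontinuity of the derivative gives smallness
of the derivative. -/
lemma interp {F F' : ℕ → ℝ → ℂ} {γ : ℝ} (hγ : 0 < γ) (hd : ∀ n t, HasDerivAt (F n) (F' n t) t)
    (hm : ∀ ε > (0 : ℝ), ∃ h > (0 : ℝ), ∃ N : ℕ, ∀ n ≥ N, ∀ s t, |s - t| ≤ h →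
      ‖F' n s - F' n t‖ ≤ ε)
    (hF : ∀ ε > (0 : ℝ), ∃ N : ℕ, ∀ n ≥ N, ∀ t, |t| ≤ γ * Real.sqrt n → ‖F n t‖ ≤ ε) :
    ∀ ε > (0 : ℝ), ∃ N : ℕ, ∀ n ≥ N, ∀ t, |t| ≤ γ * Real.sqrt n → ‖F' n t‖ ≤ ε := by
  intro ε hε
  obtain ⟨h, hh, N1, hN1⟩ := hm (ε / 2) (by positivity)
  obtain ⟨N2, hN2⟩ := hF (ε * h / 4) (by positivity)
  have ht : Tendsto (fun n : ℕ => γ * Real.sqrt n) atTop atTop :=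
    (Real.tendsto_sqrt_atTop.comp tendsto_natCast_atTop_atTop).const_mul_atTop hγ
  obtain ⟨N3, hN3⟩ := eventually_atTop.1 (ht.eventually_ge_atTop h)
  refine ⟨max N1 (max N2 N3), fun n hn t htn => ?_⟩
  have hn1 : N1 ≤ n := (le_max_left _ _).trans hn
  have hn2 : N2 ≤ n := ((le_max_left _ _).trans (le_max_right _ _)).trans hn
  have hn3 : N3 ≤ n := ((le_max_right _ _).trans (le_max_right _ _)).trans hn
  -- neighbouring point
  obtain ⟨s, hs1, hs2⟩ : ∃ s, |s - t| = h ∧ |s| ≤ γ * Real.sqrt n := by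
    have h3 := hN3 n hn3
    rw [abs_le] at htn
    rcases le_total 0 t with h0 | h0
    · exact ⟨t - h, by rw [sub_sub_cancel_left, abs_neg, abs_of_pos hh], by
        rw [abs_le]; constructor <;> linarith⟩
    · exact ⟨t + h, by rw [add_sub_cancel_left, abs_of_pos hh], by
        rw [abs_le]; constructor <;> linarith⟩
  have key : ‖(F n s - s * F' n t) - (F n t - t * F' n t)‖ ≤ ε / 2 * ‖s - t‖ := by
    refine Convex.norm_image_sub_le_of_norm_hasDerivWithin_le
      (f := fun x : ℝ => F n x - x * F' n t) (f' := fun x => F' n x - 1 * F' n t)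
      (s := Set.uIcc t s) (fun x _ => ?_) (fun x hx => ?_) (convex_uIcc _ _)
      Set.left_mem_uIcc Set.right_mem_uIcc
    · refine HasDerivAt.hasDerivWithinAt ?_
      exact (hd n x).sub ((Complex.ofRealCLM.hasDerivAt (x := x)).mul_const _)
    · rw [one_mul]
      refine hN1 n hn1 _ _ ?_
      rw [← hs1]
      exact Set.abs_sub_left_of_mem_uIcc hx
  have e1 : ((s - t : ℝ) : ℂ) * F' n t = F n s - F n t -
      ((F n s - s * F' n t) - (F n t - t * F' n t)) := by push_cast; ring
  have e2 : h * ‖F' n t‖ ≤ ε * h / 4 + ε * h / 4 + ε / 2 * h := by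
    have := congrArg norm e1
    rw [norm_mul, Complex.norm_real, Real.norm_eq_abs, hs1] at this
    rw [this]
    rw [Real.norm_eq_abs, hs1] at key
    refine (norm_sub_le _ _).trans (add_le_add ((norm_sub_le _ _).trans (add_le_add ?_ ?_)) key)
    · exact hN2 n hn2 s hs2
    · exact hN2 n hn2 t htn
  have : h * ‖F' n t‖ ≤ h * ε := by linarith
  exact le_of_mul_le_mul_left this hh

section Final

variable {Ω : Type*} [MeasurableSpace Ω] {P : Measure Ω} [IsProbabilityMeasure P]
  {X : Ω → ℝ} {M : ℕ → Ω → ℝ}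

/-- the one-sided normal law -/
noncomputable def nu : Measure ℝ := (gaussianReal 0 1).map (fun y => |y|)

instance : IsProbabilityMeasure nu :=
  Measure.isProbabilityMeasure_map (by fun_prop)

lemma ga_memLp : MemLp (id : ℝ → ℝ) 2 (gaussianReal 0 1) := memLp_id_gaussianReal 2

lemma ga_sq : ∫ x, x ^ 2 ∂(gaussianReal 0 1) = 1 := by
  have h := variance_eq_sub ga_memLp
  have h0 : ∫ x, id x ∂(gaussianReal 0 1) = 0 := integral_id_gaussianReal
  rw [variance_id_gaussianReal, h0] at h
  simpa using h.symm

lemma nu_memLp : MemLp (id : ℝ → ℝ) 2 nu := by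
  rw [nu, memLp_map_measure_iff (by fun_prop) (by fun_prop)]
  exact ga_memLp.abs

lemma nu_sq : ∫ x, x ^ 2 ∂nu = 1 := by
  rw [nu, integral_map (by fun_prop) (Continuous.aestronglyMeasurable (by fun_prop))]
  simp only [sq_abs]
  exact ga_sq

lemma abs_mean_le {μ : Measure ℝ} [IsProbabilityMeasure μ] (h : MemLp id 2 μ) {c : ℝ} (hc : 0 ≤ c)
    (h2 : ∫ x, x ^ 2 ∂μ ≤ c ^ 2) : ∫ x, |x| ∂μ ≤ c := by
  have this : (∫ x, |x| ∂μ) ^ 2 ≤ ∫ x, |x| ^ 2 ∂μ := mean_sq_le h.abs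
  simp only [sq_abs] at this
  exact abs_le_of_sq_le_sq' (this.trans h2) hc |>.2

lemma max_eq_sub (u v : ℝ) : max (u - v) 0 = u - min u v := by
  rcases le_total u v with h | h
  · rw [max_eq_right (by linarith), min_eq_left h]; ring
  · rw [max_eq_left (by linarith), min_eq_right h]

lemma ga_tail : Tendsto (fun a : ℕ => ∫ x, max (x ^ 2 - (a : ℝ) ^ 2) 0 ∂(gaussianReal 0 1)) atTop
    (𝓝 0) := by
  have : Tendsto (fun a : ℕ => ∫ x, max (x ^ 2 - (a : ℝ) ^ 2) 0 ∂(gaussianReal 0 1)) atTop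
      (𝓝 (∫ x : ℝ, (0 : ℝ) ∂(gaussianReal 0 1))) := by
    refine tendsto_integral_of_dominated_convergence (fun x => x ^ 2) (fun n => ?_)
      ga_memLp.integrable_sq (fun n => ?_) ?_
    · exact Continuous.aestronglyMeasurable (by fun_prop)
    · refine .of_forall fun x => ?_
      rw [Real.norm_of_nonneg (le_max_right _ _)]
      exact max_le (by nlinarith [sq_nonneg (n : ℝ)]) (sq_nonneg x)
    · refine .of_forall fun x => ?_
      refine tendsto_const_nhds.congr' ?_
      filter_upwards [eventually_ge_atTop ⌈|x|⌉₊] with n hn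
      have h1 : |x| ≤ n := Nat.ceil_le.1 hn
      rw [max_eq_right]
      rw [← sq_abs]
      nlinarith [abs_nonneg x]
  simpa using this

lemma nu_tail_eq (a : ℝ) : ∫ x, max (x ^ 2 - a ^ 2) 0 ∂nu =
    ∫ x, max (x ^ 2 - a ^ 2) 0 ∂(gaussianReal 0 1) := by
  rw [nu, integral_map (by fun_prop) (Continuous.aestronglyMeasurable (by fun_prop))]
  simp only [sq_abs]

/-- the law of the normalised maximum -/
noncomputable def mu (P : Measure Ω) (X : Ω → ℝ) (M : ℕ → Ω → ℝ) (n : ℕ) : Measure ℝ :=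
  P.map (fun ω => (X ω + M (n - 1) ω) / Real.sqrt n)

lemma Lind.mY (H : Lind P X M) (n : ℕ) :
    Measurable (fun ω => (X ω + M (n - 1) ω) / Real.sqrt n) := (H.mW _).div_const _

lemma Lind.mu_prob (H : Lind P X M) (n : ℕ) : IsProbabilityMeasure (mu P X M n) :=
  Measure.isProbabilityMeasure_map (H.mY n).aemeasurable

lemma Lind.LY (H : Lind P X M) (n : ℕ) :
    MemLp (fun ω => (X ω + M (n - 1) ω) / Real.sqrt n) 2 P := by
  simp_rw [div_eq_mul_inv]
  exact (H.LW (n - 1)).mul_const _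

lemma Lind.mu_memLp (H : Lind P X M) (n : ℕ) : MemLp id 2 (mu P X M n) := by
  rw [mu, memLp_map_measure_iff (by fun_prop) (H.mY n).aemeasurable]
  exact H.LY n

lemma Lind.mu_sq (H : Lind P X M) (n : ℕ) : ∫ x, x ^ 2 ∂(mu P X M n) ≤ 1 := by
  rw [mu, integral_map (H.mY n).aemeasurable (Continuous.aestronglyMeasurable (by fun_prop))]
  simp_rw [div_pow]
  rw [integral_div, Real.sq_sqrt (by positivity)]
  rcases Nat.eq_zero_or_pos n with h | h
  · simp [h]
  · obtain ⟨m, rfl⟩ : ∃ m, n = m + 1 := ⟨n - 1, by omega⟩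
    rw [div_le_one (by positivity), H.sq_W]
    have := H.sq_le m
    push_cast
    linarith

lemma Lind.mu_tail (H : Lind P X M) (n : ℕ) (hn : 1 ≤ n) (a : ℝ) :
    ∫ x, max (x ^ 2 - a ^ 2) 0 ∂(mu P X M n) ≤
      (1 - ∫ ω, min ((M n ω / Real.sqrt n) ^ 2) (a ^ 2) ∂P) + 1 / n := by
  obtain ⟨m, rfl⟩ : ∃ m, n = m + 1 := ⟨n - 1, by omega⟩
  have hn0 : (0 : ℝ) < (m + 1 : ℕ) := by positivity
  set s := Real.sqrt (m + 1 : ℕ) with hs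
  have hs0 : 0 < s := by positivity
  have hs2 : s ^ 2 = (m + 1 : ℕ) := Real.sq_sqrt hn0.le
  have hcont : Continuous (fun x : ℝ => max (x ^ 2 - a ^ 2) 0) := by fun_prop
  have LMs : MemLp (fun ω => M (m + 1) ω / s) 2 P := by
    simp_rw [div_eq_mul_inv]
    exact (H.LM (m + 1)).mul_const _
  have hmin : Integrable (fun ω => min ((M (m + 1) ω / s) ^ 2) (a ^ 2)) P :=
    LMs.integrable_sq.inf (integrable_const _)
  have A1 : ∫ ω, max ((M (m + 1) ω / s) ^ 2 - a ^ 2) 0 ∂P ≤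
      1 - ∫ ω, min ((M (m + 1) ω / s) ^ 2) (a ^ 2) ∂P := by
    simp_rw [max_eq_sub]
    rw [integral_sub LMs.integrable_sq hmin]
    have : ∫ ω, (M (m + 1) ω / s) ^ 2 ∂P ≤ 1 := by
      simp_rw [div_pow]
      rw [integral_div, hs2, div_le_one hn0]
      exact H.sq_le (m + 1)
    linarith
  have A2 := H.law_int m (f := fun x => max ((x / s) ^ 2 - a ^ 2) 0) (by fun_prop)
  have A3 : ∫ ω, (max (-(X ω + M m ω)) 0) ^ 2 / s ^ 2 ∂P ≤ 1 / (m + 1 : ℕ) := by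
    rw [integral_div, hs2]
    exact div_le_div_of_nonneg_right (H.e_le_one m) hn0.le
  rw [mu, integral_map (H.mY _).aemeasurable hcont.aestronglyMeasurable]
  rw [A2] at A1
  have Lps : MemLp (fun ω => max (X ω + M m ω) 0 / s) 2 P := by
    simp_rw [div_eq_mul_inv]
    exact (H.Lpos m).mul_const _
  have I1 : Integrable (fun ω => max ((max (X ω + M m ω) 0 / s) ^ 2 - a ^ 2) 0) P :=
    (Lps.integrable_sq.sub (integrable_const _)).sup (integrable_const 0)
  have I2 : Integrable (fun ω => (max (-(X ω + M m ω)) 0) ^ 2 / s ^ 2) P :=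
    (H.Lneg m).integrable_sq.div_const _
  have I3 : Integrable (fun ω => max (((X ω + M m ω) / s) ^ 2 - a ^ 2) 0) P :=
    ((H.LY (m + 1)).integrable_sq.sub (integrable_const _)).sup (integrable_const 0)
  change ∫ ω, max (((X ω + M m ω) / s) ^ 2 - a ^ 2) 0 ∂P ≤ _
  refine le_trans ?_ (add_le_add A1 A3)
  rw [← integral_add I1 I2]
  refine integral_mono I3 (I1.add I2) fun ω => ?_
  simp only
  rcases le_total (X ω + M m ω) 0 with h | h
  · rw [max_eq_left (show (0 : ℝ) ≤ -(X ω + M m ω) by linarith)]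
    refine max_le ?_ (by positivity)
    have : 0 ≤ max ((max (X ω + M m ω) 0 / s) ^ 2 - a ^ 2) 0 := le_max_right _ _
    rw [div_pow, neg_sq]
    nlinarith [sq_nonneg a]
  · rw [max_eq_left h]
    have : 0 ≤ max (-(X ω + M m ω)) 0 ^ 2 / s ^ 2 := by positivity
    linarith

/-- uniform integrability of the squares -/
lemma Lind.ui (H : Lind P X M) {ε : ℝ} (hε : 0 < ε) : ∃ a : ℝ, ∃ N : ℕ,
    (∀ n ≥ N, ∫ x, max (x ^ 2 - a ^ 2) 0 ∂(mu P X M n) ≤ ε) ∧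
      ∫ x, max (x ^ 2 - a ^ 2) 0 ∂nu ≤ ε := by
  obtain ⟨a, ha⟩ := (ga_tail.eventually (gt_mem_nhds (show (0:ℝ) < ε / 3 by positivity))).exists
  have h1 : ∫ x, max (x ^ 2 - (a : ℝ) ^ 2) 0 ∂(gaussianReal 0 1) =
      1 - ∫ x, min (x ^ 2) ((a : ℝ) ^ 2) ∂(gaussianReal 0 1) := by
    simp_rw [max_eq_sub]
    have hmin : Integrable (fun x : ℝ => min (x ^ 2) ((a : ℝ) ^ 2)) (gaussianReal 0 1) :=
      ga_memLp.integrable_sq.inf (integrable_const _)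
    have hsq : Integrable (fun x : ℝ => x ^ 2) (gaussianReal 0 1) := ga_memLp.integrable_sq
    rw [integral_sub hsq hmin, ga_sq]
  have h2 := (H.min_conv a).eventually (lt_mem_nhds (show
    ∫ x, min (x ^ 2) ((a : ℝ) ^ 2) ∂(gaussianReal 0 1) - ε / 3 < _ by linarith))
  have h3 : Tendsto (fun n : ℕ => 1 / (n : ℝ)) atTop (𝓝 0) := tendsto_one_div_atTop_nhds_zero_nat
  obtain ⟨N, hN⟩ := eventually_atTop.1 ((h2.and (h3.eventually
    (gt_mem_nhds (show (0:ℝ) < ε / 3 by positivity)))).and (eventually_ge_atTop 1))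
  refine ⟨a, N, fun n hn => ?_, ?_⟩
  · obtain ⟨⟨b1, b2⟩, b3⟩ := hN n hn
    have := H.mu_tail n b3 a
    linarith
  · rw [nu_tail_eq]; linarith

lemma Lind.nu_decay (H : Lind P X M) {γ : ℝ} (hγ0 : 0 < γ) (hγ1 : γ ≤ 1)
    (hγ : ∀ θ : ℝ, |θ| ≤ γ → ‖charFun (P.map X) θ‖ ≤ 1 - θ ^ 2 / 4) (t : ℝ) (ht : 1 ≤ |t|) :
    ‖charFun nu t‖ ≤ 16 / |t| := by
  refine le_of_tendsto (H.char_conv t).norm ?_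
  have h : Tendsto (fun n : ℕ => γ * Real.sqrt n) atTop atTop :=
    (Real.tendsto_sqrt_atTop.comp tendsto_natCast_atTop_atTop).const_mul_atTop hγ0
  filter_upwards [h.eventually_ge_atTop |t|, eventually_ge_atTop 1] with n h1 h2
  exact H.decay hγ1 hγ n h2 t ht h1

lemma Lind.M_lip (H : Lind P X M) (n : ℕ) (s t : ℝ) :
    ‖charFun (P.map (M n)) (s / Real.sqrt n) - charFun (P.map (M n)) (t / Real.sqrt n)‖
      ≤ |s - t| := by
  have := probM H n
  have hL : MemLp id 2 (P.map (M n)) := by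
    rw [memLp_map_measure_iff (by fun_prop) (H.mM n).aemeasurable]
    exact H.LM n
  refine (char_lip hL _ _).trans ?_
  have h1 : ∫ x, |x| ∂(P.map (M n)) ≤ Real.sqrt n := by
    refine abs_mean_le hL (Real.sqrt_nonneg _) ?_
    rw [integral_map (H.mM n).aemeasurable (Continuous.aestronglyMeasurable (by fun_prop)),
      Real.sq_sqrt (by positivity)]
    exact H.sq_le n
  rw [← sub_div, abs_div, abs_of_nonneg (Real.sqrt_nonneg (n : ℝ))]
  rcases Nat.eq_zero_or_pos n with h | h
  · simp [h]
  · have hs : 0 < Real.sqrt n := by positivity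
    calc _ ≤ |s - t| / Real.sqrt n * Real.sqrt n := by gcongr
      _ = |s - t| := by field_simp

lemma nu_lip (s t : ℝ) : ‖charFun nu s - charFun nu t‖ ≤ |s - t| := by
  refine (char_lip nu_memLp s t).trans ?_
  have : ∫ x, |x| ∂nu ≤ 1 := abs_mean_le nu_memLp zero_le_one (by rw [nu_sq]; norm_num)
  nlinarith [abs_nonneg (s - t)]

lemma Lind.unif_M (H : Lind P X M) {γ : ℝ} (hγ0 : 0 < γ) (hγ1 : γ ≤ 1)
    (hγ : ∀ θ : ℝ, |θ| ≤ γ → ‖charFun (P.map X) θ‖ ≤ 1 - θ ^ 2 / 4) :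
    ∀ ε > (0 : ℝ), ∃ N : ℕ, ∀ n ≥ N, ∀ t, |t| ≤ γ * Real.sqrt n →
      ‖charFun (P.map (M n)) (t / Real.sqrt n) - charFun nu t‖ ≤ ε := by
  intro ε hε
  set K := 1 + 32 / ε with hK
  have hK1 : 1 ≤ K := by
    have : 0 < 32 / ε := by positivity
    linarith
  obtain ⟨T, hT, hTf, hTc⟩ := (isCompact_Icc (a := -K) (b := K)).finite_cover_balls
    (show 0 < ε / 4 by positivity)
  have h1 : ∀ᶠ n : ℕ in atTop, ∀ t ∈ T,
      ‖charFun (P.map (M n)) (t / Real.sqrt n) - charFun nu t‖ < ε / 4 := by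
    rw [eventually_all_finite hTf]
    intro t _
    have := (H.char_conv t)
    rw [Metric.tendsto_nhds] at this
    filter_upwards [this (ε / 4) (by positivity)] with n hn
    rwa [dist_eq_norm] at hn
  obtain ⟨N, hN⟩ := eventually_atTop.1 (h1.and (eventually_ge_atTop 1))
  refine ⟨N, fun n hn t ht => ?_⟩
  obtain ⟨b1, b2⟩ := hN n hn
  rcases le_total |t| K with h | h
  · have hmem := hTc (abs_le.1 h)
    simp only [Set.mem_iUnion, Metric.mem_ball] at hmem
    obtain ⟨u, hu, hd⟩ := hmem
    rw [Real.dist_eq] at hd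
    have c1 := H.M_lip n t u
    have c2 := nu_lip u t
    rw [abs_sub_comm] at c2
    have c3 := b1 u hu
    have : charFun (P.map (M n)) (t / Real.sqrt n) - charFun nu t =
      (charFun (P.map (M n)) (t / Real.sqrt n) - charFun (P.map (M n)) (u / Real.sqrt n)) +
      (charFun (P.map (M n)) (u / Real.sqrt n) - charFun nu u) + (charFun nu u - charFun nu t) := by
      ring
    rw [this]
    refine (norm_add₃_le).trans ?_
    linarith
  · have h1t : 1 ≤ |t| := hK1.trans h
    have d1 := H.decay hγ1 hγ n b2 t h1t ht
    have d2 := H.nu_decay hγ0 hγ1 hγ t h1t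
    have d3 : 16 / |t| ≤ ε / 2 := by
      rw [div_le_iff₀ (by linarith)]
      have : ε / 2 * (32 / ε) = 16 := by field_simp; norm_num
      nlinarith
    refine (norm_sub_le _ _).trans ?_
    linarith

lemma Lind.unif_0 (H : Lind P X M) {γ : ℝ} (hγ0 : 0 < γ) (hγ1 : γ ≤ 1)
    (hγ : ∀ θ : ℝ, |θ| ≤ γ → ‖charFun (P.map X) θ‖ ≤ 1 - θ ^ 2 / 4) :
    ∀ ε > (0 : ℝ), ∃ N : ℕ, ∀ n ≥ N, ∀ t, |t| ≤ γ * Real.sqrt n →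
      ‖charFun (mu P X M n) t - charFun nu t‖ ≤ ε := by
  intro ε hε
  obtain ⟨N1, hN1⟩ := H.unif_M hγ0 hγ1 hγ (ε / 2) (by positivity)
  have h1 : Tendsto (fun n : ℕ => (1 : ℝ) / Real.sqrt n) atTop (𝓝 0) :=
    tendsto_const_nhds.div_atTop (Real.tendsto_sqrt_atTop.comp tendsto_natCast_atTop_atTop)
  obtain ⟨N2, hN2⟩ := eventually_atTop.1
    (h1.eventually (gt_mem_nhds (show (0:ℝ) < ε / 2 by positivity)))
  refine ⟨N1 + N2 + 1, fun n hn t ht => ?_⟩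
  have b1 := hN1 n (by omega) t ht
  have b2 := hN2 n (by omega)
  obtain ⟨m, rfl⟩ : ∃ m, n = m + 1 := ⟨n - 1, by omega⟩
  have hs : 0 < Real.sqrt (m + 1 : ℕ) := by positivity
  have e1 : charFun (mu P X M (m + 1)) t =
      charFun (P.map (fun ω => X ω + M m ω)) (t / Real.sqrt (m + 1 : ℕ)) := by
    rw [mu, charFun_rv (H.mY _), charFun_rv (H.mW m)]
    refine integral_congr_ae (.of_forall fun ω => ?_)
    simp only [Nat.add_sub_cancel]
    congr 1
    push_cast; ring
  have b3 := H.step1 m (t / Real.sqrt (m + 1 : ℕ))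
  have b4 : |t / Real.sqrt (m + 1 : ℕ)| * r P X M m ≤ 1 / Real.sqrt (m + 1 : ℕ) := by
    have c1 := H.r_le m
    have c2 : |t / Real.sqrt (m + 1 : ℕ)| ≤ 1 := by
      rw [abs_div, abs_of_pos hs, div_le_one hs]
      nlinarith
    have c3 := r_nonneg (P := P) (X := X) (M := M) m
    push_cast at c2 ⊢
    nlinarith [abs_nonneg (t / Real.sqrt (m + 1))]
  rw [norm_sub_rev] at b3
  rw [e1]
  refine (norm_sub_le_norm_sub_add_norm_sub _
    (charFun (P.map (M (m + 1))) (t / Real.sqrt (m + 1 : ℕ))) _).trans ?_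
  linarith

lemma Lind.main (H : Lind P X M) : ∃ γ > (0 : ℝ), ∀ j : ℕ, j ≤ 2 → ∀ ε > (0 : ℝ), ∃ N : ℕ, ∀ n ≥ N,
    ∀ t : ℝ, |t| ≤ γ * Real.sqrt n →
      ‖iteratedDeriv j (charFun (mu P X M n)) t - iteratedDeriv j (charFun nu) t‖ ≤ ε := by
  obtain ⟨γ, hγ0, hγ1, hγ⟩ := H.gamma
  refine ⟨γ, hγ0, ?_⟩
  have P0 : ∀ ε > (0 : ℝ), ∃ N : ℕ, ∀ n ≥ N, ∀ t : ℝ, |t| ≤ γ * Real.sqrt n →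
      ‖iteratedDeriv 0 (charFun (mu P X M n)) t - iteratedDeriv 0 (charFun nu) t‖ ≤ ε := by
    simp only [iteratedDeriv_zero]
    exact H.unif_0 hγ0 hγ1 hγ
  have := H.mu_prob
  have hder : ∀ j < 2, ∀ n t, HasDerivAt (fun t => iteratedDeriv j (charFun (mu P X M n)) t -
      iteratedDeriv j (charFun nu) t) (iteratedDeriv (j + 1) (charFun (mu P X M n)) t -
      iteratedDeriv (j + 1) (charFun nu) t) t := fun j hj n t =>
    (deriv_has (H.mu_memLp n) hj t).sub (deriv_has nu_memLp hj t)
  have P1 : ∀ ε > (0 : ℝ), ∃ N : ℕ, ∀ n ≥ N, ∀ t : ℝ, |t| ≤ γ * Real.sqrt n →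
      ‖iteratedDeriv 1 (charFun (mu P X M n)) t - iteratedDeriv 1 (charFun nu) t‖ ≤ ε := by
    refine interp hγ0 (hder 0 (by norm_num)) (fun ε hε => ?_) P0
    refine ⟨ε / 2, by positivity, 0, fun n _ s t hst => ?_⟩
    have c1 := deriv1_lip (H.mu_memLp n) s t
    have c2 := deriv1_lip nu_memLp s t
    have c3 := H.mu_sq n
    rw [nu_sq, mul_one] at c2
    rw [sub_sub_sub_comm]
    refine (norm_sub_le _ _).trans ?_
    have c4 : |s - t| * ∫ x, x ^ 2 ∂(mu P X M n) ≤ |s - t| * 1 := by gcongr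
    linarith
  have P2 : ∀ ε > (0 : ℝ), ∃ N : ℕ, ∀ n ≥ N, ∀ t : ℝ, |t| ≤ γ * Real.sqrt n →
      ‖iteratedDeriv 2 (charFun (mu P X M n)) t - iteratedDeriv 2 (charFun nu) t‖ ≤ ε := by
    refine interp hγ0 (hder 1 (by norm_num)) (fun ε hε => ?_) P1
    obtain ⟨a, N, ha1, ha2⟩ := H.ui (show 0 < ε / 8 by positivity)
    refine ⟨ε / (4 * (a ^ 2 + 1)), by positivity, N, fun n hn s t hst => ?_⟩
    have c1 := deriv2_mod (H.mu_memLp n) a s t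
    have c2 := deriv2_mod nu_memLp a s t
    have c3 := ha1 n hn
    have c4 : ∫ x, |x| ∂(mu P X M n) ≤ 1 :=
      abs_mean_le (H.mu_memLp n) zero_le_one (by simpa using H.mu_sq n)
    have c5 : ∫ x, |x| ∂nu ≤ 1 := abs_mean_le nu_memLp zero_le_one (by rw [nu_sq]; norm_num)
    have c6 : a ^ 2 * |s - t| ≤ ε / 4 := by
      calc a ^ 2 * |s - t| ≤ (a ^ 2 + 1) * (ε / (4 * (a ^ 2 + 1))) := by
            gcongr; linarith
        _ = ε / 4 := by field_simp
    have c7 : a ^ 2 * |s - t| * ∫ x, |x| ∂(mu P X M n) ≤ a ^ 2 * |s - t| * 1 := by gcongr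
    have c8 : a ^ 2 * |s - t| * ∫ x, |x| ∂nu ≤ a ^ 2 * |s - t| * 1 := by gcongr
    rw [sub_sub_sub_comm]
    refine (norm_sub_le _ _).trans ?_
    linarith
  intro j hj
  interval_cases j
  · exact P0
  · exact P1
  · exact P2

end Final

end MaxWalk

/-- Convergence, together with the first two derivatives, of the characteristic
function of `S̄ n / √n` to the characteristic function of `|Z|`, uniformly in the
range `|t| ≤ γ √n`. -/
theorem stmt12 {Ω : Type*} [MeasureSpace Ω] [IsProbabilityMeasure (ℙ : Measure Ω)]
    (X : ℕ → Ω → ℝ) (hmeas : ∀ i, Measurable (X i))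
    (hindep : iIndepFun X ℙ)
    (hident : ∀ i, Measure.map (X i) ℙ = Measure.map (X 0) ℙ)
    (hL2 : MemLp (X 0) 2 ℙ)
    (hmean : ∫ ω, X 0 ω ∂ℙ = 0)
    (hvar : ∫ ω, (X 0 ω) ^ 2 ∂ℙ = 1)
    (Sbar : ℕ → Ω → ℝ)
    (hSbar : ∀ n, ∀ hn : 1 ≤ n, ∀ ω, Sbar n ω =
      (Finset.Icc 1 n).sup' (Finset.nonempty_Icc.mpr hn)
        (fun k => ∑ i ∈ Finset.range k, X i ω)) :
    ∃ γ > (0 : ℝ), ∀ j : ℕ, j ≤ 2 → ∀ ε > (0 : ℝ), ∃ N : ℕ, ∀ n ≥ N,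
      ∀ t : ℝ, |t| ≤ γ * Real.sqrt n →
        ‖iteratedDeriv j
            (fun s : ℝ => ∫ ω, Complex.exp (Complex.I * (s : ℂ)
              * ((Sbar n ω / Real.sqrt n : ℝ) : ℂ)) ∂ℙ) t
          - iteratedDeriv j
            (fun s : ℝ => ∫ x, Complex.exp (Complex.I * (s : ℂ) * (x : ℂ))
              ∂(Measure.map (fun y => |y|) (gaussianReal 0 1))) t‖ ≤ ε := by
  have H := MaxWalk.lind_R hmeas hindep hident hL2 hmean hvar
  obtain ⟨γ, hγ, h⟩ := H.main
  refine ⟨γ, hγ, fun j hj ε hε => ?_⟩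
  obtain ⟨N, hN⟩ := h j hj ε hε
  refine ⟨N + 1, fun n hn t ht => ?_⟩
  have h1 := hN n (by omega) t ht
  have e1 : (fun s : ℝ => ∫ ω, Complex.exp (Complex.I * (s : ℂ)
      * ((Sbar n ω / Real.sqrt n : ℝ) : ℂ)) ∂ℙ) =
      charFun (MaxWalk.mu ℙ (X 0) (fun n => MaxWalk.R X n 1) n) := by
    funext s
    rw [MaxWalk.mu, MaxWalk.charFun_rv (H.mY n)]
    refine integral_congr_ae (.of_forall fun ω => ?_)
    simp only
    obtain ⟨m, rfl⟩ : ∃ m, n = m + 1 := ⟨n - 1, by omega⟩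
    rw [hSbar (m + 1) (by omega) ω, MaxWalk.sup_eq m (by omega) ω, Nat.add_sub_cancel]
    congr 1
    ring
  have e2 : (fun s : ℝ => ∫ x, Complex.exp (Complex.I * (s : ℂ) * (x : ℂ))
      ∂(Measure.map (fun y => |y|) (gaussianReal 0 1))) = charFun MaxWalk.nu := by
    funext s
    rw [charFun_apply_real, MaxWalk.nu]
    refine integral_congr_ae (.of_forall fun x => ?_)
    simp only
    congr 1
    ring
  rw [e1, e2]
  exact h1
end

section
/- Let X₁, X₂, … be i.i.d. real random variables with mean 0 and variance 1, and let S̄_n := max_{1≤k≤n} (X₁+…+X_k). Then S̄_n/√n converges in distribution to |Z| as n → ∞, where Z is standard normal (the Erdős–Kac limit theorem). -/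
open MeasureTheory ProbabilityTheory Filter
open scoped ENNReal

section EK
open Topology

lemma ek_gauss_cont : Continuous (fun x : ℝ => (gaussianReal 0 1).real (Set.Ici x)) := by
  have key : ∀ x y : ℝ, x ≤ y → (gaussianReal 0 1).real (Set.Ici x) =
      (gaussianReal 0 1).real (Set.Ico x y) + (gaussianReal 0 1).real (Set.Ici y) := by
    intro x y h
    rw [← measureReal_union _ measurableSet_Ici, Set.Ico_union_Ici_eq_Ici h]
    rw [Set.disjoint_left]
    intro z hz hz'
    exact absurd hz.2 (not_lt.2 hz')
  have bd : ∀ x y : ℝ, x ≤ y → (gaussianReal 0 1).real (Set.Ico x y) ≤ y - x := by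
    intro x y h
    have : gaussianReal 0 1 (Set.Ico x y) ≤ ENNReal.ofReal (y - x) := by
      rw [gaussianReal_apply _ one_ne_zero]
      calc ∫⁻ z in Set.Ico x y, gaussianPDF 0 1 z ≤ ∫⁻ z in Set.Ico x y, 1 := by
            apply lintegral_mono
            intro z
            simp only [gaussianPDF, gaussianPDFReal]
            rw [ENNReal.ofReal_le_one]
            have h1 : (√(2 * Real.pi * ((1 : NNReal) : ℝ)))⁻¹ ≤ 1 := by
              apply inv_le_one_of_one_le₀
              rw [Real.one_le_sqrt]
              have := Real.pi_gt_three
              simp; linarith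
            have h2 : Real.exp (-(z - 0) ^ 2 / (2 * ((1 : NNReal) : ℝ))) ≤ 1 := by
              rw [Real.exp_le_one_iff]
              simp
              nlinarith [sq_nonneg z]
            calc _ ≤ (1 : ℝ) * 1 := by gcongr
              _ = 1 := by norm_num
        _ = _ := by simp
    exact ENNReal.toReal_le_of_le_ofReal (by linarith) this
  refine (LipschitzWith.of_dist_le_mul (K := 1) ?_).continuous
  intro x y
  simp only [Real.dist_eq, NNReal.coe_one, one_mul]
  rcases le_total x y with h | h
  · rw [key x y h, abs_of_nonneg (by simp), abs_of_nonpos (by linarith)]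
    have := bd x y h
    linarith
  · rw [key y x h, abs_of_nonpos (by simp), abs_of_nonneg (by linarith)]
    have := bd y x h
    linarith

lemma ek_gauss_neg (x : ℝ) : (gaussianReal 0 1).real (Set.Iic (-x)) =
    (gaussianReal 0 1).real (Set.Ici x) := by
  have h := gaussianReal_map_neg (μ := 0) (v := 1)
  rw [neg_zero] at h
  conv_rhs => rw [← h]
  rw [map_measureReal_apply (by fun_prop) measurableSet_Ici]
  congr 1
  ext z
  simp

lemma ek_gauss_zero : (gaussianReal 0 1).real (Set.Ici 0) = 1 / 2 := by
  have h1 := ek_gauss_neg 0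
  have h2 : (gaussianReal 0 1).real (Set.Iio 0) = (gaussianReal 0 1).real (Set.Iic (-0)) := by
    rw [neg_zero]
    have := nullSingletonClass_gaussianReal (μ := 0) (v := 1) one_ne_zero
    exact measureReal_congr Iio_ae_eq_Iic
  have h3 : (gaussianReal 0 1).real (Set.Iio 0) + (gaussianReal 0 1).real (Set.Ici 0) = 1 := by
    rw [← measureReal_union _ measurableSet_Ici, Set.Iio_union_Ici]
    · simp
    rw [Set.disjoint_left]
    intro z hz hz'
    exact absurd (Set.mem_Iio.1 hz) (not_lt.2 hz')
  linarith

lemma ek_abs_gauss {x : ℝ} (hx : 0 < x) :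
    (Measure.map (fun y : ℝ => |y|) (gaussianReal 0 1)).real (Set.Ici x) =
      2 * (gaussianReal 0 1).real (Set.Ici x) := by
  rw [map_measureReal_apply (by fun_prop) measurableSet_Ici]
  have : (fun y : ℝ => |y|) ⁻¹' Set.Ici x = Set.Iic (-x) ∪ Set.Ici x := by
    ext z
    simp [le_abs]
    constructor
    · rintro (h | h)
      · right; exact h
      · left; linarith
    · rintro (h | h)
      · right; linarith
      · left; exact h
  rw [this, measureReal_union _ measurableSet_Ici, ek_gauss_neg]
  · ring
  rw [Set.disjoint_left]
  intro z hz hz'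
  simp at hz hz'
  linarith

variable {Ω : Type*} [MeasurableSpace Ω] {P : Measure Ω} [IsProbabilityMeasure P]
  {X : ℕ → Ω → ℝ}

/-- first passage event -/
def ekE (X : ℕ → Ω → ℝ) (a : ℝ) (k : ℕ) : Set Ω :=
  {ω | a ≤ ∑ i ∈ Finset.range k, X i ω ∧
    ∀ j ∈ Finset.Ico 1 k, ∑ i ∈ Finset.range j, X i ω < a}

/-- maximum event -/
def ekM (X : ℕ → Ω → ℝ) (a : ℝ) (n : ℕ) : Set Ω :=
  {ω | ∃ k ∈ Finset.Icc 1 n, a ≤ ∑ i ∈ Finset.range k, X i ω}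

lemma ekE_meas (hX : ∀ i, Measurable (X i)) (a : ℝ) (k : ℕ) : MeasurableSet (ekE X a k) := by
  have : ekE X a k = {ω | a ≤ ∑ i ∈ Finset.range k, X i ω} ∩
      ⋂ j ∈ Finset.Ico 1 k, {ω | ∑ i ∈ Finset.range j, X i ω < a} := by
    ext ω; simp [ekE]
  rw [this]
  refine (measurableSet_le (by fun_prop) (by fun_prop)).inter ?_
  refine Finset.measurableSet_biInter _ fun j _ => ?_
  exact measurableSet_lt (by fun_prop) (by fun_prop)

lemma ekM_eq (a : ℝ) (n : ℕ) : ekM X a n = ⋃ k ∈ Finset.Icc 1 n, ekE X a k := by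
  classical
  ext ω
  simp only [Set.mem_iUnion, exists_prop]
  constructor
  · intro h
    have h' : ∃ k, k ∈ Finset.Icc 1 n ∧ a ≤ ∑ i ∈ Finset.range k, X i ω := h
    refine ⟨Nat.find h', (Nat.find_spec h').1, (Nat.find_spec h').2, ?_⟩
    intro j hj
    have h1 := Nat.find_min h' (Finset.mem_Ico.1 hj).2
    have h2 := Finset.mem_Icc.1 (Nat.find_spec h').1
    by_contra hc
    refine h1 ⟨?_, not_lt.1 hc⟩
    rw [Finset.mem_Icc]
    rw [Finset.mem_Ico] at hj
    omega
  · rintro ⟨k, hk, h1, -⟩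
    exact ⟨k, hk, h1⟩

lemma ekM_meas (hX : ∀ i, Measurable (X i)) (a : ℝ) (n : ℕ) : MeasurableSet (ekM X a n) := by
  rw [ekM_eq]
  exact Finset.measurableSet_biUnion _ fun k _ => ekE_meas hX a k

lemma ekE_disj (a : ℝ) (n : ℕ) :
    ((Finset.Icc 1 n : Finset ℕ) : Set ℕ).PairwiseDisjoint (ekE X a) := by
  have key : ∀ i j, 1 ≤ i → i < j → Disjoint (ekE X a i) (ekE X a j) := by
    intro i j hi hij
    rw [Set.disjoint_left]
    intro ω h1 h2
    have := h2.2 i (Finset.mem_Ico.2 ⟨hi, hij⟩)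
    exact absurd h1.1 (not_le.2 this)
  intro i hi j hj hij
  simp at hi hj
  rcases lt_or_gt_of_ne hij with h | h
  · exact key i j hi.1 h
  · exact (key j i hj.1 h).symm

lemma ek_indep (hX : ∀ i, Measurable (X i)) (hi : iIndepFun X P) (a : ℝ) (k N : ℕ)
    {T : Set ℝ} (hT : MeasurableSet T) :
    P.real (ekE X a k ∩ {ω | ∑ i ∈ Finset.Ico k N, X i ω ∈ T}) =
      P.real (ekE X a k) * P.real {ω | ∑ i ∈ Finset.Ico k N, X i ω ∈ T} := by
  have hd : Disjoint (Finset.range k) (Finset.Ico k N) := by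
    rw [Finset.disjoint_left]; intro x; simp; omega
  have h := hi.indepFun_finset _ _ hd hX
  let e : Set ((Finset.range k) → ℝ) := {f | a ≤ ∑ i : Finset.range k, f i ∧
    ∀ j ∈ Finset.Ico 1 k, ∑ i : Finset.range k, (if i.1 < j then f i else 0) < a}
  let t : Set ((Finset.Ico k N) → ℝ) := {f | ∑ i, f i ∈ T}
  have he : MeasurableSet e := by
    have : e = {f | a ≤ ∑ i : Finset.range k, f i} ∩
      ⋂ j ∈ Finset.Ico 1 k,
        {f | ∑ i : Finset.range k, (if i.1 < j then f i else 0) < a} := by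
      ext ω; simp [e]
    rw [this]
    refine (measurableSet_le (by fun_prop) (by fun_prop)).inter ?_
    refine Finset.measurableSet_biInter _ fun j _ => ?_
    refine measurableSet_lt (Finset.measurable_fun_sum _ fun i _ => ?_) (by fun_prop)
    split_ifs <;> fun_prop
  have ht : MeasurableSet t := by
    have : Measurable (fun f : (Finset.Ico k N) → ℝ => ∑ i, f i) := by fun_prop
    exact this hT
  have h1 : ekE X a k = (fun ω (i : Finset.range k) => X i ω) ⁻¹' e := by
    ext ω
    simp only [ekE, e, Set.mem_ofPred_eq, Set.mem_preimage]
    rw [Finset.sum_coe_sort (Finset.range k) (fun i => X i ω)]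
    refine and_congr Iff.rfl (forall₂_congr fun j hj => ?_)
    rw [Finset.sum_coe_sort (Finset.range k) (fun i => if i < j then X i ω else 0),
      ← Finset.sum_filter]
    have : Finset.filter (fun i => i < j) (Finset.range k) = Finset.range j := by
      ext i; simp at hj ⊢; omega
    rw [this]
  have h2 : {ω | ∑ i ∈ Finset.Ico k N, X i ω ∈ T} =
      (fun ω (i : Finset.Ico k N) => X i ω) ⁻¹' t := by
    ext ω
    simp only [t, Set.mem_ofPred_eq, Set.mem_preimage]
    rw [Finset.sum_coe_sort (Finset.Ico k N) (fun i => X i ω)]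
  rw [h1, h2]
  simp only [measureReal_def, ← ENNReal.toReal_mul]
  rw [h.measure_inter_preimage_eq_mul _ _ he ht]

lemma ek_shift (hX : ∀ i, Measurable (X i)) (hi : iIndepFun X P)
    (hident : ∀ i, P.map (X i) = P.map (X 0)) (k m : ℕ)
    {T : Set ℝ} (hT : MeasurableSet T) :
    P.real {ω | ∑ i ∈ Finset.Ico k (k + m), X i ω ∈ T} =
      P.real {ω | ∑ i ∈ Finset.range m, X i ω ∈ T} := by
  have h : P.map (fun ω => ∑ i ∈ Finset.Ico k (k + m), X i ω) =
      P.map (fun ω => ∑ i ∈ Finset.range m, X i ω) := by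
    have : IsProbabilityMeasure (P.map (fun ω => ∑ i ∈ Finset.Ico k (k + m), X i ω)) :=
      Measure.isProbabilityMeasure_map (by fun_prop)
    have : IsProbabilityMeasure (P.map (fun ω => ∑ i ∈ Finset.range m, X i ω)) :=
      Measure.isProbabilityMeasure_map (by fun_prop)
    apply Measure.ext_of_charFun
    rw [(hi.restrict _).charFun_map_fun_finsetSum_eq_prod (fun i _ => (hX i).aemeasurable),
      (hi.restrict _).charFun_map_fun_finsetSum_eq_prod (fun i _ => (hX i).aemeasurable)]
    simp [hident]
  have := congrArg (fun μ => μ.real T) h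
  rwa [map_measureReal_apply (by fun_prop) hT, map_measureReal_apply (by fun_prop) hT] at this

lemma ek_sum (hX : ∀ i, Measurable (X i)) (a : ℝ) (n : ℕ) :
    P.real (ekM X a n) = ∑ k ∈ Finset.Icc 1 n, P.real (ekE X a k) := by
  rw [ekM_eq, measureReal_biUnion_finset (ekE_disj a n) (fun k _ => ekE_meas hX a k)]

lemma ek_sum2 (hX : ∀ i, Measurable (X i)) (hi : iIndepFun X P)
    (hident : ∀ i, P.map (X i) = P.map (X 0)) (a : ℝ) (n N : ℕ) (hN : n ≤ N)
    {T : Set ℝ} (hT : MeasurableSet T) :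
    P.real (⋃ k ∈ Finset.Icc 1 n, ekE X a k ∩ {ω | ∑ i ∈ Finset.Ico k N, X i ω ∈ T}) =
      ∑ k ∈ Finset.Icc 1 n, P.real (ekE X a k) *
        P.real {ω | ∑ i ∈ Finset.range (N - k), X i ω ∈ T} := by
  rw [measureReal_biUnion_finset]
  · refine Finset.sum_congr rfl fun k hk => ?_
    rw [ek_indep hX hi a k N hT, ← ek_shift hX hi hident k (N - k) hT]
    rw [Finset.mem_Icc] at hk
    rw [Nat.add_sub_cancel' (hk.2.trans hN)]
  · exact (ekE_disj a n).mono fun k => Set.inter_subset_left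
  · intro k _
    refine (ekE_meas hX a k).inter ?_
    have : Measurable (fun ω => ∑ i ∈ Finset.Ico k N, X i ω) := by fun_prop
    exact this hT

lemma ek_upper (hX : ∀ i, Measurable (X i)) (hi : iIndepFun X P)
    (hident : ∀ i, P.map (X i) = P.map (X 0)) (a : ℝ) (n N₀ : ℕ) (q : ℝ)
    (hq : ∀ m ≥ N₀, q ≤ P.real {ω | ∑ i ∈ Finset.range m, X i ω ∈ Set.Ici 0}) :
    q * P.real (ekM X a n) ≤ P.real {ω | a ≤ ∑ i ∈ Finset.range (n + N₀), X i ω} := by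
  have h := ek_sum2 hX hi hident a n (n + N₀) (by omega) (T := Set.Ici 0) measurableSet_Ici
  calc q * P.real (ekM X a n) = ∑ k ∈ Finset.Icc 1 n, P.real (ekE X a k) * q := by
        rw [ek_sum hX, Finset.mul_sum]; simp [mul_comm]
    _ ≤ _ := Finset.sum_le_sum fun k hk => mul_le_mul_of_nonneg_left
        (hq (n + N₀ - k) (by rw [Finset.mem_Icc] at hk; omega)) measureReal_nonneg
    _ = _ := h.symm
    _ ≤ _ := by
      refine measureReal_mono ?_
      intro ω hω
      simp only [Set.mem_iUnion, exists_prop] at hω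
      obtain ⟨k, hk, h1, h2⟩ := hω
      rw [Finset.mem_Icc] at hk
      simp only [Set.mem_ofPred_eq, Set.mem_Ici] at h2 ⊢
      rw [← Finset.sum_range_add_sum_Ico (fun i => X i ω) (show k ≤ n + N₀ by omega)]
      linarith [h1.1]

lemma ek_lower (hX : ∀ i, Measurable (X i)) (hi : iIndepFun X P)
    (hident : ∀ i, P.map (X i) = P.map (X 0)) (a e : ℝ) (n N₀ : ℕ) (q : ℝ)
    (ha : 0 < a) (he : 0 < e)
    (hq : ∀ m ≥ N₀, P.real {ω | ∑ i ∈ Finset.range m, X i ω ∈ Set.Ioi 0} ≤ q) :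
    P.real {ω | a + 2 * e ≤ ∑ i ∈ Finset.range (n + N₀), X i ω} ≤
    q * P.real (ekM X a n) + P.real {ω | e ≤ |∑ i ∈ Finset.range N₀, X i ω|} +
      n * P.real {ω | e ≤ |X 0 ω|} := by
  have h := ek_sum2 hX hi hident a n (n + N₀) (by omega) (T := Set.Ioi 0) measurableSet_Ioi
  have h1 : P.real (⋃ k ∈ Finset.Icc 1 n, ekE X a k ∩
      {ω | ∑ i ∈ Finset.Ico k (n + N₀), X i ω ∈ Set.Ioi 0}) ≤ q * P.real (ekM X a n) := by
    rw [h]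
    calc _ ≤ ∑ k ∈ Finset.Icc 1 n, P.real (ekE X a k) * q := by
          refine Finset.sum_le_sum fun k hk => mul_le_mul_of_nonneg_left
            (hq (n + N₀ - k) ?_) measureReal_nonneg
          rw [Finset.mem_Icc] at hk; omega
      _ = _ := by
        rw [ek_sum hX, Finset.mul_sum]; simp [mul_comm]
  have hTm : MeasurableSet {x : ℝ | e ≤ |x|} := measurableSet_le (by fun_prop) (by fun_prop)
  have h2 := ek_shift hX hi hident n N₀ hTm
  have h3 : P.real (⋃ k ∈ Finset.range n, {ω | e ≤ |X k ω|}) ≤ n * P.real {ω | e ≤ |X 0 ω|} := by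
    refine (measureReal_biUnion_finset_le _ _).trans ?_
    have : ∀ k, P.real {ω | e ≤ |X k ω|} = P.real {ω | e ≤ |X 0 ω|} := by
      intro k
      have := congrArg (fun μ => μ.real {x : ℝ | e ≤ |x|}) (hident k)
      rwa [map_measureReal_apply (by fun_prop) hTm, map_measureReal_apply (by fun_prop) hTm] at this
    simp [this]
  simp only [Set.mem_ofPred_eq] at h2
  rw [← h2]
  refine le_trans ?_ (add_le_add (add_le_add_left h1 _) h3)
  refine le_trans ?_ (add_le_add_left (measureReal_union_le _ _) _)
  refine le_trans ?_ (measureReal_union_le _ _)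
  refine measureReal_mono ?_
  intro ω hω
  by_contra hc
  simp only [Set.mem_union, not_or] at hc
  obtain ⟨⟨c1, c2⟩, c3⟩ := hc
  simp only [Set.mem_ofPred_eq, not_le, abs_lt] at c2 hω
  simp only [Set.mem_iUnion, exists_prop, not_exists, not_and, Set.mem_ofPred_eq, not_le,
    Finset.mem_range, abs_lt] at c3
  have hs := Finset.sum_range_add_sum_Ico (fun i => X i ω) (show n ≤ n + N₀ by omega)
  have hn : a + e < ∑ i ∈ Finset.range n, X i ω := by linarith
  have hn1 : 1 ≤ n := by
    rcases Nat.eq_zero_or_pos n with h0 | h0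
    · subst h0; simp at hn; linarith
    · exact h0
  have hM : ω ∈ ekM X a n := ⟨n, by simp [hn1], by linarith⟩
  rw [ekM_eq] at hM
  simp only [Set.mem_iUnion, exists_prop] at hM
  obtain ⟨k, hk, hE⟩ := hM
  have hk' := Finset.mem_Icc.1 hk
  apply c1
  simp only [Set.mem_iUnion, exists_prop]
  refine ⟨k, hk, hE, ?_⟩
  have hs2 := Finset.sum_range_add_sum_Ico (fun i => X i ω) (show k ≤ n + N₀ by omega)
  obtain ⟨l, rfl⟩ : ∃ l, k = l + 1 := ⟨k - 1, by omega⟩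
  have hlt : ∑ i ∈ Finset.range l, X i ω < a := by
    rcases Nat.eq_zero_or_pos l with h0 | h0
    · subst h0; simpa using ha
    · exact hE.2 l (by simp; omega)
  have hj := (c3 l (by omega)).2
  rw [Finset.sum_range_succ] at hs2
  simp only [Set.mem_ofPred_eq, Set.mem_Ioi]
  linarith

lemma ek_tail {Y f : Ω → ℝ} (hY : Measurable Y) (hf : Integrable f P) {c : ℝ} (hc : 0 < c) :
    Tendsto (fun n : ℕ => ∫ ω in {ω | c * √n ≤ |Y ω|}, f ω ∂P) atTop (𝓝 0) := by
  have hm : ∀ n : ℕ, MeasurableSet {ω | c * √n ≤ |Y ω|} := fun n =>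
    measurableSet_le (by fun_prop) (by fun_prop)
  simp_rw [← integral_indicator (hm _)]
  have : (0 : ℝ) = ∫ ω, (0 : ℝ) ∂P := by simp
  rw [this]
  refine tendsto_integral_of_dominated_convergence (fun ω => ‖f ω‖)
    (fun n => (hf.aestronglyMeasurable.indicator (hm n))) hf.norm
    (fun n => ae_of_all _ fun ω => norm_indicator_le_norm_self _ _) (ae_of_all _ fun ω => ?_)
  have h1 : Tendsto (fun n : ℕ => c * √n) atTop atTop :=
    (Real.tendsto_sqrt_atTop.comp tendsto_natCast_atTop_atTop).const_mul_atTop hc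
  refine tendsto_const_nhds.congr' ?_
  filter_upwards [h1.eventually_gt_atTop |Y ω|] with n hn
  rw [Set.indicator_of_notMem]
  simpa using hn

lemma ek_block {Y : Ω → ℝ} (hY : Measurable Y) {c : ℝ} (hc : 0 < c) :
    Tendsto (fun n : ℕ => P.real {ω | c * √n ≤ |Y ω|}) atTop (𝓝 0) := by
  have := ek_tail (P := P) hY (integrable_const (1 : ℝ)) hc
  simpa using this

lemma ek_jump {Y : Ω → ℝ} (hY : Measurable Y) (h2 : Integrable (fun ω => Y ω ^ 2) P)
    {c : ℝ} (hc : 0 < c) :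
    Tendsto (fun n : ℕ => n * P.real {ω | c * √n ≤ |Y ω|}) atTop (𝓝 0) := by
  have h := (ek_tail (P := P) hY h2 hc).const_mul (c ^ 2)⁻¹
  rw [mul_zero] at h
  refine squeeze_zero (fun n => by positivity) (fun n => ?_) h
  have hm : MeasurableSet {ω | c * √n ≤ |Y ω|} :=
    measurableSet_le (by fun_prop) (by fun_prop)
  rw [le_inv_mul_iff₀ (by positivity)]
  calc c ^ 2 * (n * P.real {ω | c * √n ≤ |Y ω|})
      = ∫ ω in {ω | c * √n ≤ |Y ω|}, c ^ 2 * n ∂P := by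
        rw [setIntegral_const, smul_eq_mul]; ring
    _ ≤ _ := by
      refine setIntegral_mono_on (integrable_const _).integrableOn h2.integrableOn hm ?_
      intro ω hω
      rw [← sq_abs (Y ω), ← Real.sq_sqrt (Nat.cast_nonneg n), ← mul_pow]
      exact pow_le_pow_left₀ (by positivity) hω 2

lemma ek_clt (hX : ∀ i, Measurable (X i)) (hi : iIndepFun X P)
    (hident : ∀ i, P.map (X i) = P.map (X 0)) (h0 : ∫ ω, X 0 ω ∂P = 0)
    (h1 : ∫ ω, X 0 ω ^ 2 ∂P = 1) (T : Set ℝ) (hT : MeasurableSet T) (x : ℝ)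
    (hfr : frontier T ⊆ {x}) :
    Tendsto (fun n : ℕ => P.real {ω | (√n)⁻¹ * ∑ i ∈ Finset.range n, X i ω ∈ T}) atTop
      (𝓝 ((gaussianReal 0 1).real T)) := by
  have hY : HasLaw (id : ℝ → ℝ) (gaussianReal 0 1) (gaussianReal 0 1) := HasLaw.id
  have h := tendstoInDistribution_inv_sqrt_mul_sum hY h0 (by simpa using h1) hi
    (fun i => ⟨(hX i).aemeasurable, (hX 0).aemeasurable, hident i⟩)
  have hna := nullSingletonClass_gaussianReal (μ := 0) (v := 1) one_ne_zero
  have h' := ProbabilityMeasure.tendsto_measure_of_null_frontier_of_tendsto' h.tendsto (E := T)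
    (by
      simp only [ProbabilityMeasure.coe_mk, Measure.map_id]
      exact measure_mono_null hfr (measure_singleton x))
  simp only [ProbabilityMeasure.coe_mk, Measure.map_id] at h'
  have h'' := (ENNReal.tendsto_toReal (measure_ne_top _ _)).comp h'
  refine h''.congr fun n => ?_
  simp only [Function.comp]
  rw [Measure.map_apply (by fun_prop) hT]
  rfl

lemma ek_tail_lim (hX : ∀ i, Measurable (X i)) (hi : iIndepFun X P)
    (hident : ∀ i, P.map (X i) = P.map (X 0)) (h0 : ∫ ω, X 0 ω ∂P = 0)
    (h1 : ∫ ω, X 0 ω ^ 2 ∂P = 1) (x : ℝ) (N₀ : ℕ) :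
    Tendsto (fun n : ℕ => P.real {ω | x * √(n + N₀ : ℕ) ≤ ∑ i ∈ Finset.range (n + N₀), X i ω}) atTop
      (𝓝 ((gaussianReal 0 1).real (Set.Ici x))) := by
  have h := ek_clt hX hi hident h0 h1 (Set.Ici x) measurableSet_Ici x (by simp [frontier_Ici])
  have h2 := h.comp (tendsto_add_atTop_nat N₀)
  refine h2.congr' ?_
  filter_upwards [eventually_ge_atTop 1] with n hn
  simp only [Function.comp]
  congr 1
  ext ω
  have : 0 < √((n + N₀ : ℕ) : ℝ) := Real.sqrt_pos.2 (by exact_mod_cast (by omega))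
  simp only [Set.mem_ofPred_eq, Set.mem_Ici]
  rw [le_inv_mul_iff₀ this, mul_comm]

lemma ek_half_ge (hX : ∀ i, Measurable (X i)) (hi : iIndepFun X P)
    (hident : ∀ i, P.map (X i) = P.map (X 0)) (h0 : ∫ ω, X 0 ω ∂P = 0)
    (h1 : ∫ ω, X 0 ω ^ 2 ∂P = 1) :
    Tendsto (fun n : ℕ => P.real {ω | ∑ i ∈ Finset.range n, X i ω ∈ Set.Ici 0}) atTop
      (𝓝 (1 / 2)) := by
  have h := ek_clt hX hi hident h0 h1 (Set.Ici 0) measurableSet_Ici 0 (by simp [frontier_Ici])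
  rw [ek_gauss_zero] at h
  refine h.congr' ?_
  filter_upwards [eventually_ge_atTop 1] with n hn
  congr 1
  ext ω
  have : 0 < √(n : ℝ) := Real.sqrt_pos.2 (by exact_mod_cast hn)
  simp only [Set.mem_ofPred_eq, Set.mem_Ici]
  rw [mul_nonneg_iff_of_pos_left (by positivity)]

lemma ek_half_gt (hX : ∀ i, Measurable (X i)) (hi : iIndepFun X P)
    (hident : ∀ i, P.map (X i) = P.map (X 0)) (h0 : ∫ ω, X 0 ω ∂P = 0)
    (h1 : ∫ ω, X 0 ω ^ 2 ∂P = 1) :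
    Tendsto (fun n : ℕ => P.real {ω | ∑ i ∈ Finset.range n, X i ω ∈ Set.Ioi 0}) atTop
      (𝓝 (1 / 2)) := by
  have h := ek_clt hX hi hident h0 h1 (Set.Ioi 0) measurableSet_Ioi 0 (by simp [frontier_Ioi])
  have hna := nullSingletonClass_gaussianReal (μ := 0) (v := 1) one_ne_zero
  rw [measureReal_congr Ioi_ae_eq_Ici, ek_gauss_zero] at h
  refine h.congr' ?_
  filter_upwards [eventually_ge_atTop 1] with n hn
  congr 1
  ext ω
  have : 0 < √(n : ℝ) := Real.sqrt_pos.2 (by exact_mod_cast hn)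
  simp only [Set.mem_ofPred_eq, Set.mem_Ioi]
  rw [mul_pos_iff_of_pos_left (by positivity)]

lemma ekM_anti {a b : ℝ} (h : a ≤ b) (n : ℕ) : ekM X b n ⊆ ekM X a n :=
  fun _ ⟨k, hk, hb⟩ => ⟨k, hk, h.trans hb⟩

lemma ek_main (hX : ∀ i, Measurable (X i)) (hi : iIndepFun X P)
    (hident : ∀ i, P.map (X i) = P.map (X 0)) (hsqint : Integrable (fun ω => X 0 ω ^ 2) P)
    (h0 : ∫ ω, X 0 ω ∂P = 0)
    (h1 : ∫ ω, X 0 ω ^ 2 ∂P = 1) {x : ℝ} (hx : 0 < x) :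
    Tendsto (fun n : ℕ => P.real (ekM X (x * √n) n)) atTop
      (𝓝 (2 * (gaussianReal 0 1).real (Set.Ici x))) := by
  have hc := ek_gauss_cont.tendsto x
  rw [tendsto_order]
  constructor
  · intro b hb
    rcases lt_or_ge b 0 with hb0 | hb0
    · exact Eventually.of_forall fun n => hb0.trans_le measureReal_nonneg
    -- choose r with b / 2 < r < g x
    obtain ⟨r, hr1, hr2⟩ := exists_between (show b / 2 < (gaussianReal 0 1).real (Set.Ici x) by linarith)
    -- choose y > x
    have hy := ((tendsto_order.1 hc).1 r hr2).filter_mono (nhdsWithin_le_nhds (s := Set.Ioi x))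
    obtain ⟨y, hy1, hy2⟩ := (hy.and self_mem_nhdsWithin).exists
    have hxy : x < y := hy2
    -- choose q > 1/2 with q b < r
    obtain ⟨q, hq1, hq2⟩ : ∃ q : ℝ, 1 / 2 < q ∧ q * b < r := by
      rcases hb0.eq_or_lt with h | h
      · refine ⟨1, by norm_num, by rw [← h] at hr1 ⊢; linarith⟩
      · obtain ⟨q, hq1, hq2⟩ := exists_between (show 1 / 2 < r / b by
          rw [lt_div_iff₀ h]; linarith)
        exact ⟨q, hq1, by rwa [lt_div_iff₀ h] at hq2⟩
    obtain ⟨N₀, hN⟩ := eventually_atTop.1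
      ((tendsto_order.1 (ek_half_gt hX hi hident h0 h1)).2 q hq1)
    have hN' : ∀ m ≥ N₀, P.real {ω | ∑ i ∈ Finset.range m, X i ω ∈ Set.Ioi 0} ≤ q :=
      fun m hm => (hN m hm).le
    set e : ℝ := (y - x) / 2 with he
    have he0 : 0 < e := by rw [he]; linarith
    have hYm : Measurable (fun ω => ∑ i ∈ Finset.range N₀, X i ω) := by fun_prop
    have hlim := ((ek_tail_lim hX hi hident h0 h1 y N₀).sub
      (ek_block (P := P) hYm he0)).sub (ek_jump (P := P) (hX 0) hsqint he0)
    simp only [sub_zero] at hlim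
    filter_upwards [(tendsto_order.1 hlim).1 r hy1, eventually_ge_atTop 1] with n hn hn1
    have hs : 0 < √(n : ℝ) := Real.sqrt_pos.2 (by exact_mod_cast hn1)
    have hl := ek_lower hX hi hident (x * √n) (e * √n) n N₀ q (by positivity) (by positivity) hN'
    have hmono : P.real {ω | y * √(n + N₀ : ℕ) ≤ ∑ i ∈ Finset.range (n + N₀), X i ω} ≤
        P.real {ω | x * √n + 2 * (e * √n) ≤ ∑ i ∈ Finset.range (n + N₀), X i ω} := by
      refine measureReal_mono fun ω hω => ?_
      rw [Set.mem_ofPred_eq] at hω ⊢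
      refine le_trans ?_ hω
      have : √(n : ℝ) ≤ √((n + N₀ : ℕ) : ℝ) := Real.sqrt_le_sqrt (by push_cast; simp)
      have h3 : x * √n + 2 * (e * √n) = y * √n := by rw [he]; ring
      rw [h3]
      exact mul_le_mul_of_nonneg_left this (by linarith)
    have : q * b < q * P.real (ekM X (x * √n) n) := by linarith
    exact lt_of_mul_lt_mul_left this (by linarith)
  · intro b hb
    obtain ⟨r, hr1, hr2⟩ := exists_between (show (gaussianReal 0 1).real (Set.Ici x) < b / 2 by linarith)
    have hr0 : 0 < r := lt_of_le_of_lt measureReal_nonneg hr1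
    have hb0 : 0 < b := by linarith
    have hy := ((tendsto_order.1 hc).2 r hr1).filter_mono (nhdsWithin_le_nhds (s := Set.Iio x))
    obtain ⟨y, ⟨hy1, hy2⟩, hy3⟩ := ((hy.and self_mem_nhdsWithin).and
      ((lt_mem_nhds hx).filter_mono (nhdsWithin_le_nhds (s := Set.Iio x)))).exists
    have hxy : y < x := hy2
    obtain ⟨q, hq1, hq2⟩ := exists_between (show r / b < 1 / 2 by
          rw [div_lt_iff₀ hb0]; linarith)
    have hq0 : 0 < q := lt_trans (by positivity) hq1
    rw [div_lt_iff₀ hb0] at hq1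
    obtain ⟨N₀, hN⟩ := eventually_atTop.1
      ((tendsto_order.1 (ek_half_ge hX hi hident h0 h1)).1 q hq2)
    have hev : ∀ᶠ n : ℕ in atTop, y * √(n + N₀ : ℕ) ≤ x * √n := by
      have hd : 0 < x ^ 2 - y ^ 2 := by nlinarith
      have ht : Tendsto (fun n : ℕ => (x ^ 2 - y ^ 2) * (n : ℝ)) atTop atTop :=
        tendsto_natCast_atTop_atTop.const_mul_atTop hd
      filter_upwards [ht.eventually_ge_atTop (y ^ 2 * N₀)] with n hn
      refine abs_le_of_sq_le_sq' ?_ (by positivity) |>.2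
      rw [mul_pow, mul_pow, Real.sq_sqrt (by positivity), Real.sq_sqrt (by positivity)]
      push_cast
      linarith
    filter_upwards [(tendsto_order.1 (ek_tail_lim hX hi hident h0 h1 y N₀)).2 r hy1, hev] with n hn hn2
    have hu := ek_upper hX hi hident (y * √(n + N₀ : ℕ)) n N₀ q (fun m hm => (hN m hm).le)
    have hm : P.real (ekM X (x * √n) n) ≤ P.real (ekM X (y * √(n + N₀ : ℕ)) n) :=
      measureReal_mono (ekM_anti hn2 n)
    have := mul_le_mul_of_nonneg_left hm hq0.le
    exact lt_of_mul_lt_mul_left (a := q) (by linarith) hq0.le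

lemma ek_weak {μs : ℕ → ProbabilityMeasure ℝ}
    (h : ∀ x : ℝ, 0 < x → Tendsto (fun n => (μs n : Measure ℝ).real (Set.Ici x)) atTop
      (𝓝 (2 * (gaussianReal 0 1).real (Set.Ici x)))) (ν : ProbabilityMeasure ℝ)
    (hν : (ν : Measure ℝ) = Measure.map (fun y : ℝ => |y|) (gaussianReal 0 1)) :
    Tendsto μs atTop (𝓝 ν) := by
  have hall : ∀ x : ℝ, Tendsto (fun n => (μs n : Measure ℝ).real (Set.Ici x)) atTop
      (𝓝 ((ν : Measure ℝ).real (Set.Ici x))) := by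
    intro x
    rcases lt_or_ge 0 x with hx | hx
    · rw [hν, ek_abs_gauss hx]; exact h x hx
    · have h1 : (ν : Measure ℝ).real (Set.Ici x) = 1 := by
        rw [hν, map_measureReal_apply (by fun_prop) measurableSet_Ici]
        have : (fun y : ℝ => |y|) ⁻¹' Set.Ici x = Set.univ := by
          ext z; simp; exact hx.trans (abs_nonneg z)
        rw [this]; simp
      rw [h1, tendsto_order]
      refine ⟨fun b hb => ?_, fun b hb => Eventually.of_forall fun n =>
        lt_of_le_of_lt measureReal_le_one hb⟩
      have hc := (ek_gauss_cont.tendsto 0).const_mul 2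
      rw [ek_gauss_zero] at hc
      have hc' := ((tendsto_order.1 hc).1 b (by linarith)).filter_mono
        (nhdsWithin_le_nhds (s := Set.Ioi 0))
      obtain ⟨y, hy1, hy2⟩ := (hc'.and self_mem_nhdsWithin).exists
      filter_upwards [(tendsto_order.1 (h y hy2)).1 b hy1] with n hn
      refine hn.trans_le (measureReal_mono ?_)
      exact Set.Ici_subset_Ici.2 (hx.trans (le_of_lt hy2))
  have hIco : ∀ (m : ProbabilityMeasure ℝ) (a b : ℝ), a < b →
      ((m (Set.Ico a b) : NNReal) : ℝ) = (m : Measure ℝ).real (Set.Ici a) - (m : Measure ℝ).real (Set.Ici b) := by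
    intro m a b hab
    have : (m : Measure ℝ).real (Set.Ici a) =
      (m : Measure ℝ).real (Set.Ico a b) + (m : Measure ℝ).real (Set.Ici b) := by
      rw [← measureReal_union _ measurableSet_Ici, Set.Ico_union_Ici_eq_Ici hab.le]
      rw [Set.disjoint_left]
      intro z hz hz'
      exact absurd hz.2 (not_lt.2 hz')
    rw [this, add_sub_cancel_right]
    rfl
  refine IsPiSystem.tendsto_probabilityMeasure_of_tendsto_of_mem
    (isPiSystem_Ico (id : ℝ → ℝ) id) ?_ ?_ ?_
  · rintro s ⟨a, b, -, rfl⟩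
    exact measurableSet_Ico
  · intro u hu x hx
    obtain ⟨ε, hε, hb⟩ := Metric.isOpen_iff.1 hu x hx
    refine ⟨Set.Ico (x - ε / 2) (x + ε / 2), ⟨x - ε / 2, x + ε / 2, by simp; linarith, rfl⟩,
      Ico_mem_nhds (by linarith) (by linarith), ?_⟩
    refine subset_trans ?_ hb
    rw [Real.ball_eq_Ioo]
    intro z hz
    exact ⟨by linarith [hz.1], by linarith [hz.2]⟩
  · rintro s ⟨a, b, hab, rfl⟩
    rw [← NNReal.tendsto_coe]
    simp only [id] at hab ⊢
    simp_rw [hIco _ a b hab]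
    exact (hall a).sub (hall b)

end EK

/-- The Erdős–Kac limit theorem: if `X 0, X 1, …` are i.i.d. with mean `0` and
variance `1`, and `Sbar n = max_{1 ≤ k ≤ n} (X 0 + ⋯ + X (k-1))`, then
`Sbar n / √n` converges in distribution to `|Z|`, where `Z` is standard normal;
convergence in distribution is expressed by testing against all bounded
continuous functions. -/
theorem stmt13 {Ω : Type*} [MeasureSpace Ω] [IsProbabilityMeasure (ℙ : Measure Ω)]
    (X : ℕ → Ω → ℝ) (hmeas : ∀ i, Measurable (X i))
    (hindep : iIndepFun X ℙ)
    (hident : ∀ i, Measure.map (X i) ℙ = Measure.map (X 0) ℙ)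
    (hL2 : MemLp (X 0) 2 ℙ)
    (hmean : ∫ ω, X 0 ω ∂ℙ = 0)
    (hvar : ∫ ω, (X 0 ω) ^ 2 ∂ℙ = 1)
    (Sbar : ℕ → Ω → ℝ)
    (hSbar : ∀ n, ∀ hn : 1 ≤ n, ∀ ω, Sbar n ω =
      (Finset.Icc 1 n).sup' (Finset.nonempty_Icc.mpr hn)
        (fun k => ∑ i ∈ Finset.range k, X i ω)) :
    ∀ φ : BoundedContinuousFunction ℝ ℝ,
      Tendsto (fun n => ∫ ω, φ (Sbar n ω / Real.sqrt n) ∂ℙ) atTop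
        (nhds (∫ x, φ x ∂(Measure.map (fun y => |y|) (gaussianReal 0 1)))) := by
  intro φ
  have hSm : ∀ k, Measurable (fun ω => ∑ i ∈ Finset.range k, X i ω) := fun k => by fun_prop
  have hmeasM : ∀ n : ℕ, Measurable (fun ω => Sbar (n + 1) ω / Real.sqrt (n + 1 : ℕ)) := by
    intro n
    refine Measurable.div_const ?_ _
    have : Sbar (n + 1) = (Finset.Icc 1 (n + 1)).sup' (Finset.nonempty_Icc.mpr (by omega))
        (fun k ω => ∑ i ∈ Finset.range k, X i ω) := by
      ext ω
      rw [hSbar (n + 1) (by omega) ω, Finset.sup'_apply]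
    rw [this]
    exact Finset.measurable_sup' _ fun k _ => hSm k
  have hmain := fun (x : ℝ) (hx : 0 < x) =>
    (ek_main (P := ℙ) hmeas hindep hident hL2.integrable_sq hmean hvar hx).comp
      (tendsto_add_atTop_nat 1)
  have hw := ek_weak (μs := fun n => ⟨Measure.map (fun ω => Sbar (n + 1) ω / Real.sqrt (n + 1 : ℕ)) ℙ,
      Measure.isProbabilityMeasure_map (hmeasM n).aemeasurable⟩)
    (fun x hx => (hmain x hx).congr fun n => by
      simp only [Function.comp, ProbabilityMeasure.coe_mk]
      rw [map_measureReal_apply (hmeasM n) measurableSet_Ici]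
      congr 1
      ext ω
      have hs : 0 < Real.sqrt ((n + 1 : ℕ) : ℝ) := Real.sqrt_pos.2 (by positivity)
      simp only [Set.mem_preimage, Set.mem_Ici]
      rw [le_div_iff₀ hs, hSbar (n + 1) (by omega) ω, Finset.le_sup'_iff]
      rfl)
    ⟨Measure.map (fun y : ℝ => |y|) (gaussianReal 0 1),
      Measure.isProbabilityMeasure_map (by fun_prop)⟩ rfl
  have h := (ProbabilityMeasure.tendsto_iff_forall_integral_tendsto.1 hw) φ
  simp only [ProbabilityMeasure.coe_mk] at h
  rw [← tendsto_add_atTop_iff_nat 1]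
  refine h.congr fun n => ?_
  rw [integral_map (hmeasM n).aemeasurable φ.continuous.aestronglyMeasurable]
end

section
/- Let X₁, X₂, … be i.i.d. real random variables with E[X₁²] < ∞, S_n := X₁+…+X_n, S̄_n := max_{1≤k≤n} S_k, and let x⁺ := max(x,0). Then for every n ≥ 1, E[(S̄_n⁺)²] = Σ_{k≥1, l≥1, k+l≤n} (1/(k·l))·E[S_k⁺]·E[S_l⁺] + Σ_{k=1}^{n} (1/k)·E[(S_k⁺)²]. -/
open MeasureTheory ProbabilityTheory Filter
open scoped ENNReal

namespace Spitzer

/-- Law of the positive part. -/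
noncomputable def pp (A : Measure ℝ) : Measure ℝ := A.map (fun x => max x 0)

/-- Convolution powers. -/
noncomputable def mp (μ : Measure ℝ) : ℕ → Measure ℝ
  | 0 => Measure.dirac 0
  | n + 1 => μ ∗ mp μ n

/-- Laws of the Lindley recursion. -/
noncomputable def w (μ : Measure ℝ) : ℕ → Measure ℝ
  | 0 => Measure.dirac 0
  | n + 1 => pp (μ ∗ w μ n)

lemma meas_pos : Measurable (fun x : ℝ => max x 0) := by fun_prop

instance (A : Measure ℝ) [IsProbabilityMeasure A] : IsProbabilityMeasure (pp A) :=
  Measure.isProbabilityMeasure_map meas_pos.aemeasurable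

instance inst_mp (μ : Measure ℝ) [IsProbabilityMeasure μ] (n : ℕ) :
    IsProbabilityMeasure (mp μ n) := by
  induction n with
  | zero => unfold mp; infer_instance
  | succ n ih => unfold mp; infer_instance

instance inst_w (μ : Measure ℝ) [IsProbabilityMeasure μ] (n : ℕ) :
    IsProbabilityMeasure (w μ n) := by
  induction n with
  | zero => unfold w; infer_instance
  | succ n ih => unfold w; infer_instance

lemma lintegral_pp (A : Measure ℝ) {f : ℝ → ℝ≥0∞} (hf : Measurable f) :
    ∫⁻ x, f x ∂(pp A) = ∫⁻ x, f (max x 0) ∂A := by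
  rw [pp, lintegral_map hf meas_pos]

lemma lcp {A B : Measure ℝ} {f : ℝ → ℝ≥0∞} (hf : Measurable f) :
    ∫⁻ z, f z ∂(A ∗ B) = ∫⁻ z, f (z.1 + z.2) ∂(A.prod B) := by
  rw [Measure.conv, lintegral_map hf (by fun_prop)]

lemma rota_baxter (A B : Measure ℝ) [IsProbabilityMeasure A] [IsProbabilityMeasure B] :
    pp A ∗ pp B + pp (A ∗ B) = pp (A ∗ pp B) + pp (pp A ∗ B) := by
  refine Measure.ext_of_lintegral _ fun f hf => ?_
  rw [lintegral_add_measure, lintegral_add_measure, lintegral_pp _ hf, lintegral_pp _ hf,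
    lintegral_pp _ hf]
  have hf1 : Measurable fun x : ℝ => f (max x 0) := hf.comp meas_pos
  rw [lcp hf, lcp hf1,
    lcp hf1, lcp hf1]
  have h1 : (pp A).prod (pp B) = (A.prod B).map (Prod.map (fun x => max x 0) (fun x => max x 0)) :=
    Measure.map_prod_map _ _ meas_pos meas_pos
  have h2 : A.prod (pp B) = (A.prod B).map (Prod.map id (fun x => max x 0)) := by
    have := Measure.map_prod_map A B measurable_id meas_pos
    rwa [Measure.map_id] at this
  have h3 : (pp A).prod B = (A.prod B).map (Prod.map (fun x => max x 0) id) := by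
    have := Measure.map_prod_map A B meas_pos measurable_id
    rwa [Measure.map_id] at this
  rw [h1, h2, h3, lintegral_map (by fun_prop) (by fun_prop),
    lintegral_map (by fun_prop) (by fun_prop), lintegral_map (by fun_prop) (by fun_prop),
    ← lintegral_add_left (by fun_prop), ← lintegral_add_left (by fun_prop)]
  refine lintegral_congr fun z => ?_
  obtain ⟨x, y⟩ := z
  simp only [Prod.map_apply, id]
  rcases le_total x 0 with hx | hx <;> rcases le_total y 0 with hy | hy
  · simp [hx, hy, add_nonpos hx hy]
  · simp [hx, hy, add_comm]
  · simp [hx, hy]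
  · simp [hx, hy, add_nonneg hx hy]

lemma conv_sum (μ : Measure ℝ) [IsProbabilityMeasure μ] (F : ℕ → Measure ℝ) (n : ℕ)
    (hF : ∀ k < n, IsProbabilityMeasure (F k)) :
    IsFiniteMeasure (∑ k ∈ Finset.range n, F k) ∧
    pp (μ ∗ ∑ k ∈ Finset.range n, F k) = ∑ k ∈ Finset.range n, pp (μ ∗ F k) := by
  induction n with
  | zero => simp [pp]; infer_instance
  | succ n ih =>
    obtain ⟨h1, h2⟩ := ih fun k hk => hF k (by omega)
    have := hF n (by omega)
    rw [Finset.sum_range_succ, Finset.sum_range_succ]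
    refine ⟨inferInstance, ?_⟩
    rw [Measure.conv_add, ← h2, pp, Measure.map_add _ _ meas_pos]; rfl

lemma cancel {A B C : Measure ℝ} [IsFiniteMeasure C] (h : A + C = B + C) : A = B := by
  ext s hs
  have := congrArg (fun m : Measure ℝ => m s) h
  simp only [Measure.add_apply] at this
  exact (ENNReal.add_left_inj (measure_ne_top C s)).1 this

lemma pp_w (μ : Measure ℝ) (n : ℕ) : pp (μ ∗ w μ n) = w μ (n + 1) := rfl

lemma recur (μ : Measure ℝ) [IsProbabilityMeasure μ] (n : ℕ) :
    (∑ _k ∈ Finset.range n, w μ n) = ∑ k ∈ Finset.range n, pp (mp μ (k + 1)) ∗ w μ (n - 1 - k) := by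
  induction n with
  | zero => simp
  | succ n ih =>
    set H : ℕ → Measure ℝ := fun k => pp (mp μ (k + 1) ∗ w μ (n - k)) with hH
    have key : ∀ k ∈ Finset.range n, pp (mp μ (k + 1)) ∗ w μ (n - k) + H (k + 1)
        = H k + pp (μ ∗ (pp (mp μ (k + 1)) ∗ w μ (n - 1 - k))) := by
      intro k hk
      have hk := Finset.mem_range.1 hk
      have e : n - k = (n - 1 - k) + 1 := by omega
      have e2 : n - (k + 1) = n - 1 - k := by omega
      have rb := rota_baxter (mp μ (k + 1)) (μ ∗ w μ (n - 1 - k))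
      rw [pp_w] at rb
      simp only [hH]
      rw [e2, e]
      convert rb using 3
      · rw [← Measure.conv_assoc, Measure.conv_comm _ μ]; rfl
      · rw [← Measure.conv_assoc, ← Measure.conv_assoc, Measure.conv_comm _ μ]
    have hs := Finset.sum_congr rfl key
    rw [Finset.sum_add_distrib, Finset.sum_add_distrib,
      ← (conv_sum μ (fun k => pp (mp μ (k + 1)) ∗ w μ (n - 1 - k)) n
        (fun k _ => inferInstance)).2, ← ih,
      (conv_sum μ (fun _ => w μ n) n (fun k _ => inferInstance)).2] at hs
    simp only [pp_w] at hs
    have hfin := (conv_sum μ (fun k => H (k + 1)) n (fun k _ => by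
      simp only [hH]; infer_instance)).1
    refine cancel (C := ∑ k ∈ Finset.range n, H (k + 1)) ?_
    rw [Finset.sum_range_succ, Finset.sum_range_succ, Nat.add_sub_cancel]
    have hlast : pp (mp μ (n + 1)) ∗ w μ (n - n) = H n := by
      simp only [hH, Nat.sub_self, w, Measure.conv_dirac_zero]
    have h0 : H 0 = w μ (n + 1) := by
      simp only [hH, mp, Nat.sub_zero, Measure.conv_dirac_zero, pp_w]
    have h4 : ∑ k ∈ Finset.range n, H k + H n
        = ∑ k ∈ Finset.range n, H (k + 1) + w μ (n + 1) := by
      rw [← Finset.sum_range_succ, Finset.sum_range_succ', h0]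
    rw [hlast, add_right_comm _ (H n), hs, add_right_comm _ _ (H n), h4]
    abel

/-! Moments -/

lemma memLp_conv {A B : Measure ℝ} [IsProbabilityMeasure A] [IsProbabilityMeasure B]
    (hA : MemLp id 2 A) (hB : MemLp id 2 B) : MemLp id 2 (A ∗ B) := by
  rw [Measure.conv, memLp_map_measure_iff (by fun_prop) (by fun_prop)]
  exact (hA.comp_fst B).add (hB.comp_snd A)

lemma memLp_pp {A : Measure ℝ} (hA : MemLp id 2 A) : MemLp id 2 (pp A) := by
  rw [pp, memLp_map_measure_iff (by fun_prop) (by fun_prop)]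
  refine hA.mono (by fun_prop) (ae_of_all _ fun x => ?_)
  simp only [Function.comp, id, Real.norm_eq_abs]
  rcases le_total x 0 with h | h <;> simp [h]

lemma memLp_mp {μ : Measure ℝ} [IsProbabilityMeasure μ] (h : MemLp id 2 μ) (n : ℕ) :
    MemLp id 2 (mp μ n) := by
  induction n with
  | zero =>
    exact (memLp_const (0:ℝ)).ae_eq (by simp [mp, EventuallyEq, ae_dirac_eq])
  | succ n ih => exact memLp_conv h ih

lemma memLp_w {μ : Measure ℝ} [IsProbabilityMeasure μ] (h : MemLp id 2 μ) (n : ℕ) :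
    MemLp id 2 (w μ n) := by
  induction n with
  | zero => exact memLp_mp h 0
  | succ n ih => exact memLp_pp (memLp_conv h ih)

lemma int1 {A B : Measure ℝ} [IsProbabilityMeasure A] [IsProbabilityMeasure B]
    (hA : MemLp id 2 A) (hB : MemLp id 2 B) :
    ∫ x, x ∂(A ∗ B) = ∫ x, x ∂A + ∫ x, x ∂B := by
  have a1 := (hA.comp_fst B).integrable one_le_two
  have b1 := (hB.comp_snd A).integrable one_le_two
  simp only [id] at a1 b1
  rw [Measure.conv, integral_map (by fun_prop) (by fun_prop), integral_add a1 b1,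
    integral_fun_fst (fun x => x), integral_fun_snd (fun x => x)]
  simp

lemma int2 {A B : Measure ℝ} [IsProbabilityMeasure A] [IsProbabilityMeasure B]
    (hA : MemLp id 2 A) (hB : MemLp id 2 B) :
    ∫ x, x ^ 2 ∂(A ∗ B) = ∫ x, x ^ 2 ∂A + 2 * (∫ x, x ∂A) * (∫ x, x ∂B) + ∫ x, x ^ 2 ∂B := by
  have a1 := (hA.comp_fst B).integrable_sq
  have b1 := (hB.comp_snd A).integrable_sq
  have c1 : Integrable (fun z : ℝ × ℝ => z.1 * z.2) (A.prod B) :=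
    (hA.integrable one_le_two).mul_prod (hB.integrable one_le_two)
  simp only [id] at a1 b1
  rw [Measure.conv, integral_map (by fun_prop) (by fun_prop)]
  have e : ∀ z : ℝ × ℝ, (z.1 + z.2) ^ 2 = z.1 ^ 2 + 2 * (z.1 * z.2) + z.2 ^ 2 := fun z => by ring
  simp_rw [e]
  have d1 : Integrable (fun z : ℝ × ℝ => z.1 ^ 2 + 2 * (z.1 * z.2)) (A.prod B) :=
    a1.add (c1.const_mul 2)
  rw [integral_add d1 b1, integral_add a1 (c1.const_mul 2),
    integral_const_mul, integral_prod_mul (fun x => x) (fun x => x),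
    integral_fun_fst (fun x => x ^ 2), integral_fun_snd (fun x => x ^ 2)]
  simp [mul_assoc]

lemma solve (a b m1 m2 : ℕ → ℝ) (h10 : m1 0 = 0) (h20 : m2 0 = 0)
    (h1 : ∀ n : ℕ, (n : ℝ) * m1 n = ∑ k ∈ Finset.range n, (a (k + 1) + m1 (n - 1 - k)))
    (h2 : ∀ n : ℕ, (n : ℝ) * m2 n = ∑ k ∈ Finset.range n,
      (b (k + 1) + 2 * a (k + 1) * m1 (n - 1 - k) + m2 (n - 1 - k))) (n : ℕ) :
    m2 n = (∑ k ∈ Finset.Icc 1 n, ∑ l ∈ Finset.Icc 1 (n - k),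
            (1 / ((k : ℝ) * (l : ℝ))) * a k * a l)
          + ∑ k ∈ Finset.Icc 1 n, (1 / (k : ℝ)) * b k := by
  have d1 : ∀ n : ℕ, m1 (n + 1) = m1 n + a (n + 1) / ((n : ℝ) + 1) := by
    intro n
    have e1 := h1 (n + 1)
    have e0 := h1 n
    rw [Finset.sum_add_distrib, Finset.sum_range_reflect (fun j => m1 j)] at e1 e0
    rw [Finset.sum_range_succ, Finset.sum_range_succ (fun j => m1 j)] at e1
    push_cast at e1
    have : (n : ℝ) + 1 ≠ 0 := by positivity
    field_simp
    linarith
  have d2 : ∀ n : ℕ, ((n : ℝ) + 1) * (m2 (n + 1) - m2 n) = b (n + 1) +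
      2 * ∑ k ∈ Finset.range n, a (k + 1) * (a (n - k) / ((n - k : ℕ) : ℝ)) := by
    intro n
    have e1 := h2 (n + 1)
    have e0 := h2 n
    rw [Finset.sum_add_distrib, Finset.sum_range_reflect (fun j => m2 j),
      Finset.sum_add_distrib] at e1 e0
    rw [Finset.sum_range_succ, Finset.sum_range_succ (fun j => m2 j),
      Finset.sum_range_succ (fun k => 2 * a (k + 1) * m1 (n + 1 - 1 - k))] at e1
    push_cast at e1
    have : ∑ k ∈ Finset.range n, 2 * a (k + 1) * m1 (n - k)
        = ∑ k ∈ Finset.range n, 2 * a (k + 1) * m1 (n - 1 - k)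
          + 2 * ∑ k ∈ Finset.range n, a (k + 1) * (a (n - k) / ((n - k : ℕ) : ℝ)) := by
      rw [Finset.mul_sum, ← Finset.sum_add_distrib]
      refine Finset.sum_congr rfl fun k hk => ?_
      have hk := Finset.mem_range.1 hk
      obtain ⟨j, rfl⟩ : ∃ j, n = k + 1 + j := ⟨n - (k + 1), by omega⟩
      have e1 : k + 1 + j - k = j + 1 := by omega
      have e2 : k + 1 + j - 1 - k = j := by omega
      rw [e1, e2, d1 j]
      push_cast
      ring
    rw [this] at e1
    have z : n - n = 0 := by omega
    rw [z, h10] at e1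
    linarith
  have sym : ∀ n : ℕ, 2 * ∑ k ∈ Finset.range n, a (k + 1) * (a (n - k) / ((n - k : ℕ) : ℝ))
      = ((n : ℝ) + 1) * ∑ k ∈ Finset.range n,
        (1 / (((k + 1 : ℕ) : ℝ) * ((n - k : ℕ) : ℝ))) * a (k + 1) * a (n - k) := by
    intro n
    rw [two_mul]
    nth_rewrite 1 [← Finset.sum_range_reflect]
    rw [← Finset.sum_add_distrib, Finset.mul_sum]
    refine Finset.sum_congr rfl fun k hk => ?_
    have hk := Finset.mem_range.1 hk
    obtain ⟨j, rfl⟩ : ∃ j, n = k + 1 + j := ⟨n - (k + 1), by omega⟩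
    have e1 : k + 1 + j - (k + 1 + j - 1 - k) = k + 1 := by omega
    have e2 : k + 1 + j - 1 - k = j := by omega
    have e3 : k + 1 + j - k = j + 1 := by omega
    rw [e1, e2, e3]
    push_cast
    have : (k : ℝ) + 1 ≠ 0 := by positivity
    have : (j : ℝ) + 1 ≠ 0 := by positivity
    field_simp
    ring
  have icc : ∀ (f : ℕ → ℝ) (n : ℕ),
      ∑ k ∈ Finset.Icc 1 n, f k = ∑ k ∈ Finset.range n, f (k + 1) := by
    intro f n
    rw [Finset.range_eq_Ico, Finset.sum_Ico_add' f 0 n 1]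
    rfl
  simp only [icc]
  induction n with
  | zero => simp [h20]
  | succ n ih =>
    rw [Finset.sum_range_succ, Finset.sum_range_succ (fun k => 1 / ((k + 1 : ℕ) : ℝ) * b (k + 1))]
    have hd : ∑ k ∈ Finset.range n, ∑ l ∈ Finset.range (n + 1 - (k + 1)),
          1 / (((k + 1 : ℕ) : ℝ) * ((l + 1 : ℕ) : ℝ)) * a (k + 1) * a (l + 1)
        = ∑ k ∈ Finset.range n, ∑ l ∈ Finset.range (n - (k + 1)),
          1 / (((k + 1 : ℕ) : ℝ) * ((l + 1 : ℕ) : ℝ)) * a (k + 1) * a (l + 1)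
          + ∑ k ∈ Finset.range n,
        (1 / (((k + 1 : ℕ) : ℝ) * ((n - k : ℕ) : ℝ))) * a (k + 1) * a (n - k) := by
      rw [← Finset.sum_add_distrib]
      refine Finset.sum_congr rfl fun k hk => ?_
      have hk := Finset.mem_range.1 hk
      have e1 : n + 1 - (k + 1) = (n - (k + 1)) + 1 := by omega
      have e2 : n - k = (n - (k + 1)) + 1 := by omega
      rw [e1, e2, Finset.sum_range_succ]
    have z : n + 1 - (n + 1) = 0 := by omega
    rw [hd, z, Finset.range_zero, Finset.sum_empty]
    have e := d2 n
    rw [sym] at e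
    have hn : (n : ℝ) + 1 ≠ 0 := by positivity
    have e' : m2 (n + 1) - m2 n = b (n + 1) / ((n : ℝ) + 1) + ∑ k ∈ Finset.range n,
        (1 / (((k + 1 : ℕ) : ℝ) * ((n - k : ℕ) : ℝ))) * a (k + 1) * a (n - k) := by
      apply mul_left_cancel₀ hn
      rw [e, mul_add, mul_div_cancel₀ _ hn]
    have e3 : 1 / ((n + 1 : ℕ) : ℝ) * b (n + 1) = b (n + 1) / ((n : ℝ) + 1) := by
      push_cast; ring
    rw [e3]
    linarith

lemma moments {μ : Measure ℝ} [IsProbabilityMeasure μ] (h : MemLp id 2 μ) (n : ℕ) :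
    ∫ x, x ^ 2 ∂(w μ n) = (∑ k ∈ Finset.Icc 1 n, ∑ l ∈ Finset.Icc 1 (n - k),
            (1 / ((k : ℝ) * (l : ℝ))) * (∫ x, x ∂(pp (mp μ k))) * (∫ x, x ∂(pp (mp μ l))))
          + ∑ k ∈ Finset.Icc 1 n, (1 / (k : ℝ)) * ∫ x, x ^ 2 ∂(pp (mp μ k)) := by
  have hp := fun k => memLp_pp (memLp_mp h k)
  have hw := fun k => memLp_w h k
  have hc := fun k l => memLp_conv (hp k) (hw l)
  refine solve (fun k => ∫ x, x ∂(pp (mp μ k))) (fun k => ∫ x, x ^ 2 ∂(pp (mp μ k)))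
    (fun k => ∫ x, x ∂(w μ k)) (fun k => ∫ x, x ^ 2 ∂(w μ k)) ?_ ?_ ?_ ?_ n
  · simp [w]
  · simp [w]
  · intro n
    have := congrArg (fun m => ∫ x, x ∂m) (recur μ n)
    rw [integral_finsetSum_measure (f := fun x : ℝ => x) fun i _ => (hw n).integrable one_le_two,
      integral_finsetSum_measure (f := fun x : ℝ => x) fun i _ => (hc _ _).integrable one_le_two,
      Finset.sum_const, Finset.card_range, nsmul_eq_mul] at this
    rw [this]
    exact Finset.sum_congr rfl fun k _ => int1 (hp _) (hw _)
  · intro n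
    have := congrArg (fun m => ∫ x, x ^ 2 ∂m) (recur μ n)
    rw [integral_finsetSum_measure (f := fun x : ℝ => x ^ 2) fun i _ => (hw n).integrable_sq,
      integral_finsetSum_measure (f := fun x : ℝ => x ^ 2) fun i _ => (hc _ _).integrable_sq,
      Finset.sum_const, Finset.card_range, nsmul_eq_mul] at this
    rw [this]
    exact Finset.sum_congr rfl fun k _ => int2 (hp _) (hw _)

/-! Laws -/

/-- The maximum of zero and the first partial sums, by the Lindley recursion. -/
noncomputable def lind : ℕ → (ℕ → ℝ) → ℝ
  | 0, _ => 0
  | n + 1, y => max (y 0 + lind n (fun i => y (i + 1))) 0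

lemma lind_le (n : ℕ) : ∀ (y : ℕ → ℝ) (c : ℝ),
    lind n y ≤ c ↔ ∀ k ≤ n, ∑ i ∈ Finset.range k, y i ≤ c := by
  induction n with
  | zero => intro y c; simp [lind]
  | succ n ih =>
    intro y c
    rw [lind, max_le_iff, ← le_sub_iff_add_le', ih]
    constructor
    · rintro ⟨h1, h2⟩ k hk
      cases k with
      | zero => simpa using h2
      | succ k =>
        have := h1 k (by omega)
        rw [Finset.sum_range_succ']
        linarith
    · intro h
      refine ⟨fun k hk => ?_, by simpa using h 0 (by omega)⟩
      have := h (k + 1) (by omega)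
      rw [Finset.sum_range_succ'] at this
      linarith

lemma lind_congr (n : ℕ) : ∀ (y z : ℕ → ℝ), (∀ i < n, y i = z i) → lind n y = lind n z := by
  induction n with
  | zero => intro y z _; rfl
  | succ n ih =>
    intro y z h
    rw [lind, lind, h 0 (by omega), ih _ (fun i => z (i + 1)) fun i hi => h _ (by omega)]

lemma meas_lind (n : ℕ) : Measurable (lind n) := by
  induction n with
  | zero => exact measurable_const
  | succ n ih =>
    have : Measurable fun y : ℕ → ℝ => lind n (fun i => y (i + 1)) :=
      ih.comp (measurable_pi_lambda _ fun i => measurable_pi_apply _)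
    exact ((measurable_pi_apply 0).add this).max measurable_const

lemma law_lind {Ω : Type*} [MeasurableSpace Ω] (P : Measure Ω) [IsProbabilityMeasure P]
    (μ : Measure ℝ) (n : ℕ) : ∀ (Y : ℕ → Ω → ℝ), (∀ i, Measurable (Y i)) → iIndepFun Y P →
    (∀ i, Measure.map (Y i) P = μ) → Measure.map (fun ω => lind n (fun i => Y i ω)) P = w μ n := by
  induction n with
  | zero => intro Y _ _ _; simp [lind, w, Measure.map_const]
  | succ n ih =>
    intro Y hm hi hl
    have hmZ : Measurable fun ω => lind n (fun i => Y (i + 1) ω) :=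
      (meas_lind n).comp (measurable_pi_lambda _ fun i => hm _)
    have hZ := ih (fun i => Y (i + 1)) (fun i => hm _)
      (hi.precomp (g := fun i => i + 1) (add_left_injective 1)) (fun i => hl _)
    have hind : IndepFun (Y 0) (fun ω => lind n (fun i => Y (i + 1) ω)) P := by
      have h0 := hi.indepFun_finset {0} (Finset.Icc 1 n) (by simp) hm
      let φ : ((({0} : Finset ℕ)) → ℝ) → ℝ := fun v => v ⟨0, by simp⟩
      let ψ : ((Finset.Icc 1 n) → ℝ) → ℝ := fun v =>
        lind n (fun i => if h : i + 1 ∈ Finset.Icc 1 n then v ⟨i + 1, h⟩ else 0)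
      have hφ : Measurable φ := measurable_pi_apply _
      have hψ : Measurable ψ := by
        refine (meas_lind n).comp (measurable_pi_lambda _ fun i => ?_)
        split_ifs
        · exact measurable_pi_apply _
        · exact measurable_const
      have := h0.comp hφ hψ
      refine this.congr (ae_of_all _ fun ω => rfl) (ae_of_all _ fun ω => Eq.symm ?_)
      refine lind_congr n _ _ fun i hi => ?_
      have : i + 1 ∈ Finset.Icc 1 n := by simp; omega
      simp only [this, dite_true]
    rw [w, ← hZ, ← hl 0, ← hind.map_add_eq_map_conv_map (hm 0) hmZ, pp,
      Measure.map_map meas_pos ((hm 0).add hmZ)]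
    rfl

lemma law_sum {Ω : Type*} [MeasurableSpace Ω] (P : Measure Ω) [IsProbabilityMeasure P]
    (μ : Measure ℝ) (Y : ℕ → Ω → ℝ) (hm : ∀ i, Measurable (Y i)) (hi : iIndepFun Y P)
    (hl : ∀ i, Measure.map (Y i) P = μ) (n : ℕ) :
    Measure.map (∑ i ∈ Finset.range n, Y i) P = mp μ n := by
  have : IsProbabilityMeasure μ := by
    rw [← hl 0]; exact Measure.isProbabilityMeasure_map (hm 0).aemeasurable
  induction n with
  | zero =>
    have := Measure.map_const P (0 : ℝ)
    rw [measure_univ, one_smul] at this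
    rw [Finset.sum_range_zero, mp, ← this]
    rfl
  | succ n ih =>
    rw [Finset.sum_range_succ, (hi.indepFun_sum_range_succ hm n).map_add_eq_map_conv_map
      (by fun_prop) (hm n), ih, hl, Measure.conv_comm, mp]

end Spitzer

/-- The identity, derived from Spitzer's formula, for the second moment of the
positive part of the maximum of partial sums of i.i.d. random variables with
finite second moment:
`E[(S̄ₙ⁺)²] = Σ_{k,l ≥ 1, k+l ≤ n} E[S_k⁺] E[S_l⁺]/(k l) + Σ_{k=1}^n E[(S_k⁺)²]/k`. -/
theorem stmt15 {Ω : Type*} [MeasureSpace Ω] [IsProbabilityMeasure (ℙ : Measure Ω)]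
    (X : ℕ → Ω → ℝ) (hmeas : ∀ i, Measurable (X i))
    (hindep : iIndepFun X ℙ)
    (hident : ∀ i, Measure.map (X i) ℙ = Measure.map (X 0) ℙ)
    (hL2 : MemLp (X 0) 2 ℙ)
    (S : ℕ → Ω → ℝ) (hS : ∀ n ω, S n ω = ∑ i ∈ Finset.range n, X i ω)
    (Sbar : ℕ → Ω → ℝ)
    (hSbar : ∀ n, ∀ hn : 1 ≤ n, ∀ ω, Sbar n ω =
      (Finset.Icc 1 n).sup' (Finset.nonempty_Icc.mpr hn) (fun k => S k ω)) :
    ∀ n, 1 ≤ n →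
      ∫ ω, (max (Sbar n ω) 0) ^ 2 ∂ℙ
        = (∑ k ∈ Finset.Icc 1 n, ∑ l ∈ Finset.Icc 1 (n - k),
            (1 / ((k : ℝ) * (l : ℝ))) * (∫ ω, max (S k ω) 0 ∂ℙ)
              * (∫ ω, max (S l ω) 0 ∂ℙ))
          + ∑ k ∈ Finset.Icc 1 n, (1 / (k : ℝ)) * ∫ ω, (max (S k ω) 0) ^ 2 ∂ℙ := by
  intro n hn
  have hμ : IsProbabilityMeasure (Measure.map (X 0) ℙ) :=
    Measure.isProbabilityMeasure_map (hmeas 0).aemeasurable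
  have hid : MemLp id 2 (Measure.map (X 0) ℙ) := by
    rw [memLp_map_measure_iff (by fun_prop) (hmeas 0).aemeasurable]
    exact hL2
  have hSm : ∀ k, S k = ∑ i ∈ Finset.range k, X i := fun k => by
    ext ω; rw [hS, Finset.sum_apply]
  have hSmeas : ∀ k, Measurable (S k) := fun k => by rw [hSm]; fun_prop
  have hlaw : ∀ k, Measure.map (fun ω => max (S k ω) 0) ℙ
      = Spitzer.pp (Spitzer.mp (Measure.map (X 0) ℙ) k) := fun k => by
    rw [← Spitzer.law_sum ℙ _ X hmeas hindep hident k, ← hSm, Spitzer.pp,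
      Measure.map_map Spitzer.meas_pos (hSmeas k)]
    rfl
  have hpm : ∀ k, Measurable fun ω => max (S k ω) 0 := fun k => (hSmeas k).max measurable_const
  have i1 : ∀ k, ∫ ω, max (S k ω) 0 ∂ℙ
      = ∫ x, x ∂(Spitzer.pp (Spitzer.mp (Measure.map (X 0) ℙ) k)) := fun k => by
    rw [← hlaw, integral_map (hpm k).aemeasurable (by fun_prop)]
  have i2 : ∀ k, ∫ ω, (max (S k ω) 0) ^ 2 ∂ℙ
      = ∫ x, x ^ 2 ∂(Spitzer.pp (Spitzer.mp (Measure.map (X 0) ℙ) k)) := fun k => by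
    rw [← hlaw, integral_map (hpm k).aemeasurable (by fun_prop)]
  have hmax : ∀ ω, max (Sbar n ω) 0 = Spitzer.lind n (fun i => X i ω) := by
    intro ω
    refine eq_of_forall_ge_iff fun c => ?_
    rw [Spitzer.lind_le, max_le_iff, hSbar n hn, Finset.sup'_le_iff]
    constructor
    · rintro ⟨h1, h2⟩ k hk
      rcases Nat.eq_zero_or_pos k with rfl | h
      · simpa using h2
      · rw [← hS]; exact h1 k (Finset.mem_Icc.2 ⟨h, hk⟩)
    · intro h
      refine ⟨fun k hk => ?_, by simpa using h 0 (by omega)⟩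
      rw [hS]; exact h k (Finset.mem_Icc.1 hk).2
  have hlm : Measurable fun ω => Spitzer.lind n (fun i => X i ω) :=
    (Spitzer.meas_lind n).comp (measurable_pi_lambda _ fun i => hmeas i)
  simp only [hmax, i1, i2]
  rw [← Spitzer.moments hid n, ← Spitzer.law_lind ℙ _ n X hmeas hindep hident,
    integral_map hlm.aemeasurable (by fun_prop)]
end

section
/- Let X₁, X₂, … be i.i.d. real random variables with mean 0 and variance 1, S_n := X₁+…+X_n, and x⁺ := max(x,0). Then E[S_n⁺]/√n → 1/√(2π) and E[(S_n⁺)²]/n → 1/2 as n → ∞. -/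
open MeasureTheory ProbabilityTheory Filter
open scoped ENNReal

lemma aux_conv (μ : ℕ → Measure ℝ) (γ : Measure ℝ) [∀ n, IsProbabilityMeasure (μ n)]
    [IsProbabilityMeasure γ]
    (h : ∀ F : BoundedContinuousFunction ℝ ℝ,
      Tendsto (fun n => ∫ x, F x ∂(μ n)) atTop (nhds (∫ x, F x ∂γ)))
    (hi : ∀ n, Integrable (fun x : ℝ => x ^ 2) (μ n))
    (hγi : Integrable (fun x : ℝ => x ^ 2) γ)
    (h1 : ∀ᶠ n in atTop, ∫ x, x ^ 2 ∂(μ n) = 1) (hγ1 : ∫ x, x ^ 2 ∂γ = 1)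
    (f : ℝ → ℝ) (hfc : Continuous f) (hf0 : ∀ x, 0 ≤ f x)
    (hf : ∀ x (M : ℝ), 1 ≤ M → f x - min (f x) (M ^ 2) ≤ x ^ 2 - min (x ^ 2) (M ^ 2)) :
    Tendsto (fun n => ∫ x, f x ∂(μ n)) atTop (nhds (∫ x, f x ∂γ)) := by
  have trunc : ∀ (g : ℝ → ℝ), Continuous g → (∀ x, 0 ≤ g x) → ∀ M : ℝ,
      ∃ F : BoundedContinuousFunction ℝ ℝ, ∀ x, F x = min (g x) (M ^ 2) := by
    intro g hg hg0 M
    refine ⟨BoundedContinuousFunction.ofNormedAddCommGroup (fun x => min (g x) (M ^ 2))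
      (by fun_prop) (M ^ 2) ?_, fun x => rfl⟩
    intro x
    rw [Real.norm_eq_abs, abs_of_nonneg (le_min (hg0 x) (sq_nonneg M))]
    exact min_le_right _ _
  have key : ∀ (ν : Measure ℝ) [IsProbabilityMeasure ν], Integrable (fun x : ℝ => x ^ 2) ν →
      ∫ x, x ^ 2 ∂ν = 1 → ∀ M : ℝ, 1 ≤ M → ∀ F G : BoundedContinuousFunction ℝ ℝ,
      (∀ x, F x = min (f x) (M ^ 2)) → (∀ x, G x = min (x ^ 2) (M ^ 2)) →
      0 ≤ ∫ x, f x ∂ν - ∫ x, F x ∂ν ∧ ∫ x, f x ∂ν - ∫ x, F x ∂ν ≤ 1 - ∫ x, G x ∂ν := by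
    intro ν _ hν hν1 M hM F G hF hG
    have iF := F.integrable ν
    have iG := G.integrable ν
    have hfi : Integrable f ν := by
      refine ((hν.sub iG).add iF).mono' hfc.aestronglyMeasurable (Eventually.of_forall fun x => ?_)
      rw [Real.norm_eq_abs, abs_of_nonneg (hf0 x)]
      have := hf x M hM
      simp only [Pi.add_apply, Pi.sub_apply, hF, hG]
      linarith
    rw [← hν1, ← integral_sub hfi iF, ← integral_sub hν iG]
    constructor
    · refine integral_nonneg fun x => ?_
      simp [hF]
    · refine integral_mono (hfi.sub iF) (hν.sub iG) fun x => ?_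
      simp only [hF, hG]
      exact hf x M hM
  have hlim : Tendsto (fun m : ℕ => ∫ x, min (x ^ 2) ((m : ℝ) ^ 2) ∂γ) atTop (nhds 1) := by
    rw [← hγ1]
    refine tendsto_integral_of_dominated_convergence (fun x => x ^ 2)
      (fun m => (by fun_prop : Continuous fun x : ℝ => min (x ^ 2) ((m : ℝ) ^ 2)).aestronglyMeasurable)
      hγi (fun m => Eventually.of_forall fun x => ?_) (Eventually.of_forall fun x => ?_)
    · rw [Real.norm_eq_abs, abs_of_nonneg (by positivity)]
      exact min_le_left _ _
    · refine tendsto_const_nhds.congr' ?_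
      obtain ⟨k, hk⟩ := exists_nat_ge |x|
      filter_upwards [eventually_ge_atTop k] with m hm
      have : |x| ≤ (m : ℝ) := hk.trans (by exact_mod_cast hm)
      rw [min_eq_left]
      rw [← sq_abs x]
      gcongr
  rw [Metric.tendsto_nhds]
  intro ε hε
  obtain ⟨m, hm1, hm⟩ : ∃ m : ℕ, 1 ≤ m ∧ 1 - ε / 8 < ∫ x, min (x ^ 2) ((m : ℝ) ^ 2) ∂γ :=
    ((eventually_ge_atTop 1).and (hlim.eventually_const_lt (by linarith))).exists
  obtain ⟨F, hF⟩ := trunc f hfc hf0 m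
  obtain ⟨G, hG⟩ := trunc (fun x => x ^ 2) (by fun_prop) (fun x => sq_nonneg x) m
  have hm1' : (1 : ℝ) ≤ m := by exact_mod_cast hm1
  simp only [← hG] at hm
  have hFe := Metric.tendsto_nhds.1 (h F) (ε / 8) (by linarith)
  have hGe := Metric.tendsto_nhds.1 (h G) (ε / 8) (by linarith)
  filter_upwards [h1, hFe, hGe] with n hn hFn hGn
  have a := key (μ n) (hi n) hn m hm1' F G hF hG
  have b := key γ hγi hγ1 m hm1' F G hF hG
  rw [Real.dist_eq, abs_lt] at *
  constructor <;> linarith [a.1, a.2, b.1, b.2, hFn.1, hFn.2, hGn.1, hGn.2]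

lemma gauss_sq : Integrable (fun x : ℝ => x ^ 2) (gaussianReal 0 1) ∧
    ∫ x, x ^ 2 ∂(gaussianReal 0 1) = 1 := by
  constructor
  · exact (memLp_id_gaussianReal (μ := 0) (v := 1) 2).integrable_sq
  · have := variance_fun_id_gaussianReal (μ := 0) (v := 1)
    rw [variance_of_integral_eq_zero (by fun_prop) (by simp)] at this
    simpa using this

lemma gauss_max_sq : ∫ x, (max x 0) ^ 2 ∂(gaussianReal 0 1) = 1 / 2 := by
  have hi : Integrable (fun x : ℝ => (max x 0) ^ 2) (gaussianReal 0 1) := by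
    refine gauss_sq.1.mono' (by fun_prop) (Eventually.of_forall fun x => ?_)
    rw [Real.norm_eq_abs, abs_of_nonneg (by positivity)]
    rcases le_total x 0 with h | h <;> simp [h]
    positivity
  have hn : ∫ x, (max (-x) 0) ^ 2 ∂(gaussianReal 0 1) = ∫ x, (max x 0) ^ 2 ∂(gaussianReal 0 1) := by
    have : (gaussianReal 0 1).map (fun x => -x) = gaussianReal 0 1 := by
      rw [gaussianReal_map_neg]; simp
    conv_rhs => rw [← this]
    rw [integral_map (by fun_prop) (by fun_prop)]
  have hi' : Integrable (fun x : ℝ => (max (-x) 0) ^ 2) (gaussianReal 0 1) := by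
    refine gauss_sq.1.mono' (by fun_prop) (Eventually.of_forall fun x => ?_)
    rw [Real.norm_eq_abs, abs_of_nonneg (by positivity)]
    rcases le_total x 0 with h | h <;> simp [h]
  have := gauss_sq.2
  have e : ∀ x : ℝ, x ^ 2 = (max x 0) ^ 2 + (max (-x) 0) ^ 2 := by
    intro x
    rcases le_total x 0 with h | h <;> simp [h]
  rw [integral_congr_ae (Eventually.of_forall e)] at this
  rw [integral_add hi hi', hn] at this
  linarith

lemma gauss_max : ∫ x, max x 0 ∂(gaussianReal 0 1) = 1 / Real.sqrt (2 * Real.pi) := by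
  rw [integral_gaussianReal_eq_integral_smul (by norm_num)]
  have e : ∀ x : ℝ, gaussianPDFReal 0 1 x • max x 0 =
      (Set.Ioi (0 : ℝ)).indicator
        (fun x => (1 / Real.sqrt (2 * Real.pi)) * (x ^ (1 : ℝ) * Real.exp (-(1/2) * x ^ (2:ℝ)))) x := by
    intro x
    by_cases h : 0 < x
    · rw [Set.indicator_of_mem (by exact h), max_eq_left h.le]
      simp [gaussianPDFReal]
      try ring_nf
    · rw [Set.indicator_of_notMem (by exact h), max_eq_right (not_lt.1 h)]
      simp
  simp_rw [e]
  rw [integral_indicator measurableSet_Ioi, integral_const_mul,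
    integral_rpow_mul_exp_neg_mul_rpow (by norm_num) (by norm_num) (by norm_num)]
  norm_num

/-- For i.i.d. summands with mean `0` and variance `1`:
`E[Sₙ⁺]/√n → 1/√(2π)` and `E[(Sₙ⁺)²]/n → 1/2`. -/
theorem stmt16 {Ω : Type*} [MeasureSpace Ω] [IsProbabilityMeasure (ℙ : Measure Ω)]
    (X : ℕ → Ω → ℝ) (hmeas : ∀ i, Measurable (X i))
    (hindep : iIndepFun X ℙ)
    (hident : ∀ i, Measure.map (X i) ℙ = Measure.map (X 0) ℙ)
    (hL2 : MemLp (X 0) 2 ℙ)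
    (hmean : ∫ ω, X 0 ω ∂ℙ = 0)
    (hvar : ∫ ω, (X 0 ω) ^ 2 ∂ℙ = 1)
    (S : ℕ → Ω → ℝ) (hS : ∀ n ω, S n ω = ∑ i ∈ Finset.range n, X i ω) :
    Tendsto (fun n => (∫ ω, max (S n ω) 0 ∂ℙ) / Real.sqrt n) atTop
        (nhds (1 / Real.sqrt (2 * Real.pi))) ∧
      Tendsto (fun n => (∫ ω, (max (S n ω) 0) ^ 2 ∂ℙ) / n) atTop (nhds (1 / 2)) := by
  have hid : ∀ i, IdentDistrib (X i) (X 0) ℙ ℙ := fun i =>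
    ⟨(hmeas i).aemeasurable, (hmeas 0).aemeasurable, hident i⟩
  have clt := tendstoInDistribution_inv_sqrt_mul_sum (P := (ℙ : Measure Ω)) (P' := gaussianReal 0 1)
    (Y := id) HasLaw.id hmean hvar hindep hid
  have hmem : ∀ i, MemLp (X i) 2 ℙ := fun i => (hid i).memLp_iff.2 hL2
  have hSe : ∀ n, S n = ∑ i ∈ Finset.range n, X i := fun n => by
    ext ω; rw [hS, Finset.sum_apply]
  have hSm : ∀ n, Measurable (S n) := fun n => by
    rw [funext (hS n)]; exact Finset.measurable_sum _ fun i _ => hmeas i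
  have hSL : ∀ n, MemLp (S n) 2 ℙ := fun n => by
    rw [hSe]; exact memLp_finsetSum' _ fun i _ => hmem i
  have hmi : ∀ i, ∫ ω, X i ω ∂ℙ = 0 := fun i => by rw [(hid i).integral_eq, hmean]
  have hS0 : ∀ n, ∫ ω, S n ω ∂ℙ = 0 := fun n => by
    simp_rw [hS]
    rw [integral_finsetSum _ fun i _ => (hmem i).integrable (by norm_num)]
    simp [hmi]
  have hvi : ∀ i, variance (X i) ℙ = 1 := fun i => by
    rw [(hid i).variance_eq, variance_of_integral_eq_zero (hmeas 0).aemeasurable hmean, hvar]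
  have hS2 : ∀ n, ∫ ω, (S n ω) ^ 2 ∂ℙ = n := fun n => by
    rw [← variance_of_integral_eq_zero (hSm n).aemeasurable (hS0 n), hSe,
      IndepFun.variance_sum (fun i _ => hmem i)
        (fun i _ j _ hij => hindep.indepFun hij)]
    simp [hvi]
  let Y : ℕ → Ω → ℝ := fun n ω => (Real.sqrt n)⁻¹ * S n ω
  have hYm : ∀ n, Measurable (Y n) := fun n => (hSm n).const_mul _
  let μ : ℕ → Measure ℝ := fun n => Measure.map (Y n) ℙ
  have hp : ∀ n, IsProbabilityMeasure (μ n) := fun n =>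
    Measure.isProbabilityMeasure_map (hYm n).aemeasurable
  have hweak : ∀ F : BoundedContinuousFunction ℝ ℝ,
      Tendsto (fun n => ∫ x, F x ∂(μ n)) atTop (nhds (∫ x, F x ∂(gaussianReal 0 1))) := by
    have := ProbabilityMeasure.tendsto_iff_forall_integral_tendsto.1 clt.tendsto
    simpa [μ, Y, hS] using this
  have hint : ∀ n, Integrable (fun x : ℝ => x ^ 2) (μ n) := fun n => by
    rw [integrable_map_measure (by fun_prop) (hYm n).aemeasurable]
    exact ((hSL n).const_mul _).integrable_sq
  have hone : ∀ᶠ n in atTop, ∫ x, x ^ 2 ∂(μ n) = 1 := by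
    filter_upwards [eventually_ge_atTop 1] with n hn
    rw [integral_map (hYm n).aemeasurable (by fun_prop)]
    simp only [Y, mul_pow]
    rw [integral_const_mul, hS2, inv_pow, Real.sq_sqrt (by positivity)]
    have : (n : ℝ) ≠ 0 := by positivity
    field_simp
  have main := aux_conv μ (gaussianReal 0 1) hweak hint gauss_sq.1 hone gauss_sq.2
  constructor
  · have := main (fun x => max x 0) (by fun_prop) (by simp) ?_
    · rw [gauss_max] at this
      refine this.congr fun n => ?_
      rw [integral_map (hYm n).aemeasurable (by fun_prop), div_eq_inv_mul, ← integral_const_mul]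
      congr 1; ext ω
      rw [mul_max_of_nonneg _ _ (by positivity), mul_zero]
    · intro x M hM
      rcases le_total (max x 0) (M ^ 2) with h | h
      · simp [h]
      · have hx : x = max x 0 := by
          rcases le_total x 0 with h' | h'
          · rw [max_eq_right h'] at h; nlinarith
          · simp [h']
        rw [← hx] at h ⊢
        have hx1 : 1 ≤ x := by nlinarith
        have hx2 : x ≤ x ^ 2 := by nlinarith
        rw [min_eq_right h, min_eq_right (by linarith)]
        nlinarith
  · have := main (fun x => (max x 0) ^ 2) (by fun_prop) (fun x => by positivity) ?_
    · rw [gauss_max_sq] at this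
      refine this.congr fun n => ?_
      rw [integral_map (hYm n).aemeasurable (by fun_prop), div_eq_inv_mul, ← integral_const_mul]
      congr 1; ext ω
      have : (n : ℝ)⁻¹ = (Real.sqrt n)⁻¹ ^ 2 := by rw [inv_pow, Real.sq_sqrt (by positivity)]
      rw [this, ← mul_pow, mul_max_of_nonneg _ _ (by positivity), mul_zero]
    · intro x M hM
      rcases le_total x 0 with h | h
      · simp [h, sq_nonneg]
      · simp [h]
end

section
/- Let X₁, X₂, … be i.i.d. real random variables with mean 0 and variance 1, S̄_n := max_{1≤k≤n} (X₁+…+X_k), and x⁺ := max(x,0). Then E[(S̄_n⁺)²]/n → 1 as n → ∞. -/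
open MeasureTheory ProbabilityTheory Filter
open scoped ENNReal

/-- Maximum of the partial sums `S_0, …, S_n`, defined by recursion on the left. -/
noncomputable def mx : ℕ → (ℕ → ℝ) → ℝ
  | 0, _ => 0
  | n + 1, x => max 0 (x 0 + mx n (fun i => x (i + 1)))

lemma mx_le_iff (n : ℕ) : ∀ (x : ℕ → ℝ) (c : ℝ),
    mx n x ≤ c ↔ ∀ k ≤ n, ∑ i ∈ Finset.range k, x i ≤ c := by
  induction n with
  | zero =>
    intro x c
    simp [mx]
  | succ n ih =>
    intro x c
    have h := ih (fun i => x (i + 1)) (c - x 0)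
    rw [mx, max_le_iff, ← le_sub_iff_add_le', h]
    constructor
    · rintro ⟨h0, h1⟩ k hk
      cases k with
      | zero => simpa using h0
      | succ k =>
        have := h1 k (by omega)
        rw [Finset.sum_range_succ']
        linarith
    · intro h1
      refine ⟨by simpa using h1 0 (by omega), fun k hk => ?_⟩
      have := h1 (k + 1) (by omega)
      rw [Finset.sum_range_succ'] at this
      linarith

lemma mx_mono (x : ℕ → ℝ) : Monotone (fun n => mx n x) := by
  intro m n hmn
  show mx m x ≤ mx n x
  rw [mx_le_iff]
  intro k hk
  exact (mx_le_iff n x _).1 le_rfl k (hk.trans hmn)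

lemma sum_le_mx (n : ℕ) (x : ℕ → ℝ) : ∑ i ∈ Finset.range n, x i ≤ mx n x :=
  (mx_le_iff n x _).1 le_rfl n le_rfl

lemma mx_nonneg (n : ℕ) (x : ℕ → ℝ) : 0 ≤ mx n x := by
  simpa using (mx_le_iff n x _).1 le_rfl 0 (by omega)

lemma measurable_mx (n : ℕ) : Measurable (mx n) := by
  induction n with
  | zero => exact measurable_const
  | succ n ih =>
    have h : Measurable (fun x : ℕ → ℝ => mx n (fun i => x (i + 1))) :=
      ih.comp (by fun_prop)
    show Measurable (fun x : ℕ → ℝ => max 0 (x 0 + mx n (fun i => x (i + 1))))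
    fun_prop

lemma mx_memLp {Ω : Type*} [MeasurableSpace Ω] (μ : Measure Ω) (n : ℕ) :
    ∀ (X : ℕ → Ω → ℝ), (∀ i, MemLp (X i) 2 μ) → MemLp (fun ω => mx n (fun i => X i ω)) 2 μ := by
  induction n with
  | zero =>
    intro X _
    simp only [mx]
    exact MemLp.zero'
  | succ n ih =>
    intro X hX
    have h := ((hX 0).add (ih (fun i => X (i + 1)) (fun i => hX _))).pos_part
    refine (memLp_congr_ae ?_).1 h
    filter_upwards with ω
    simp [mx, max_comm]

/-- The running maxima stay bounded. -/
def bdd (x : ℕ → ℝ) : Prop := ∃ K : ℕ, ∀ n, mx n x ≤ K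

lemma measurableSet_bdd : MeasurableSet {x | bdd x} := by
  have : {x | bdd x} = ⋃ K : ℕ, ⋂ n, {x | mx n x ≤ K} := by
    ext x; simp [bdd]
  rw [this]
  exact MeasurableSet.iUnion fun K => MeasurableSet.iInter fun n =>
    measurableSet_le (measurable_mx n) measurable_const

lemma bdd_shift (x : ℕ → ℝ) : bdd x ↔ bdd (fun i => x (i + 1)) := by
  constructor
  · rintro ⟨K, hK⟩
    obtain ⟨L, hL⟩ := exists_nat_ge ((K : ℝ) - x 0)
    refine ⟨L, fun n => ?_⟩
    have := hK (n + 1)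
    rw [mx, max_le_iff] at this
    linarith [this.2]
  · rintro ⟨K, hK⟩
    obtain ⟨L, hL⟩ := exists_nat_ge ((K : ℝ) + x 0)
    refine ⟨L, fun n => ?_⟩
    refine (mx_mono x (Nat.le_succ n)).trans ?_
    show mx (n + 1) x ≤ L
    rw [mx, max_le_iff]
    exact ⟨by positivity, by linarith [hK n]⟩

lemma bdd_shift_iter (k : ℕ) (x : ℕ → ℝ) : bdd x ↔ bdd (fun i => x (i + k)) := by
  induction k with
  | zero => simp
  | succ k ih =>
    rw [ih, bdd_shift]
    simp only [Nat.add_right_comm, Nat.add_assoc]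

lemma bdd_zero_one {Ω : Type*} [MeasurableSpace Ω] (μ : Measure Ω)
    (X : ℕ → Ω → ℝ) (hmeas : ∀ i, Measurable (X i)) (hindep : iIndepFun X μ) :
    μ {ω | bdd (fun i => X i ω)} = 0 ∨ μ {ω | bdd (fun i => X i ω)} = 1 := by
  refine measure_zero_or_one_of_measurableSet_limsup_atTop
    (s := fun i => MeasurableSpace.comap (X i) inferInstance) (fun n => (hmeas n).comap_le)
    hindep ?_
  rw [limsup_eq_iInf_iSup_of_nat, MeasurableSpace.measurableSet_iInf]
  intro k
  have hm : Measurable[⨆ i, ⨆ (_ : i ≥ k), MeasurableSpace.comap (X i) inferInstance]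
      (fun ω i => X (i + k) ω) := by
    refine @measurable_pi_lambda _ _ _ (_) _ _ fun i => ?_
    refine Measurable.mono (comap_measurable (X (i + k))) ?_ le_rfl
    exact le_iSup₂_of_le (f := fun i (_ : i ≥ k) => MeasurableSpace.comap (X i) inferInstance)
      (i + k) (by omega) le_rfl
  have : {ω | bdd (fun i => X i ω)} = (fun ω i => X (i + k) ω) ⁻¹' {x | bdd x} := by
    ext ω
    exact bdd_shift_iter k _
  rw [this]
  exact hm measurableSet_bdd

lemma bdd_lt_one {Ω : Type*} [MeasurableSpace Ω] (μ : Measure Ω) [IsProbabilityMeasure μ]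
    (X : ℕ → Ω → ℝ) (hmeas : ∀ i, Measurable (X i)) (hindep : iIndepFun X μ)
    (hident : ∀ i, IdentDistrib (X i) (X 0) μ μ)
    (hmean : ∫ ω, X 0 ω ∂μ = 0)
    (hvar : ∫ ω, (X 0 ω) ^ 2 ∂μ = 1) :
    μ {ω | bdd (fun i => X i ω)} < 1 := by
  have clt := tendstoInDistribution_inv_sqrt_mul_sum (P := μ) (X := X) (Y := id)
    (P' := gaussianReal 0 1) HasLaw.id hmean (by simpa using hvar) hindep hident
  have h1 := ProbabilityMeasure.limsup_measure_closed_le_of_tendsto clt.tendsto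
    (F := Set.Iic 1) isClosed_Iic
  simp only [ProbabilityMeasure.coe_mk, Measure.map_id] at h1
  set c := gaussianReal 0 1 (Set.Iic 1) with hc
  have hc1 : c < 1 := by
    rw [hc]
    refine lt_of_le_of_ne prob_le_one fun h => ?_
    have h2 := (prob_compl_eq_zero_iff (μ := gaussianReal 0 1)
      (measurableSet_Iic (a := (1:ℝ)))).2 h
    have h3 := gaussianReal_absolutelyContinuous' 0 (one_ne_zero) h2
    simp at h3
  refine lt_of_le_of_lt ?_ hc1
  have hU : {ω | bdd (fun i => X i ω)} = ⋃ K : ℕ, {ω | ∀ n, mx n (fun i => X i ω) ≤ K} := by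
    ext ω; simp [bdd]
  rw [hU, Monotone.measure_iUnion]
  · refine iSup_le fun K => ?_
    refine le_trans ?_ h1
    refine le_limsup_of_frequently_le (Eventually.frequently ?_) (by isBoundedDefault)
    filter_upwards [eventually_ge_atTop (K ^ 2 + 1)] with n hn
    rw [Measure.map_apply (by fun_prop) measurableSet_Iic]
    refine measure_mono fun ω hω => ?_
    have h4 := (sum_le_mx n (fun i => X i ω)).trans (hω n)
    have h5 : (K : ℝ) ≤ √n := by
      apply Real.le_sqrt_of_sq_le
      exact_mod_cast (by omega : K ^ 2 ≤ n)
    have h6 : 0 < √(n : ℝ) := by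
      apply Real.sqrt_pos.2
      exact_mod_cast (by omega : 0 < n)
    show (√(n : ℝ))⁻¹ * _ ≤ (1 : ℝ)
    rw [inv_mul_le_iff₀ h6]
    linarith
  · intro K L hKL ω hω n
    exact (hω n).trans (by exact_mod_cast hKL)

lemma indep_head {Ω : Type*} [MeasurableSpace Ω] (μ : Measure Ω)
    (X : ℕ → Ω → ℝ) (hmeas : ∀ i, Measurable (X i)) (hindep : iIndepFun X μ) :
    IndepFun (X 0) (fun ω i => X (i + 1) ω) μ := by
  have h := indep_iSup_of_disjoint (fun i => (hmeas i).comap_le) hindep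
    (S := {0}) (T := {i | 1 ≤ i}) (by simp)
  rw [IndepFun_iff_Indep]
  refine indep_of_indep_of_le_left (indep_of_indep_of_le_right h ?_) ?_
  · rw [← measurable_iff_comap_le]
    refine @measurable_pi_lambda _ _ _ (_) _ _ fun i => ?_
    refine Measurable.mono (comap_measurable (X (i + 1))) ?_ le_rfl
    exact le_iSup₂_of_le (f := fun i (_ : i ∈ {i | 1 ≤ i}) =>
      MeasurableSpace.comap (X i) inferInstance) (i + 1) (by simp) le_rfl
  · exact le_iSup₂_of_le (f := fun i (_ : i ∈ ({0} : Set ℕ)) =>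
      MeasurableSpace.comap (X i) inferInstance) 0 (by simp) le_rfl

/-- For i.i.d. summands with mean `0` and variance `1`: `E[(S̄ₙ⁺)²]/n → 1`. -/
theorem stmt17 {Ω : Type*} [MeasureSpace Ω] [IsProbabilityMeasure (ℙ : Measure Ω)]
    (X : ℕ → Ω → ℝ) (hmeas : ∀ i, Measurable (X i))
    (hindep : iIndepFun X ℙ)
    (hident : ∀ i, Measure.map (X i) ℙ = Measure.map (X 0) ℙ)
    (hL2 : MemLp (X 0) 2 ℙ)
    (hmean : ∫ ω, X 0 ω ∂ℙ = 0)
    (hvar : ∫ ω, (X 0 ω) ^ 2 ∂ℙ = 1)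
    (Sbar : ℕ → Ω → ℝ)
    (hSbar : ∀ n, ∀ hn : 1 ≤ n, ∀ ω, Sbar n ω =
      (Finset.Icc 1 n).sup' (Finset.nonempty_Icc.mpr hn)
        (fun k => ∑ i ∈ Finset.range k, X i ω)) :
    Tendsto (fun n => (∫ ω, (max (Sbar n ω) 0) ^ 2 ∂ℙ) / n) atTop (nhds 1) := by
  have hid : ∀ i, IdentDistrib (X i) (X 0) ℙ ℙ := fun i =>
    ⟨(hmeas i).aemeasurable, (hmeas 0).aemeasurable, hident i⟩
  have hLp : ∀ i, MemLp (X i) 2 ℙ := fun i => (hid i).memLp_iff.2 hL2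
  -- identification of the maximum
  have hmx : ∀ n, 1 ≤ n → ∀ ω, max (Sbar n ω) 0 = mx n (fun i => X i ω) := by
    intro n hn ω
    refine eq_of_forall_ge_iff fun c => ?_
    rw [mx_le_iff, hSbar n hn, max_le_iff, Finset.sup'_le_iff]
    constructor
    · rintro ⟨h1, h0⟩ k hk
      rcases Nat.eq_zero_or_pos k with rfl | hk0
      · simpa using h0
      · exact h1 k (Finset.mem_Icc.2 ⟨hk0, hk⟩)
    · intro h
      exact ⟨fun k hk => h k (Finset.mem_Icc.1 hk).2, by simpa using h 0 (by omega)⟩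
  -- the shifted sequence has the same law
  have hlaw : Measure.map (fun ω i => X (i + 1) ω) ℙ = Measure.map (fun ω i => X i ω) ℙ := by
    have h1 : iIndepFun (fun i => X (i + 1)) ℙ := hindep.precomp (add_left_injective 1)
    rw [hindep.map_fun_eq_infinitePi_map hmeas,
      h1.map_fun_eq_infinitePi_map (fun i => hmeas (i + 1))]
    congr 1
    funext i
    rw [hident, hident i]
  have hXm : Measurable (fun ω i => X i ω) := measurable_pi_lambda _ hmeas
  have hXm' : Measurable (fun ω i => X (i + 1) ω) := measurable_pi_lambda _ fun i => hmeas (i + 1)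
  have hnull : ∀ᵐ ω ∂(ℙ : Measure Ω), ¬ bdd (fun i => X i ω) := by
    rcases bdd_zero_one ℙ X hmeas hindep with h | h
    · rw [ae_iff]; simpa using h
    · exact absurd h (bdd_lt_one ℙ X hmeas hindep hid hmean hvar).ne
  let Y : ℕ → Ω → ℝ := fun n ω => mx n (fun i => X (i + 1) ω)
  have hYm : ∀ n, Measurable (Y n) := fun n => (measurable_mx n).comp hXm'
  have hYL : ∀ n, MemLp (Y n) 2 ℙ := fun n => mx_memLp ℙ n _ (fun i => hLp (i + 1))
  let e : ℕ → ℝ := fun n => ∫ ω, (mx n (fun i => X i ω)) ^ 2 ∂ℙ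
  let d : ℕ → ℝ := fun n => ∫ ω, (max 0 (-(X 0 ω + Y n ω))) ^ 2 ∂ℙ
  have hYe : ∀ n, ∫ ω, (Y n ω) ^ 2 ∂ℙ = e n := by
    intro n
    have hm : Measurable (fun x : ℕ → ℝ => (mx n x) ^ 2) := (measurable_mx n).pow_const 2
    have h1 := integral_map (μ := (ℙ : Measure Ω)) hXm.aemeasurable hm.aestronglyMeasurable
    have h2 := integral_map (μ := (ℙ : Measure Ω)) hXm'.aemeasurable hm.aestronglyMeasurable
    rw [hlaw] at h2
    exact h2.symm.trans h1
  have hrec : ∀ n, e (n + 1) = e n + 1 - d n := by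
    intro n
    have hpt : ∀ ω, (mx (n + 1) (fun i => X i ω)) ^ 2 =
        (X 0 ω) ^ 2 + 2 * (X 0 ω * Y n ω) + (Y n ω) ^ 2
          - (max 0 (-(X 0 ω + Y n ω))) ^ 2 := by
      intro ω
      show (max 0 (X 0 ω + Y n ω)) ^ 2 = _
      rcases le_total 0 (X 0 ω + Y n ω) with h | h
      · rw [max_eq_right h, max_eq_left (by linarith)]; ring
      · rw [max_eq_left h, max_eq_right (by linarith)]; ring
    have hi1 : Integrable (fun ω => (X 0 ω) ^ 2) ℙ := hL2.integrable_sq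
    have hi2 : Integrable (fun ω => 2 * (X 0 ω * Y n ω)) ℙ :=
      (hL2.integrable_mul (hYL n)).const_mul 2
    have hi3 : Integrable (fun ω => (Y n ω) ^ 2) ℙ := (hYL n).integrable_sq
    have hi4 : Integrable (fun ω => (max 0 (-(X 0 ω + Y n ω))) ^ 2) ℙ := by
      have := (hL2.add (hYL n)).neg.pos_part.integrable_sq
      refine this.congr ?_
      filter_upwards with ω
      simp [max_comm]
    have hind : IndepFun (X 0) (Y n) ℙ :=
      (indep_head ℙ X hmeas hindep).comp measurable_id (measurable_mx n)
    have hxy : ∫ ω, X 0 ω * Y n ω ∂ℙ = 0 := by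
      rw [hind.integral_fun_mul_eq_mul_integral (hmeas 0).aestronglyMeasurable
        (hYm n).aestronglyMeasurable, hmean, zero_mul]
    show ∫ ω, (mx (n + 1) (fun i => X i ω)) ^ 2 ∂ℙ = _
    simp_rw [hpt]
    have hi12 : Integrable (fun ω => (X 0 ω) ^ 2 + 2 * (X 0 ω * Y n ω)) ℙ := hi1.add hi2
    have hi123 : Integrable (fun ω => (X 0 ω) ^ 2 + 2 * (X 0 ω * Y n ω) + (Y n ω) ^ 2) ℙ :=
      hi12.add hi3
    rw [integral_sub hi123 hi4, integral_add hi12 hi3,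
      integral_add hi1 hi2, integral_const_mul, hxy, hvar, hYe]
    show 1 + 2 * 0 + e n - d n = _
    ring
  have he : ∀ n, e n = n - ∑ i ∈ Finset.range n, d i := by
    intro n
    induction n with
    | zero => simp [e, mx]
    | succ n ih =>
      rw [hrec, ih, Finset.sum_range_succ]
      push_cast
      ring
  have hd : Tendsto d atTop (nhds 0) := by
    have : Tendsto d atTop (nhds (∫ _ : Ω, (0 : ℝ) ∂ℙ)) := by
      refine tendsto_integral_of_dominated_convergence (fun ω => (X 0 ω) ^ 2) ?_
        hL2.integrable_sq ?_ ?_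
      · intro n
        have h1 := hYm n
        have h2 := hmeas 0
        exact Measurable.aestronglyMeasurable (by fun_prop)
      · intro n
        filter_upwards with ω
        have hY : 0 ≤ Y n ω := mx_nonneg _ _
        rw [Real.norm_eq_abs, abs_of_nonneg (by positivity), ← sq_abs (X 0 ω)]
        refine pow_le_pow_left₀ (le_max_left _ _) ?_ 2
        refine max_le (abs_nonneg _) ?_
        linarith [neg_abs_le (X 0 ω)]
      · filter_upwards [hnull] with ω hω
        rw [bdd_shift] at hω
        simp only [bdd, not_exists, not_forall, not_le] at hω
        obtain ⟨K, hK⟩ := exists_nat_ge (-(X 0 ω))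
        obtain ⟨N, hN⟩ := hω K
        refine tendsto_const_nhds.congr' ?_
        filter_upwards [eventually_ge_atTop N] with n hn
        have : mx N (fun i => X (i + 1) ω) ≤ Y n ω := mx_mono _ hn
        rw [max_eq_left (by linarith)]
        simp
    simpa using this
  have hces := hd.cesaro
  have hlim : Tendsto (fun n : ℕ => 1 - (n : ℝ)⁻¹ * ∑ i ∈ Finset.range n, d i) atTop
      (nhds (1 - 0)) := tendsto_const_nhds.sub hces
  rw [sub_zero] at hlim
  refine hlim.congr' ?_
  filter_upwards [eventually_ge_atTop 1] with n hn
  have hn0 : (n : ℝ) ≠ 0 := by positivity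
  simp_rw [hmx n hn]
  show _ = e n / n
  rw [he]
  field_simp
end

section
/- Let X₁, X₂, … be i.i.d. real random variables with a Lebesgue density p, mean 0 and variance 1, let S̄_n := max_{1≤k≤n} (X₁+…+X_k), and let p̄_n denote the density of S̄_n. Then for every n ≥ 2 there exists a non-negative measurable function p̃_n on (0,∞) with ∫₀^∞ p̃_n(x) dx ≤ 1 such that p̄_n(x) = P(S̄_{n−1} < 0)·p(x) + p̃_n(x) for almost every x > 0; in particular p̄_n(x) ≥ P(S̄_{n−1} < 0)·p(x) for almost every x > 0. -/
open MeasureTheory ProbabilityTheory Filter Set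
open scoped ENNReal

/-- Decomposition of the density of `S̄ₙ` on the positive half-line:
`p̄ₙ(x) = P(S̄_{n-1} < 0) p(x) + p̃ₙ(x)` a.e. on `(0,∞)` for a subprobability
density `p̃ₙ`; in particular `p̄ₙ(x) ≥ P(S̄_{n-1} < 0) p(x)` a.e. on `(0,∞)`. -/
theorem stmt18 {Ω : Type*} [MeasureSpace Ω] [IsProbabilityMeasure (ℙ : Measure Ω)]
    (X : ℕ → Ω → ℝ) (hmeas : ∀ i, Measurable (X i))
    (hindep : iIndepFun X ℙ)
    (hident : ∀ i, Measure.map (X i) ℙ = Measure.map (X 0) ℙ)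
    (hL2 : MemLp (X 0) 2 ℙ)
    (hmean : ∫ ω, X 0 ω ∂ℙ = 0)
    (hvar : ∫ ω, (X 0 ω) ^ 2 ∂ℙ = 1)
    (p : ℝ → ℝ) (hpmeas : Measurable p) (hp0 : ∀ x, 0 ≤ p x)
    (hpdens : Measure.map (X 0) ℙ = volume.withDensity (fun x => ENNReal.ofReal (p x)))
    (Sbar : ℕ → Ω → ℝ)
    (hSbar : ∀ n, ∀ hn : 1 ≤ n, ∀ ω, Sbar n ω =
      (Finset.Icc 1 n).sup' (Finset.nonempty_Icc.mpr hn)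
        (fun k => ∑ i ∈ Finset.range k, X i ω))
    (pbar : ℕ → ℝ → ℝ) (hpbarmeas : ∀ n, Measurable (pbar n))
    (hpbar0 : ∀ n x, 0 ≤ pbar n x)
    (hpbar : ∀ n, 1 ≤ n → Measure.map (Sbar n) ℙ
      = volume.withDensity (fun x => ENNReal.ofReal (pbar n x))) :
    ∀ n, 2 ≤ n → ∃ ptilde : ℝ → ℝ,
      Measurable ptilde ∧ (∀ x, 0 ≤ ptilde x) ∧
      (∫ x in Ioi (0 : ℝ), ptilde x) ≤ 1 ∧
      (∀ᵐ x ∂(volume.restrict (Ioi (0 : ℝ))),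
        pbar n x = (ℙ {ω | Sbar (n - 1) ω < 0}).toReal * p x + ptilde x) ∧
      (∀ᵐ x ∂(volume.restrict (Ioi (0 : ℝ))),
        (ℙ {ω | Sbar (n - 1) ω < 0}).toReal * p x ≤ pbar n x) := by
  intro n hn
  classical
  obtain ⟨m, rfl⟩ : ∃ m, n = m + 1 := ⟨n - 1, by omega⟩
  have hm : 1 ≤ m := by omega
  simp only [Nat.add_sub_cancel]
  set c : ℝ≥0∞ := ℙ {ω | Sbar m ω < 0} with hc
  have hc_top : c ≠ ∞ := measure_ne_top _ _
  let B : Set (ℕ → ℝ) := {y | ∀ k ∈ Finset.Icc 1 m, ∑ i ∈ Finset.range k, y i < 0}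
  have hB : MeasurableSet B := by
    have : B = ⋂ k ∈ Finset.Icc 1 m, {y : ℕ → ℝ | ∑ i ∈ Finset.range k, y i < 0} := by
      ext y; simp [B]
    rw [this]
    refine Finset.measurableSet_biInter _ fun k _ => ?_
    exact measurableSet_lt (by fun_prop) measurable_const
  have hE : {ω | Sbar m ω < 0} = (fun ω i => X i ω) ⁻¹' B := by
    ext ω
    simp only [mem_ofPred_eq, mem_preimage, B]
    rw [hSbar m hm ω, Finset.sup'_lt_iff]
  let F : Set Ω := (fun ω i => X (i + 1) ω) ⁻¹' B
  have hF : ℙ F = c := by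
    have hi' : iIndepFun (fun i => X (i + 1)) ℙ :=
      hindep.precomp (g := fun i : ℕ => i + 1) (add_left_injective 1)
    have h1 := hindep.map_fun_eq_infinitePi_map hmeas
    have h2 := hi'.map_fun_eq_infinitePi_map (fun i => hmeas (i + 1))
    have h3 : (fun i => Measure.map (X (i + 1)) (ℙ : Measure Ω))
        = fun i => Measure.map (X i) ℙ := by
      funext i; rw [hident (i + 1), hident i]
    rw [h3, ← h1] at h2
    have h4 := congrArg (fun ν => ν B) h2
    rw [Measure.map_apply (by fun_prop) hB, Measure.map_apply (by fun_prop) hB, ← hE] at h4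
    exact h4
  have hInd : ∀ A : Set ℝ, MeasurableSet A → ℙ (X 0 ⁻¹' A ∩ F) = ℙ (X 0 ⁻¹' A) * ℙ F := by
    intro A hA
    have h := indep_iSup_of_disjoint (m := fun i => MeasurableSpace.comap (X i) inferInstance)
      (μ := (ℙ : Measure Ω)) (fun i => (hmeas i).comap_le) hindep (S := {0}) (T := {0}ᶜ)
      disjoint_compl_right
    refine (Indep_iff _ _ _).1 h _ _ ?_ ?_
    · have : MeasurableSpace.comap (X 0) inferInstance ≤
        ⨆ i ∈ ({0} : Set ℕ), MeasurableSpace.comap (X i) (inferInstance : MeasurableSpace ℝ) :=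
        le_iSup₂_of_le 0 rfl le_rfl
      exact this _ ⟨A, hA, rfl⟩
    · have hmm : @Measurable Ω (ℕ → ℝ) (⨆ i ∈ ({0}ᶜ : Set ℕ),
          MeasurableSpace.comap (X i) (inferInstance : MeasurableSpace ℝ)) _
          (fun ω i => X (i + 1) ω) := by
        refine @measurable_pi_lambda _ _ _ (_) _ _ fun i => ?_
        have : MeasurableSpace.comap (X (i + 1)) inferInstance ≤
          ⨆ i ∈ ({0}ᶜ : Set ℕ), MeasurableSpace.comap (X i) (inferInstance : MeasurableSpace ℝ) :=
          le_iSup₂_of_le (i + 1) (by simp) le_rfl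
        exact measurable_iff_comap_le.2 this
      exact hmm hB
  have hSm : Measurable (Sbar (m + 1)) := by
    have : Sbar (m + 1) = fun ω => (Finset.Icc 1 (m + 1)).sup'
        (Finset.nonempty_Icc.mpr (by omega)) (fun k => ∑ i ∈ Finset.range k, X i ω) :=
      funext (hSbar (m + 1) (by omega))
    rw [this]
    have h := Finset.measurable_sup' (Finset.nonempty_Icc.mpr (by omega : 1 ≤ m + 1))
      (f := fun k ω => ∑ i ∈ Finset.range k, X i ω)
      (fun k _ => Finset.measurable_sum _ fun i _ => hmeas i)
    convert h using 1
    ext ω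
    simp [Finset.sup'_apply]
  have hSF : ∀ ω ∈ F, Sbar (m + 1) ω = X 0 ω := by
    intro ω hω
    rw [hSbar (m + 1) (by omega)]
    apply le_antisymm
    · refine Finset.sup'_le _ _ fun k hk => ?_
      rw [Finset.mem_Icc] at hk
      obtain ⟨j, rfl⟩ : ∃ j, k = j + 1 := ⟨k - 1, by omega⟩
      rw [Finset.sum_range_succ']
      rcases Nat.eq_zero_or_pos j with rfl | hj
      · simp
      · have := hω j (Finset.mem_Icc.2 ⟨hj, by omega⟩)
        simp only at this
        linarith
    · have := Finset.le_sup' (s := Finset.Icc 1 (m + 1))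
        (f := fun k => ∑ i ∈ Finset.range k, X i ω) (b := 1) (by simp)
      simp only [Finset.sum_range_one] at this
      exact this
  have key : ∀ A : Set ℝ, MeasurableSet A →
      c * ∫⁻ x in A, ENNReal.ofReal (p x) ≤ ∫⁻ x in A, ENNReal.ofReal (pbar (m + 1) x) := by
    intro A hA
    rw [← withDensity_apply _ hA, ← withDensity_apply _ hA, ← hpdens, ← hpbar (m + 1) (by omega),
      Measure.map_apply (hmeas 0) hA, Measure.map_apply hSm hA, ← hF, mul_comm, ← hInd A hA]
    refine measure_mono ?_
    rintro ω ⟨h1, h2⟩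
    simp only [mem_preimage] at h1 ⊢
    rwa [hSF ω h2]
  have hae : ∀ᵐ x ∂(volume : Measure ℝ), c.toReal * p x ≤ pbar (m + 1) x := by
    have h : (fun x => c * ENNReal.ofReal (p x)) ≤ᵐ[volume]
        fun x => ENNReal.ofReal (pbar (m + 1) x) := by
      refine ae_le_of_forall_setLIntegral_le_of_sigmaFinite (by fun_prop) fun s hs _ => ?_
      rw [lintegral_const_mul _ (by fun_prop)]
      exact key s hs
    filter_upwards [h] with x hx
    rw [← ENNReal.ofReal_toReal hc_top, ← ENNReal.ofReal_mul ENNReal.toReal_nonneg] at hx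
    exact (ENNReal.ofReal_le_ofReal_iff (hpbar0 _ _)).1 hx
  refine ⟨fun x => max (pbar (m + 1) x - c.toReal * p x) 0, ?_, fun x => le_max_right _ _, ?_, ?_,
    ae_restrict_of_ae hae⟩
  · have := hpbarmeas (m + 1)
    fun_prop
  · have hm1 := hpbarmeas (m + 1)
    rw [integral_eq_lintegral_of_nonneg_ae
      (f := fun x => max (pbar (m + 1) x - c.toReal * p x) 0) (ae_of_all _ fun x => le_max_right _ _)
      (Measurable.aestronglyMeasurable (by fun_prop))]
    refine ENNReal.toReal_le_of_le_ofReal zero_le_one ?_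
    calc _ ≤ ∫⁻ x in Ioi (0 : ℝ), ENNReal.ofReal (pbar (m + 1) x) := by
          refine lintegral_mono fun x => ENNReal.ofReal_le_ofReal ?_
          have h1 : 0 ≤ c.toReal * p x := mul_nonneg ENNReal.toReal_nonneg (hp0 x)
          exact max_le (by linarith) (hpbar0 _ _)
      _ = ℙ (Sbar (m + 1) ⁻¹' Ioi 0) := by
          rw [← withDensity_apply _ measurableSet_Ioi, ← hpbar (m + 1) (by omega),
            Measure.map_apply hSm measurableSet_Ioi]
      _ ≤ ENNReal.ofReal 1 := by rw [ENNReal.ofReal_one]; exact prob_le_one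
  · refine ae_restrict_of_ae ?_
    filter_upwards [hae] with x hx
    rw [max_eq_left (by linarith)]
    ring
end
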